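/- arXiv:1302.0517 — 2 statements merged into one kernel-verified Lean document; each statement's English description precedes it below -/
import Mathlib

section
/- Let γ denote the Euler–Mascheroni constant and D = e^{1-γ/2}/√2. For every integer n ≥ 2, every positive integer N, and every n-linear form U : (ℝ^N)^n → ℝ, one has (∑_{i₁,…,iₙ=1}^N |U(e_{i₁},…,e_{iₙ})|^{2n/(n+1)})^{(n+1)/(2n)} ≤ √2 · (n-1)^{log₂ D} · ‖U‖. -/
open Real

/-- The Bohnenblust--Hille quantity of an `n`-linear form on `ℓ_∞^N` over `ℝ`:
`(∑_{i₁,…,iₙ} |U(e_{i₁},…,e_{iₙ})|^{2n/(n+1)})^{(n+1)/(2n)}`. -/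
noncomputable def BHreal (n N : ℕ)
    (U : ContinuousMultilinearMap ℝ (fun _ : Fin n => (Fin N → ℝ)) ℝ) : ℝ :=
  (∑ i : Fin n → Fin N,
      |U (fun k => Pi.single (i k) (1 : ℝ))| ^ ((2 * n : ℝ) / (n + 1)))
    ^ ((n + 1 : ℝ) / (2 * n))


def bhsg (b : Bool) : ℝ := if b then 1 else -1

lemma bhsg_not (b : Bool) : bhsg (!b) = - bhsg b := by cases b <;> simp [bhsg]

lemma bhsum_cons {N : ℕ} (F : (Fin (N+1) → Bool) → ℝ) :
    ∑ x, F x = ∑ x : Fin N → Bool, (F (Fin.cons true x) + F (Fin.cons false x)) := by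
  rw [← (Fin.consEquiv (fun _ : Fin (N+1) => Bool)).sum_comp]
  rw [Fintype.sum_prod_type]
  simp [Finset.sum_add_distrib, Fin.consEquiv]

def bhneg {N : ℕ} (x : Fin N → Bool) : Fin N → Bool := fun i => !(x i)

lemma bhneg_cons {N : ℕ} (b : Bool) (x : Fin N → Bool) :
    bhneg (Fin.cons b x : Fin (N+1) → Bool) = Fin.cons (!b) (bhneg x) := by
  funext i
  refine Fin.cases ?_ ?_ i <;> simp [bhneg]

lemma bhneg_invol {N : ℕ} : Function.Involutive (bhneg (N := N)) := by
  intro x; funext i; simp [bhneg]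

lemma bhsum_neg {N : ℕ} (F : (Fin N → Bool) → ℝ) : ∑ x, F (bhneg x) = ∑ x, F x :=
  Equiv.sum_comp (bhneg_invol (N := N)).toPerm F

def bhflip {N : ℕ} (i : Fin N) (x : Fin N → Bool) : Fin N → Bool := Function.update x i (!(x i))

lemma bhflip_zero {N : ℕ} (b : Bool) (x : Fin N → Bool) :
    bhflip 0 (Fin.cons b x : Fin (N+1) → Bool) = Fin.cons (!b) x := by
  simp [bhflip]

lemma bhflip_succ {N : ℕ} (b : Bool) (x : Fin N → Bool) (i : Fin N) :
    bhflip i.succ (Fin.cons b x : Fin (N+1) → Bool) = Fin.cons b (bhflip i x) := by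
  simp [bhflip, Fin.cons_update]

lemma bh_cs {N : ℕ} (h : (Fin N → Bool) → ℝ) :
    2 * (∑ x, h x)^2 ≤ 2^N * (∑ x, (h x)^2 + ∑ x, h x * h (bhneg x)) := by
  have h1 := sq_sum_le_card_mul_sum_sq (s := (Finset.univ : Finset (Fin N → Bool)))
    (f := fun x => h x + h (bhneg x))
  have h2 : ∑ x, (h x + h (bhneg x)) = 2 * ∑ x, h x := by
    rw [Finset.sum_add_distrib, bhsum_neg]; ring
  have h3 : ∑ x, (h x + h (bhneg x))^2 = 2 * (∑ x, (h x)^2 + ∑ x, h x * h (bhneg x)) := by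
    have : ∀ x, (h x + h (bhneg x))^2 = (h x)^2 + 2 * (h x * h (bhneg x)) + (h (bhneg x))^2 := by
      intro x; ring
    simp_rw [this]
    rw [Finset.sum_add_distrib, Finset.sum_add_distrib, bhsum_neg (fun x => (h x)^2),
      ← Finset.mul_sum]; ring
  rw [h2, h3] at h1
  simp at h1
  nlinarith

lemma bh_poincare : ∀ (N : ℕ) (f : (Fin N → Bool) → ℝ),
    2^N * (3 * ∑ x, (f x)^2 + ∑ x, f x * f (bhneg x) + ∑ x, ∑ i, f x * f (bhflip i x))
      ≤ 2^N * (N * ∑ x, (f x)^2) + 4 * (∑ x, f x)^2 := by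
  intro N
  induction N with
  | zero =>
    intro f
    have : ∀ x : Fin 0 → Bool, bhneg x = x := fun x => Subsingleton.elim _ _
    simp [this]
    have : bhneg (default : Fin 0 → Bool) = default := Subsingleton.elim _ _
    nlinarith [sq_nonneg (f default)]
  | succ N ih =>
    intro f
    set g : (Fin N → Bool) → ℝ := fun x => (f (Fin.cons true x) + f (Fin.cons false x)) / 2 with hg
    set h : (Fin N → Bool) → ℝ := fun x => (f (Fin.cons true x) - f (Fin.cons false x)) / 2 with hh
    have ft : ∀ x, f (Fin.cons true x) = g x + h x := by intro x; simp only [hg, hh]; ring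
    have ff : ∀ x, f (Fin.cons false x) = g x - h x := by intro x; simp only [hg, hh]; ring
    have eA : ∑ x, (f x)^2 = 2 * ∑ x, (g x)^2 + 2 * ∑ x, (h x)^2 := by
      rw [bhsum_cons, Finset.mul_sum, Finset.mul_sum, ← Finset.sum_add_distrib]
      refine Finset.sum_congr rfl fun x _ => ?_
      rw [ft, ff]; ring
    have eM : ∑ x, f x = 2 * ∑ x, g x := by
      rw [bhsum_cons, Finset.mul_sum]
      refine Finset.sum_congr rfl fun x _ => ?_
      rw [ft, ff]; ring
    have eC : ∑ x, f x * f (bhneg x) = 2 * ∑ x, g x * g (bhneg x) - 2 * ∑ x, h x * h (bhneg x) := by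
      rw [bhsum_cons, Finset.mul_sum, Finset.mul_sum, ← Finset.sum_sub_distrib]
      refine Finset.sum_congr rfl fun x _ => ?_
      rw [bhneg_cons, bhneg_cons, Bool.not_true, Bool.not_false, ft, ff, ft, ff]; ring
    have eB : ∑ x, ∑ i, f x * f (bhflip i x) = 2 * ∑ x, (g x)^2 - 2 * ∑ x, (h x)^2
        + 2 * ∑ x, ∑ i, g x * g (bhflip i x) + 2 * ∑ x, ∑ i, h x * h (bhflip i x) := by
      rw [bhsum_cons, Finset.mul_sum, Finset.mul_sum, Finset.mul_sum, Finset.mul_sum,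
        ← Finset.sum_sub_distrib, ← Finset.sum_add_distrib, ← Finset.sum_add_distrib]
      refine Finset.sum_congr rfl fun x _ => ?_
      rw [Fin.sum_univ_succ, Fin.sum_univ_succ]
      simp_rw [bhflip_succ, bhflip_zero]
      rw [Bool.not_true, Bool.not_false]
      simp_rw [ft, ff]
      have : ∑ i, (g x + h x) * (g (bhflip i x) + h (bhflip i x))
          + ∑ i, (g x - h x) * (g (bhflip i x) - h (bhflip i x))
          = 2 * ∑ i, g x * g (bhflip i x) + 2 * ∑ i, h x * h (bhflip i x) := by
        rw [Finset.mul_sum, Finset.mul_sum, ← Finset.sum_add_distrib, ← Finset.sum_add_distrib]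
        refine Finset.sum_congr rfl fun i _ => ?_
        ring
      linarith
    rw [eA, eM, eC, eB]
    have i1 := ih g
    have i2 := ih h
    have i3 := bh_cs h
    push_cast
    rw [pow_succ]
    linarith

lemma bhS_flip {N : ℕ} (a : Fin N → ℝ) (x : Fin N → Bool) (i : Fin N) :
    ∑ k, a k * bhsg (bhflip i x k) = ∑ k, a k * bhsg (x k) - 2 * (a i * bhsg (x i)) := by
  have : ∀ k, a k * bhsg (bhflip i x k) = a k * bhsg (x k) -
      if k = i then 2 * (a i * bhsg (x i)) else 0 := by
    intro k
    by_cases h : k = i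
    · subst h; simp [bhflip, bhsg_not]; ring
    · simp [bhflip, h]
  simp_rw [this]
  rw [Finset.sum_sub_distrib]; simp

lemma bhS_sq : ∀ (N : ℕ) (a : Fin N → ℝ),
    ∑ x : Fin N → Bool, (∑ k, a k * bhsg (x k))^2 = 2^N * ∑ k, (a k)^2 := by
  intro N
  induction N with
  | zero => intro a; simp
  | succ N ih =>
    intro a
    rw [bhsum_cons]
    simp only [Fin.sum_univ_succ, Fin.cons_zero, Fin.cons_succ]
    have := ih (fun k => a k.succ)
    have h2 : ∀ x : Fin N → Bool, (a 0 * bhsg true + ∑ k : Fin N, a k.succ * bhsg (x k))^2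
        + (a 0 * bhsg false + ∑ k : Fin N, a k.succ * bhsg (x k))^2
        = 2 * (∑ k : Fin N, a k.succ * bhsg (x k))^2 + 2 * (a 0)^2 := by
      intro x; simp [bhsg]; ring
    simp_rw [h2]
    rw [Finset.sum_add_distrib, ← Finset.mul_sum, this]
    simp; ring

lemma bhS_four : ∀ (N : ℕ) (a : Fin N → ℝ),
    ∑ x : Fin N → Bool, (∑ k, a k * bhsg (x k))^4 ≤ 2^N * (3 * (∑ k, (a k)^2)^2) := by
  intro N
  induction N with
  | zero => intro a; simp
  | succ N ih =>
    intro a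
    rw [bhsum_cons]
    simp only [Fin.sum_univ_succ, Fin.cons_zero, Fin.cons_succ]
    have i1 := ih (fun k => a k.succ)
    have i2 := bhS_sq N (fun k => a k.succ)
    have h2 : ∀ x : Fin N → Bool, (a 0 * bhsg true + ∑ k : Fin N, a k.succ * bhsg (x k))^4
        + (a 0 * bhsg false + ∑ k : Fin N, a k.succ * bhsg (x k))^4
        = 2 * (∑ k : Fin N, a k.succ * bhsg (x k))^4 + 12 * (a 0)^2 *
          (∑ k : Fin N, a k.succ * bhsg (x k))^2 + 2 * (a 0)^4 := by
      intro x; simp [bhsg]; ring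
    simp_rw [h2]
    rw [Finset.sum_add_distrib, Finset.sum_add_distrib, ← Finset.mul_sum, ← Finset.mul_sum, i2]
    simp
    rw [pow_succ 2 N]
    have : (0:ℝ) ≤ 2^N * (a 0)^4 := by positivity
    nlinarith

lemma bhS_one (N : ℕ) (a : Fin N → ℝ) :
    2^N * √(∑ k, (a k)^2) ≤ √2 * ∑ x : Fin N → Bool, |∑ k, a k * bhsg (x k)| := by
  have hp := bh_poincare N (fun x => |∑ k, a k * bhsg (x k)|)
  have hneg : ∀ x : Fin N → Bool, |∑ k, a k * bhsg (bhneg x k)| = |∑ k, a k * bhsg (x k)| := by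
    intro x
    simp [bhneg, bhsg_not]
  simp only [hneg, sq_abs, ← sq, bhS_sq] at hp
  have hB : ∑ x : Fin N → Bool, ((N:ℝ) - 2) * (∑ k, a k * bhsg (x k))^2 ≤
      ∑ x : Fin N → Bool, ∑ i, |∑ k, a k * bhsg (x k)| * |∑ k, a k * bhsg (bhflip i x k)| := by
    refine Finset.sum_le_sum fun x _ => ?_
    rw [← Finset.mul_sum]
    have h1 : |∑ i, ∑ k, a k * bhsg (bhflip i x k)| ≤ ∑ i, |∑ k, a k * bhsg (bhflip i x k)| :=
      Finset.abs_sum_le_sum_abs _ _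
    have h2 : ∑ i, ∑ k, a k * bhsg (bhflip i x k) = ((N:ℝ) - 2) * ∑ k, a k * bhsg (x k) := by
      simp_rw [bhS_flip]
      rw [Finset.sum_sub_distrib, ← Finset.mul_sum]; simp; ring
    rw [h2, abs_mul] at h1
    have h3 : ((N:ℝ)-2) * |∑ k, a k * bhsg (x k)| ≤ ∑ i, |∑ k, a k * bhsg (bhflip i x k)| :=
      le_trans (mul_le_mul_of_nonneg_right (le_abs_self _) (abs_nonneg _)) h1
    have h4 := mul_le_mul_of_nonneg_left h3 (abs_nonneg (∑ k, a k * bhsg (x k)))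
    have h5 := abs_mul_abs_self (∑ k, a k * bhsg (x k))
    nlinarith
  rw [← Finset.mul_sum, bhS_sq] at hB
  have hM : (0:ℝ) ≤ ∑ x : Fin N → Bool, |∑ k, a k * bhsg (x k)| :=
    Finset.sum_nonneg fun _ _ => abs_nonneg _
  have h2N : (0:ℝ) < 2^N := by positivity
  have key : (2^N)^2 * ∑ k, (a k)^2 ≤ 2 * (∑ x : Fin N → Bool, |∑ k, a k * bhsg (x k)|)^2 := by
    have := mul_le_mul_of_nonneg_left hB h2N.le
    nlinarith
  have := Real.sqrt_le_sqrt key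
  rwa [Real.sqrt_mul (by positivity), Real.sqrt_mul (by positivity), Real.sqrt_sq (by positivity),
    Real.sqrt_sq hM] at this

lemma bh_logt (y k c : ℝ) (hy : 0 < y) (hc : Real.exp (-k) ≤ c) :
    Real.log y ≤ k + y * c - 1 := by
  have hc0 : 0 < c := lt_of_lt_of_le (Real.exp_pos _) hc
  have h1 := Real.log_le_sub_one_of_pos (mul_pos hy hc0)
  rw [Real.log_mul hy.ne' hc0.ne'] at h1
  have h2 : -k ≤ Real.log c := by
    rw [Real.le_log_iff_exp_le hc0]; exact hc
  linarith

lemma bh_e1 : Real.exp (-(-3/2)) ≤ 4.4823 := by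
  have h := Real.exp_one_lt_d9
  have h0 := Real.exp_pos 1
  have : (Real.exp (-(-3/2)))^2 = (Real.exp 1)^3 := by
    rw [← Real.exp_nat_mul, ← Real.exp_nat_mul]; norm_num
  have h3 : (Real.exp 1)^3 ≤ 2.7182818286^3 := by gcongr
  refine (pow_le_pow_iff_left₀ (Real.exp_pos _).le (by norm_num) two_ne_zero).1 ?_
  rw [this]
  exact h3.trans (by norm_num)

lemma bh_e2 : Real.exp (-(-1/2)) ≤ 1.6489 := by
  have h := Real.exp_one_lt_d9
  have : (Real.exp (-(-1/2)))^2 = (Real.exp 1) := by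
    rw [← Real.exp_nat_mul]; norm_num
  refine (pow_le_pow_iff_left₀ (Real.exp_pos _).le (by norm_num) two_ne_zero).1 ?_
  rw [this]
  exact h.le.trans (by norm_num)

lemma bh_e4 : Real.exp (-1) ≤ 0.36792 := by
  have h := Real.exp_one_gt_d9
  rw [Real.exp_neg]
  rw [inv_le_comm₀ (Real.exp_pos _) (by norm_num)]
  refine le_trans ?_ h.le
  norm_num

lemma bh_e3 : Real.exp (-(1/2)) ≤ 0.60657 := by
  have : (Real.exp (-(1/2)))^2 = (Real.exp (-1)) := by
    rw [← Real.exp_nat_mul]; norm_num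
  refine (pow_le_pow_iff_left₀ (Real.exp_pos _).le (by norm_num) two_ne_zero).1 ?_
  rw [this]
  exact bh_e4.trans (by norm_num)

lemma bh_bern (y l u : ℝ) (h1 : l ≤ y) (h2 : y ≤ u) :
    0 ≤ (y-l)^4 ∧ 0 ≤ (y-l)^3*(u-y) ∧ 0 ≤ (y-l)^2*(u-y)^2 ∧ 0 ≤ (y-l)*(u-y)^3 ∧ 0 ≤ (u-y)^4 := by
  have a := sub_nonneg.2 h1
  have b := sub_nonneg.2 h2
  refine ⟨?_, ?_, ?_, ?_, ?_⟩ <;> positivity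

lemma bh_log (y : ℝ) (hy : 0 ≤ y) :
    2 * y^2 * Real.log y ≤ 0.195 * y^4 + 1.39 * y^2 + 0.14 - 1.525 * y := by
  rcases hy.eq_or_lt with rfl | hy
  · norm_num
  have key : ∀ k c : ℝ, Real.exp (-k) ≤ c → 2 * y^2 * Real.log y ≤ 2 * y^2 * (k + y * c - 1) := by
    intro k c h
    exact mul_le_mul_of_nonneg_left (bh_logt y k c hy h) (by positivity)
  rcases le_total y 0.35 with h1 | h1
  · refine (key _ _ bh_e1).trans ?_
    obtain ⟨q1, q2, q3, q4, q5⟩ := bh_bern y 0 0.35 hy.le h1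
    nlinarith
  rcases le_total y 0.92 with h2 | h2
  · refine (key _ _ bh_e2).trans ?_
    obtain ⟨q1, q2, q3, q4, q5⟩ := bh_bern y 0.35 0.92 h1 h2
    nlinarith
  rcases le_total y 1.325 with h3 | h3
  · refine (key 0 1 (by simp)).trans ?_
    obtain ⟨q1, q2, q3, q4, q5⟩ := bh_bern y 0.92 1.325 h2 h3
    nlinarith
  rcases le_total y 2.18 with h4 | h4
  · refine (key _ _ bh_e3).trans ?_
    obtain ⟨q1, q2, q3, q4, q5⟩ := bh_bern y 1.325 2.18 h3 h4
    nlinarith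
  · refine (key _ _ bh_e4).trans ?_
    obtain ⟨t, rfl⟩ : ∃ t, y = t + 2.18 := ⟨y - 2.18, by ring⟩
    have ht : 0 ≤ t := by linarith
    have := pow_nonneg ht 2
    have := pow_nonneg ht 3
    have := pow_nonneg ht 4
    nlinarith

lemma bh_ptw (y p : ℝ) (hy : 0 ≤ y) (hp1 : 1 ≤ p) (hp2 : p ≤ 2) :
    (1 + 1.04 * (2-p)/2) * y^2 - (2-p)/2 * (0.195 * y^4 + 1.39 * y^2 + 0.14 - 1.525 * y)
      ≤ Real.exp (1.04 * (2-p)/2) * y^p := by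
  have hl := mul_le_mul_of_nonneg_left (bh_log y hy) (by linarith : 0 ≤ (2-p)/2)
  refine le_trans (b := y^2 * (1 + 1.04 * (2-p)/2 - (2-p) * Real.log y)) (by linarith) ?_
  rcases hy.eq_or_lt with rfl | hy
  · rw [Real.zero_rpow (by linarith)]; simp
  have h1 : y^p = y^2 * Real.exp (-(2-p) * Real.log y) := by
    rw [Real.rpow_def_of_pos hy, ← Real.rpow_natCast y 2, Real.rpow_def_of_pos hy, ← Real.exp_add]
    congr 1; push_cast; ring
  have h2 := Real.add_one_le_exp (1.04 * (2-p)/2 - (2-p) * Real.log y)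
  have h3 : Real.exp (1.04 * (2-p)/2) * y^p =
      y^2 * Real.exp (1.04 * (2-p)/2 - (2-p) * Real.log y) := by
    rw [h1, mul_left_comm, ← Real.exp_add]; congr 2; ring
  rw [h3]
  refine mul_le_mul_of_nonneg_left ?_ (by positivity)
  linarith

lemma bh_khin (N : ℕ) (a : Fin N → ℝ) (p : ℝ) (hp1 : 1 ≤ p) (hp2 : p ≤ 2) :
    2^N * (∑ k, (a k)^2)^(p/2) ≤
      Real.exp (1.04 * (2-p)/2) * ∑ x : Fin N → Bool, |∑ k, a k * bhsg (x k)|^p := by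
  have hs : 0 ≤ ∑ k, (a k)^2 := Finset.sum_nonneg fun _ _ => sq_nonneg _
  rcases hs.eq_or_lt with h0 | h0
  · rw [← h0, Real.zero_rpow (by linarith)]
    simp only [mul_zero]
    exact mul_nonneg (Real.exp_pos _).le
      (Finset.sum_nonneg fun _ _ => Real.rpow_nonneg (abs_nonneg _) _)
  set σ := √(∑ k, (a k)^2) with hσ
  have hσ0 : 0 < σ := Real.sqrt_pos.2 h0
  have hσ2 : σ^2 = ∑ k, (a k)^2 := Real.sq_sqrt hs
  have hσp : (∑ k, (a k)^2)^(p/2) = σ^p := by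
    rw [← hσ2, ← Real.rpow_natCast σ 2, ← Real.rpow_mul hσ0.le]; congr 1; push_cast; ring
  set S : (Fin N → Bool) → ℝ := fun x => |∑ k, a k * bhsg (x k)| with hS
  have hS0 : ∀ x, 0 ≤ S x := fun x => abs_nonneg _
  have m1 : 2^N * σ ≤ √2 * ∑ x, S x := bhS_one N a
  have m2 : ∑ x, (S x)^2 = 2^N * σ^2 := by simp only [hS, sq_abs]; rw [bhS_sq, hσ2]
  have m4 : ∑ x, (S x)^4 ≤ 2^N * (3 * σ^4) := by
    have := bhS_four N a
    simp only [hS]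
    have e : ∀ z : ℝ, |z|^4 = z^4 := fun z => Even.pow_abs (by decide) z
    simp only [e]
    rw [← hσ2] at this
    calc _ ≤ _ := this
      _ = _ := by ring
  have hsum := Finset.sum_le_sum (s := Finset.univ)
    fun x (_ : x ∈ Finset.univ) => bh_ptw (S x / σ) p (div_nonneg (hS0 x) hσ0.le) hp1 hp2
  rw [Finset.sum_sub_distrib, ← Finset.mul_sum, ← Finset.mul_sum, ← Finset.mul_sum,
    Finset.sum_sub_distrib, Finset.sum_add_distrib, Finset.sum_add_distrib, ← Finset.mul_sum,
    ← Finset.mul_sum, ← Finset.mul_sum] at hsum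
  simp only [div_pow, ← Finset.sum_div] at hsum
  have e2 : (∑ x, (S x)^2) / σ^2 = 2^N := by rw [m2]; field_simp
  have e4 : (∑ x, (S x)^4) / σ^4 ≤ 3 * 2^N := by
    rw [div_le_iff₀ (by positivity)]; linarith
  have e1 : 0.7071 * 2^N ≤ (∑ x, S x) / σ := by
    rw [le_div_iff₀ hσ0]
    have hq : √2 ≤ 1.41422 := by rw [Real.sqrt_le_left (by norm_num)]; norm_num
    have : √2 * ∑ x, S x ≤ 1.41422 * ∑ x, S x :=
      mul_le_mul_of_nonneg_right hq (Finset.sum_nonneg fun x _ => hS0 x)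
    have : (0:ℝ) ≤ 2^N * σ := by positivity
    linarith
  have ep : ∑ x, (S x / σ)^p = (∑ x, (S x)^p) / σ^p := by
    rw [Finset.sum_div]
    exact Finset.sum_congr rfl fun x _ => Real.div_rpow (hS0 x) hσ0.le p
  rw [ep, e2] at hsum
  have e0 : ∑ x : Fin N → Bool, (0.14:ℝ) = 0.14 * 2^N := by simp; ring
  rw [e0] at hsum
  rw [hσp]
  have h2N : (0:ℝ) < 2^N := by positivity
  have hfin : (2:ℝ)^N ≤ Real.exp (1.04 * (2-p)/2) * ((∑ x, (S x)^p) / σ^p) := by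
    refine le_trans ?_ hsum
    have hb : 0.195 * ((∑ x, (S x)^4) / σ^4) + 1.39 * 2^N + 0.14 * 2^N - 1.525 * ((∑ x, S x)/σ)
        ≤ 1.04 * 2^N := by linarith
    have := mul_le_mul_of_nonneg_left hb (by linarith : 0 ≤ (2-p)/2)
    linarith
  rw [← mul_div_assoc, le_div_iff₀ (by positivity)] at hfin
  exact hfin

lemma bh_holder {ι κ : Type*} [Fintype ι] [Fintype κ] (f : κ → ι → ℝ) (w : κ → ℝ)
    (hf : ∀ k i, 0 ≤ f k i) (hw : ∀ k, 0 ≤ w k) (hw1 : ∑ k, w k = 1) :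
    ∑ i, ∏ k, (f k i)^(w k) ≤ ∏ k, (∑ i, f k i)^(w k) := by
  have hF : ∀ k, 0 ≤ ∑ i, f k i := fun k => Finset.sum_nonneg fun i _ => hf k i
  by_cases hz : ∃ k, ∑ i, f k i = 0 ∧ w k ≠ 0
  · obtain ⟨k, hk, hwk⟩ := hz
    have h0 : ∀ i, f k i = 0 := by
      intro i
      exact (Finset.sum_eq_zero_iff_of_nonneg (fun i _ => hf k i)).1 hk i (Finset.mem_univ i)
    have : ∑ i, ∏ k, (f k i)^(w k) = 0 := by
      refine Finset.sum_eq_zero fun i _ => ?_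
      refine Finset.prod_eq_zero (Finset.mem_univ k) ?_
      rw [h0 i, Real.zero_rpow hwk]
    rw [this]
    exact Finset.prod_nonneg fun k _ => Real.rpow_nonneg (hF k) _
  push Not at hz
  set G : κ → ℝ := fun k => if ∑ i, f k i = 0 then 1 else ∑ i, f k i with hG
  have hGpos : ∀ k, 0 < G k := by
    intro k
    simp only [hG]
    split_ifs with h
    · exact one_pos
    · exact lt_of_le_of_ne (hF k) (Ne.symm h)
  have hGw : ∀ k, (∑ i, f k i)^(w k) = (G k)^(w k) := by
    intro k
    simp only [hG]
    split_ifs with h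
    · rw [hz k h]; simp
    · rfl
  have hG1 : ∀ k, (∑ i, f k i / G k) ≤ 1 := by
    intro k
    rw [← Finset.sum_div]
    rw [div_le_one (hGpos k)]
    simp only [hG]
    split_ifs with h
    · rw [h]; exact zero_le_one
    · exact le_rfl
  have h1 : ∀ i, ∏ k, (f k i / G k)^(w k) ≤ ∑ k, w k * (f k i / G k) := fun i =>
    Real.geom_mean_le_arith_mean_weighted Finset.univ w (fun k => f k i / G k)
      (fun k _ => hw k) hw1 (fun k _ => div_nonneg (hf k i) (hGpos k).le)
  have h2 : ∑ i, ∏ k, (f k i / G k)^(w k) ≤ 1 := by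
    refine (Finset.sum_le_sum fun i _ => h1 i).trans ?_
    rw [Finset.sum_comm]
    simp_rw [← Finset.mul_sum]
    calc _ ≤ ∑ k, w k * 1 :=
          Finset.sum_le_sum fun k _ => mul_le_mul_of_nonneg_left (hG1 k) (hw k)
      _ = 1 := by simp [hw1]
  have h3 : ∀ i, ∏ k, (f k i / G k)^(w k) = (∏ k, (f k i)^(w k)) / ∏ k, (G k)^(w k) := by
    intro i
    rw [← Finset.prod_div_distrib]
    exact Finset.prod_congr rfl fun k _ => Real.div_rpow (hf k i) (hGpos k).le _
  simp_rw [h3] at h2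
  rw [← Finset.sum_div, div_le_one (Finset.prod_pos fun k _ => Real.rpow_pos_of_pos (hGpos k) _)] at h2
  simp_rw [hGw]
  exact h2

lemma bh_mink {ι κ : Type*} [Fintype ι] [Fintype κ] (f : ι → κ → ℝ) (hf : ∀ i j, 0 ≤ f i j)
    (r : ℝ) (hr : 1 ≤ r) :
    (∑ i, (∑ j, f i j)^r)^(1/r) ≤ ∑ j, (∑ i, (f i j)^r)^(1/r) := by
  classical
  have : ∀ s : Finset κ, (∑ i, (∑ j ∈ s, f i j)^r)^(1/r) ≤ ∑ j ∈ s, (∑ i, (f i j)^r)^(1/r) := by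
    intro s
    induction s using Finset.induction_on with
    | empty =>
      have : r ≠ 0 := by linarith
      simp [Real.zero_rpow this, this]
    | insert j s hj ih =>
      simp_rw [Finset.sum_insert hj]
      refine (Real.Lp_add_le_of_nonneg Finset.univ hr (fun i _ => hf i j)
        (fun i _ => Finset.sum_nonneg fun j _ => hf i j)).trans ?_
      linarith
  exact this Finset.univ

lemma bhsum_consι {ι : Type*} [Fintype ι] {m : ℕ} (F : (Fin (m+1) → ι) → ℝ) :
    ∑ x, F x = ∑ i : ι, ∑ x : Fin m → ι, F (Fin.cons i x) := by
  rw [← (Fin.consEquiv (fun _ : Fin (m+1) => ι)).sum_comp]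
  rw [Fintype.sum_prod_type]
  rfl

noncomputable def bhT {ι : Type*} [Fintype ι] (r : ℝ) : (m : ℕ) → ((Fin m → ι) → ℝ) → Fin m → ℝ
  | 0, _ => fun _ => 0
  | m + 1, f => Fin.cons (∑ j : Fin m → ι, (∑ i : ι, (f (Fin.cons i j))^r)^(1/r))
      (fun k => ∑ i : ι, bhT r m (fun j => f (Fin.cons i j)) k)

lemma bhT_nonneg {ι : Type*} [Fintype ι] (r : ℝ) : ∀ (m : ℕ) (f : (Fin m → ι) → ℝ)
    (_ : ∀ i, 0 ≤ f i) (k : Fin m), 0 ≤ bhT r m f k := by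
  intro m
  induction m with
  | zero => intro f hf k; exact k.elim0
  | succ m ih =>
    intro f hf k
    refine Fin.cases ?_ ?_ k
    · simp only [bhT, Fin.cons_zero]
      exact Finset.sum_nonneg fun j _ => Real.rpow_nonneg
        (Finset.sum_nonneg fun i _ => Real.rpow_nonneg (hf _) _) _
    · intro k
      simp only [bhT, Fin.cons_succ]
      exact Finset.sum_nonneg fun i _ => ih _ (fun j => hf _) k

lemma bhT_eq {ι : Type*} [Fintype ι] (r : ℝ) : ∀ (m : ℕ) (f : (Fin (m+1) → ι) → ℝ) (k : Fin (m+1)),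
    bhT r (m+1) f k = ∑ j : Fin m → ι, (∑ i : ι, (f (k.insertNth i j))^r)^(1/r) := by
  intro m
  induction m with
  | zero =>
    intro f k
    obtain rfl : k = 0 := Fin.fin_one_eq_zero k
    simp only [bhT, Fin.cons_zero, Fin.insertNth_zero']
  | succ m ih =>
    intro f k
    refine Fin.cases ?_ ?_ k
    · rw [bhT]
      simp only [Fin.cons_zero, Fin.insertNth_zero']
    · intro k
      rw [bhT]
      simp only [Fin.cons_succ]
      rw [bhsum_consι]
      refine Finset.sum_congr rfl fun t _ => ?_
      rw [ih]
      simp only [Fin.insertNth_succ_cons]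

lemma bh_blei {ι : Type*} [Fintype ι] (r s M : ℝ) (hr : 1 ≤ r) (hs : 0 < s) (hM : 0 < M)
    (hrs : s * (1/r + M - 1) = M) : ∀ (m : ℕ) (_ : (m:ℝ) ≤ M) (f : (Fin m → ι) → ℝ)
    (_ : ∀ i, 0 ≤ f i),
    ∑ i, (f i)^s ≤ (∑ i, f i)^(s*(M-m)/M) * ∏ k, (bhT r m f k)^(s/M) := by
  intro m
  induction m with
  | zero =>
    intro _ f hf
    have : s * M / M = s := by field_simp
    simp [this]
  | succ m ih =>
    intro hm f hf
    push_cast at hm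
    have hr0 : 0 < r := by linarith
    rw [bhsum_consι]
    have h1 := fun i : ι => ih (by linarith) (fun j => f (Fin.cons i j)) (fun j => hf _)
    refine (Finset.sum_le_sum fun i _ => h1 i).trans ?_
    set A : ι → ℝ := fun i => ∑ j : Fin m → ι, f (Fin.cons i j) with hA
    have hA0 : ∀ i, 0 ≤ A i := fun i => Finset.sum_nonneg fun j _ => hf _
    let W : Option (Option (Fin m)) → ℝ := fun o =>
      o.elim (s/M/r) (fun o => o.elim (s*(M-m-1)/M) (fun _ => s/M))
    let F : Option (Option (Fin m)) → ι → ℝ := fun o =>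
      o.elim (fun i => (A i)^r) (fun o => o.elim A
        (fun k => fun i => bhT r m (fun j => f (Fin.cons i j)) k))
    have hol := bh_holder F W ?_ ?_ ?_
    · simp only [Fintype.prod_option, F, W, Option.elim_none, Option.elim_some] at hol
      have e1 : ∀ i, (A i)^(s*(M-m)/M) = ((A i)^r)^(s/M/r) * (A i)^(s*(M-m-1)/M) := by
        intro i
        rw [← Real.rpow_mul (hA0 i), ← Real.rpow_add_of_nonneg (hA0 i)]
        · congr 1; field_simp; ring
        · positivity
        · refine div_nonneg (mul_nonneg hs.le (by linarith)) hM.le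
      have e2 : ∑ i, (A i)^(s*(M-m)/M) * ∏ k, (bhT r m (fun j => f (Fin.cons i j)) k)^(s/M)
          = ∑ i, ((A i)^r)^(s/M/r) * ((A i)^(s*(M-m-1)/M) *
            ∏ k, (bhT r m (fun j => f (Fin.cons i j)) k)^(s/M)) := by
        refine Finset.sum_congr rfl fun i _ => ?_
        rw [e1, mul_assoc]
      rw [e2]
      refine hol.trans ?_
      rw [Fin.prod_univ_succ]
      simp only [bhT, Fin.cons_zero, Fin.cons_succ]
      rw [bhsum_consι]
      have hmk := bh_mink (fun (i:ι) (j : Fin m → ι) => f (Fin.cons i j)) (fun i j => hf _) r hr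
      have h0 : 0 ≤ ∑ i, (A i)^r := Finset.sum_nonneg fun i _ => Real.rpow_nonneg (hA0 i) _
      have e3 : (∑ i, (A i)^r)^(s/M/r) = ((∑ i, (A i)^r)^(1/r))^(s/M) := by
        rw [← Real.rpow_mul h0]; congr 1; field_simp
      have e4 : (∑ i, (A i)^r)^(s/M/r) ≤
          (∑ j : Fin m → ι, (∑ i : ι, (f (Fin.cons i j))^r)^(1/r))^(s/M) := by
        rw [e3]
        exact Real.rpow_le_rpow (Real.rpow_nonneg h0 _) hmk (by positivity)
      have e5 : s * (M - ((m+1 : ℕ) : ℝ))/M = s*(M-m-1)/M := by push_cast; ring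
      rw [e5]
      have hP : 0 ≤ (∑ i, A i)^(s*(M-m-1)/M) *
          ∏ k, (∑ i, bhT r m (fun j => f (Fin.cons i j)) k)^(s/M) := by
        refine mul_nonneg (Real.rpow_nonneg (Finset.sum_nonneg fun i _ => hA0 i) _) ?_
        exact Finset.prod_nonneg fun k _ => Real.rpow_nonneg (Finset.sum_nonneg fun i _ =>
          bhT_nonneg r m _ (fun j => hf _) k) _
      have := mul_le_mul_of_nonneg_right e4 hP
      refine this.trans (le_of_eq ?_)
      simp only [hA]
      ring
    · rintro (_ | _ | k) i
      · exact Real.rpow_nonneg (hA0 i) _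
      · exact hA0 i
      · exact bhT_nonneg r m _ (fun j => hf _) k
    · rintro (_ | _ | k)
      · show 0 ≤ s/M/r
        positivity
      · exact div_nonneg (mul_nonneg hs.le (by linarith)) hM.le
      · show 0 ≤ s/M
        positivity
    · simp only [Fintype.sum_option, W, Option.elim_none, Option.elim_some]
      simp
      field_simp
      field_simp at hrs
      linarith

lemma bh_single_insert {n N : ℕ} (k : Fin (n+1)) (i : Fin N) (j : Fin n → Fin N) :
    (fun l => Pi.single ((k.insertNth i j : Fin (n+1) → Fin N) l) (1:ℝ) : Fin (n+1) → (Fin N → ℝ))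
      = k.insertNth (Pi.single i (1:ℝ) : Fin N → ℝ) (fun l => Pi.single (j l) (1:ℝ)) := by
  rw [Fin.eq_insertNth_iff]
  constructor
  · simp
  · funext l
    simp [Fin.removeNth]

lemma bh_expand {n N : ℕ} (U : ContinuousMultilinearMap ℝ (fun _ : Fin (n+1) => (Fin N → ℝ)) ℝ)
    (k : Fin (n+1)) (ε : Fin N → ℝ) (v : Fin n → (Fin N → ℝ)) :
    U.curryMid k ε v = ∑ i, U (k.insertNth (Pi.single i (1:ℝ) : Fin N → ℝ) v) * ε i := by
  have h : ε = ∑ i, ε i • (Pi.single i (1:ℝ) : Fin N → ℝ) := by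
    have h1 := (Finset.univ_sum_single ε).symm
    have h2 : ∀ i, (Pi.single i (ε i) : Fin N → ℝ) = ε i • (Pi.single i (1:ℝ) : Fin N → ℝ) := by
      intro i
      rw [← Pi.single_smul]; simp
    simp_rw [h2] at h1
    exact h1
  conv_lhs => rw [h]
  rw [map_sum, ContinuousMultilinearMap.sum_apply]
  refine Finset.sum_congr rfl fun i _ => ?_
  rw [map_smul, ContinuousMultilinearMap.smul_apply, ContinuousMultilinearMap.curryMid_apply,
    smul_eq_mul, mul_comm]

lemma bh_step (n N : ℕ) (hn : 1 ≤ n) (C K : ℝ) (hC : 0 ≤ C) (hK : 0 ≤ K)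
    (hkh : ∀ a : Fin N → ℝ, 2^N * (∑ k, (a k)^2)^(((2 * n : ℝ) / (n + 1))/2) ≤
      K^((2 * n : ℝ) / (n + 1)) *
        ∑ x : Fin N → Bool, |∑ k, a k * bhsg (x k)|^((2 * n : ℝ) / (n + 1)))
    (ih : ∀ V : ContinuousMultilinearMap ℝ (fun _ : Fin n => (Fin N → ℝ)) ℝ,
      ∑ i : Fin n → Fin N, |V (fun k => Pi.single (i k) (1 : ℝ))| ^ ((2 * n : ℝ) / (n + 1))
        ≤ (C * ‖V‖)^((2 * n : ℝ) / (n + 1)))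
    (U : ContinuousMultilinearMap ℝ (fun _ : Fin (n+1) => (Fin N → ℝ)) ℝ) :
    ∑ i : Fin (n+1) → Fin N, |U (fun k => Pi.single (i k) (1 : ℝ))| ^
        ((2 * ((n+1 : ℕ) : ℝ) : ℝ) / (((n+1 : ℕ) : ℝ) + 1))
      ≤ (K * C * ‖U‖)^((2 * ((n+1 : ℕ) : ℝ) : ℝ) / (((n+1 : ℕ) : ℝ) + 1)) := by
  have hn0 : (0:ℝ) < n := by exact_mod_cast hn
  set p : ℝ := (2 * n : ℝ) / (n + 1) with hp
  set q : ℝ := (2 * ((n+1 : ℕ) : ℝ) : ℝ) / (((n+1 : ℕ) : ℝ) + 1) with hq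
  have hp0 : 0 < p := by positivity
  have hq0 : 0 < q := by positivity
  have hU : 0 ≤ ‖U‖ := norm_nonneg U
  set f : (Fin (n+1) → Fin N) → ℝ := fun i => |U (fun k => Pi.single (i k) (1 : ℝ))|^p with hf
  have hf0 : ∀ i, 0 ≤ f i := fun i => Real.rpow_nonneg (abs_nonneg _) _
  have hT : ∀ k, bhT (2/p) (n+1) f k ≤ (K * C * ‖U‖)^p := by
    intro k
    rw [bhT_eq]
    have e1 : ∀ i, (f i)^(2/p) = (U (fun k => Pi.single (i k) (1 : ℝ)))^2 := by
      intro i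
      simp only [hf]
      rw [← Real.rpow_mul (abs_nonneg _), mul_div_cancel₀ _ hp0.ne', Real.rpow_two, sq_abs]
    have e2 : 1/(2/p) = p/2 := by field_simp
    simp_rw [e1, e2]
    have h2N : (0:ℝ) < 2^N := by positivity
    refine le_of_mul_le_mul_left ?_ h2N
    rw [Finset.mul_sum]
    refine (Finset.sum_le_sum fun j _ => hkh _).trans ?_
    rw [← Finset.mul_sum, Finset.sum_comm]
    have h3 : ∀ x : Fin N → Bool, ∑ j : Fin n → Fin N, |∑ i, U (fun l => Pi.single
        ((k.insertNth i j : Fin (n+1) → Fin N) l) (1:ℝ)) * bhsg (x i)|^p ≤ (C * ‖U‖)^p := by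
      intro x
      simp_rw [bh_single_insert]
      have e : ∀ j : Fin n → Fin N, ∑ i, U (k.insertNth (Pi.single i (1:ℝ) : Fin N → ℝ)
          (fun l => Pi.single (j l) (1:ℝ))) * bhsg (x i)
          = U.curryMid k (fun i => bhsg (x i)) (fun l => Pi.single (j l) (1:ℝ)) := fun j =>
        (bh_expand U k (fun i => bhsg (x i)) (fun l => Pi.single (j l) (1:ℝ))).symm
      simp_rw [e]
      refine (ih _).trans ?_
      refine Real.rpow_le_rpow (by positivity) ?_ hp0.le
      refine mul_le_mul_of_nonneg_left ?_ hC
      refine (ContinuousLinearMap.le_opNorm _ _).trans ?_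
      rw [ContinuousMultilinearMap.norm_curryMid]
      refine mul_le_of_le_one_right hU ?_
      rw [pi_norm_le_iff_of_nonneg zero_le_one]
      intro i
      cases x i <;> simp [bhsg]
    have h4 := Finset.sum_le_sum (s := Finset.univ) fun x (_ : x ∈ Finset.univ) => h3 x
    simp only [Finset.sum_const, Finset.card_univ, Fintype.card_pi, Fintype.card_bool,
      Finset.prod_const, Fintype.card_fin, nsmul_eq_mul] at h4
    push_cast at h4
    have h5 := mul_le_mul_of_nonneg_left h4 (Real.rpow_nonneg hK p)
    refine h5.trans (le_of_eq ?_)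
    rw [mul_assoc K, Real.mul_rpow hK (by positivity)]; ring
  have hr : 1 ≤ 2/p := by
    rw [le_div_iff₀ hp0, hp, one_mul, div_le_iff₀ (by positivity)]; linarith
  have hb := bh_blei (2/p) (q/p) (n+1) hr (by positivity) (by positivity) (by
    rw [hp, hq]; push_cast; field_simp; ring) (n+1) (by push_cast; exact le_rfl) f hf0
  have e6 : q/p * ((n:ℝ) + 1 - ((n+1 : ℕ) : ℝ))/(n+1) = 0 := by push_cast; simp
  rw [e6, Real.rpow_zero, one_mul] at hb
  have e7 : ∀ i, (f i)^(q/p) = |U (fun k => Pi.single (i k) (1 : ℝ))| ^ q := by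
    intro i
    simp only [hf]
    rw [← Real.rpow_mul (abs_nonneg _), mul_div_cancel₀ _ hp0.ne']
  simp_rw [e7] at hb
  refine hb.trans ?_
  have hB : 0 ≤ K * C * ‖U‖ := by positivity
  calc _ ≤ ∏ k : Fin (n+1), ((K * C * ‖U‖)^p)^(q/p/(n+1)) :=
        Finset.prod_le_prod (fun k _ => Real.rpow_nonneg (bhT_nonneg _ _ _ hf0 k) _)
          (fun k _ => Real.rpow_le_rpow (bhT_nonneg _ _ _ hf0 k) (hT k) (by positivity))
    _ = _ := by
        rw [Finset.prod_const, Finset.card_univ, Fintype.card_fin, ← Real.rpow_mul hB,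
          ← Real.rpow_natCast, ← Real.rpow_mul hB]
        congr 1
        push_cast
        field_simp

lemma bh_one (N : ℕ) (V : ContinuousMultilinearMap ℝ (fun _ : Fin 1 => (Fin N → ℝ)) ℝ) :
    ∑ i : Fin 1 → Fin N, |V (fun k => Pi.single (i k) (1 : ℝ))| ^ ((2 * ((1:ℕ):ℝ) : ℝ) / (((1:ℕ):ℝ) + 1))
        ≤ (1 * ‖V‖)^((2 * ((1:ℕ):ℝ) : ℝ) / (((1:ℕ):ℝ) + 1)) := by
  have e : (2 * ((1:ℕ):ℝ) : ℝ) / (((1:ℕ):ℝ) + 1) = 1 := by norm_num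
  rw [e]
  simp only [Real.rpow_one, one_mul]
  rw [bhsum_consι]
  simp only [Fintype.sum_unique]
  set c : Fin N → ℝ := fun i => V (fun k => Pi.single ((Fin.cons i default : Fin 1 → Fin N) k) (1:ℝ)) with hc
  set ε : Fin N → ℝ := fun i => if 0 ≤ c i then 1 else -1 with hε
  have h1 := bh_expand V 0 ε (fun l => l.elim0)
  have h2 : ∀ i, V ((0 : Fin 1).insertNth (Pi.single i (1:ℝ) : Fin N → ℝ) (fun l => l.elim0)) = c i := by
    intro i
    simp only [hc]
    congr 1
    funext k
    obtain rfl : k = 0 := Fin.fin_one_eq_zero k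
    simp
  simp_rw [h2] at h1
  have h3 : ∀ i, c i * ε i = |c i| := by
    intro i
    simp only [hε]
    split_ifs with h
    · rw [abs_of_nonneg h, mul_one]
    · rw [abs_of_neg (not_le.1 h)]; ring
  simp_rw [h3] at h1
  rw [← h1]
  refine (le_abs_self _).trans ?_
  have h4 := (V.curryMid 0 ε).le_opNorm (fun l => l.elim0)
  simp only [Finset.univ_eq_empty, Finset.prod_empty, mul_one] at h4
  rw [Real.norm_eq_abs] at h4
  refine h4.trans ((ContinuousLinearMap.le_opNorm _ _).trans ?_)
  rw [ContinuousMultilinearMap.norm_curryMid]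
  refine mul_le_of_le_one_right (norm_nonneg _) ?_
  rw [pi_norm_le_iff_of_nonneg zero_le_one]
  intro i
  simp only [hε]
  split_ifs <;> simp

lemma bh_gamma : Real.eulerMascheroniConstant < 0.5853 := by
  have h := Real.eulerMascheroniConstant_lt_eulerMascheroniSeq' 64
  have h2 : Real.eulerMascheroniSeq' 64 = (harmonic 64 : ℝ) - 6 * Real.log 2 := by
    have : Real.log 64 = 6 * Real.log 2 := by
      rw [show (64:ℝ) = 2^6 by norm_num, Real.log_pow]; norm_num
    simp only [Real.eulerMascheroniSeq']
    rw [if_neg (by norm_num)]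
    push_cast
    rw [this]
  have h3 : harmonic 64 ≤ 4.7439 := by
    simp only [harmonic, Finset.sum_range_succ, Finset.sum_range_zero]
    norm_num
  have h4 : (harmonic 64 : ℝ) ≤ 4.7439 := by
    have := (Rat.cast_le (K := ℝ)).2 h3
    refine this.trans ?_
    norm_num
  have := Real.log_two_gt_d9
  linarith

lemma bh_L (D : ℝ) (hD : D = Real.exp (1 - Real.eulerMascheroniConstant / 2) / Real.sqrt 2) :
    0.52 ≤ Real.logb 2 D := by
  have h2 : Real.log D = 1 - Real.eulerMascheroniConstant / 2 - Real.log 2 / 2 := by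
    rw [hD, Real.log_div (Real.exp_pos _).ne' (by positivity), Real.log_exp, Real.log_sqrt (by norm_num)]
  have h1 := Real.log_two_gt_d9
  have h3 := Real.log_two_lt_d9
  have h4 := bh_gamma
  rw [Real.logb, le_div_iff₀ (by linarith), h2]
  linarith

lemma bh_grow (n : ℕ) (hn : 2 ≤ n) (L : ℝ) (hL : 0.52 ≤ L) :
    Real.exp (0.52 / n) * ((n:ℝ) - 1)^L ≤ (n:ℝ)^L := by
  have hn2 : (2:ℝ) ≤ n := by exact_mod_cast hn
  have hn1 : (0:ℝ) < (n:ℝ) - 1 := by linarith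
  have hn0 : (0:ℝ) < n := by linarith
  rw [Real.rpow_def_of_pos hn1, Real.rpow_def_of_pos hn0, ← Real.exp_add, Real.exp_le_exp]
  have h1 := Real.log_le_sub_one_of_pos (div_pos hn1 hn0)
  rw [Real.log_div hn1.ne' hn0.ne'] at h1
  have h2 : ((n:ℝ) - 1)/n - 1 = -(1/n) := by field_simp; ring
  rw [h2] at h1
  have h3 : (0:ℝ) < 1/n := by positivity
  have h4 : (0.52:ℝ)/n = 0.52 * (1/n) := by ring
  rw [h4]
  nlinarith [mul_le_mul_of_nonneg_right hL h3.le]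

lemma bh_main (N : ℕ) (L : ℝ) (hL : 0.52 ≤ L) (n : ℕ) (hn : 2 ≤ n) :
    ∀ V : ContinuousMultilinearMap ℝ (fun _ : Fin n => (Fin N → ℝ)) ℝ,
      ∑ i : Fin n → Fin N, |V (fun k => Pi.single (i k) (1 : ℝ))| ^ ((2 * n : ℝ) / (n + 1))
        ≤ (√2 * ((n:ℝ) - 1)^L * ‖V‖)^((2 * n : ℝ) / (n + 1)) := by
  induction n, hn using Nat.le_induction with
  | base =>
    intro V
    have h := bh_step 1 N le_rfl 1 (√2) zero_le_one (by positivity) ?_ (bh_one N) V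
    · convert h using 2
      norm_num
    · intro a
      have e : (2 * ((1:ℕ):ℝ) : ℝ) / (((1:ℕ):ℝ) + 1) = 1 := by norm_num
      rw [e]
      simp only [Real.rpow_one]
      rw [← Real.sqrt_eq_rpow]
      exact bhS_one N a
  | succ n hn ih =>
    intro V
    have hn2 : (2:ℝ) ≤ n := by exact_mod_cast hn
    have hn1 : (0:ℝ) < (n:ℝ) - 1 := by linarith
    have hn0 : (0:ℝ) < n := by linarith
    have hC : 0 ≤ √2 * ((n:ℝ) - 1)^L := by positivity
    have h := bh_step n N (by omega) _ (Real.exp (0.52 / n)) hC (Real.exp_pos _).le ?_ ih V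
    · refine h.trans ?_
      refine Real.rpow_le_rpow (by positivity) ?_ (by positivity)
      refine mul_le_mul_of_nonneg_right ?_ (norm_nonneg _)
      have e : (((n+1 : ℕ):ℝ) - 1) = n := by push_cast; ring
      rw [e, mul_left_comm]
      exact mul_le_mul_of_nonneg_left (bh_grow n hn L hL) (by positivity)
    · intro a
      have hk := bh_khin N a ((2 * n : ℝ) / (n + 1))
        (by rw [le_div_iff₀ (by positivity)]; linarith)
        (by rw [div_le_iff₀ (by positivity)]; linarith)
      refine hk.trans (le_of_eq ?_)
      congr 1
      rw [← Real.exp_mul]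
      congr 1
      field_simp
      ring

theorem stmt2 (n : ℕ) (hn : 2 ≤ n) (N : ℕ) (hN : 0 < N)
    (U : ContinuousMultilinearMap ℝ (fun _ : Fin n => (Fin N → ℝ)) ℝ)
    (D : ℝ) (hD : D = Real.exp (1 - Real.eulerMascheroniConstant / 2) / Real.sqrt 2) :
    BHreal n N U ≤ Real.sqrt 2 * ((n : ℝ) - 1) ^ Real.logb 2 D * ‖U‖ := by
  have h := bh_main N _ (bh_L D hD) n hn U
  have hn2 : (2:ℝ) ≤ n := by exact_mod_cast hn
  have hn1 : (0:ℝ) < (n:ℝ) - 1 := by linarith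
  have hn0 : (0:ℝ) < n := by linarith
  have hB : 0 ≤ Real.sqrt 2 * ((n : ℝ) - 1) ^ Real.logb 2 D * ‖U‖ := by positivity
  unfold BHreal
  have h2 := Real.rpow_le_rpow (Finset.sum_nonneg fun i _ => Real.rpow_nonneg (abs_nonneg _) _) h
    (by positivity : (0:ℝ) ≤ (n + 1 : ℝ) / (2 * n))
  refine h2.trans (le_of_eq ?_)
  rw [← Real.rpow_mul hB]
  have : (2 * n : ℝ) / (n + 1) * ((n + 1 : ℝ) / (2 * n)) = 1 := by field_simp
  rw [this, Real.rpow_one]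
end

section
/- Let γ denote the Euler–Mascheroni constant and D = e^{(1-γ)/2}. For every integer n ≥ 2, every positive integer N, and every n-linear form U : (ℂ^N)^n → ℂ, one has (∑_{i₁,…,iₙ=1}^N |U(e_{i₁},…,e_{iₙ})|^{2n/(n+1)})^{(n+1)/(2n)} ≤ (2/√π) · (n-1)^{log₂ D} · ‖U‖. -/
open Real

/-- The Bohnenblust--Hille quantity of an `n`-linear form on `ℓ_∞^N` over `ℂ`:
`(∑_{i₁,…,iₙ} |U(e_{i₁},…,e_{iₙ})|^{2n/(n+1)})^{(n+1)/(2n)}`. -/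
noncomputable def BHcomplex (n N : ℕ)
    (U : ContinuousMultilinearMap ℂ (fun _ : Fin n => (Fin N → ℂ)) ℂ) : ℝ :=
  (∑ i : Fin n → Fin N,
      ‖U (fun k => Pi.single (i k) (1 : ℂ))‖ ^ ((2 * n : ℝ) / (n + 1)))
    ^ ((n + 1 : ℝ) / (2 * n))


/-- Generalised Hölder inequality for finite sums. -/
lemma gen_holder {α κ : Type*} [Fintype α] [Fintype κ] (f : κ → α → ℝ) (w : κ → ℝ)
    (hf : ∀ k x, 0 ≤ f k x) (hw : ∀ k, 0 < w k) (hs : ∑ k, w k = 1) :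
    ∑ x, ∏ k, f k x ^ w k ≤ ∏ k, (∑ x, f k x) ^ w k := by
  have hF : ∀ k, 0 ≤ ∑ x, f k x := fun k => Finset.sum_nonneg fun x _ => hf k x
  by_cases h0 : ∃ k, ∑ x, f k x = 0
  · obtain ⟨k, hk⟩ := h0
    have hz : ∀ x, f k x = 0 := fun x =>
      (Finset.sum_eq_zero_iff_of_nonneg (fun x _ => hf k x)).1 hk x (Finset.mem_univ x)
    have : ∑ x, ∏ k, f k x ^ w k = 0 := by
      apply Finset.sum_eq_zero
      intro x _
      apply Finset.prod_eq_zero (Finset.mem_univ k)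
      rw [hz x, Real.zero_rpow (hw k).ne']
    rw [this]
    exact Finset.prod_nonneg fun k _ => Real.rpow_nonneg (hF k) _
  · push Not at h0
    have hpos : ∀ k, 0 < ∑ x, f k x := fun k => lt_of_le_of_ne (hF k) (h0 k).symm
    have key : ∀ x, ∏ k, f k x ^ w k ≤
        (∏ k, (∑ x, f k x) ^ w k) * ∑ k, w k * (f k x / ∑ x, f k x) := by
      intro x
      have h1 := Real.geom_mean_le_arith_mean_weighted Finset.univ w
        (fun k => f k x / ∑ x, f k x) (fun k _ => (hw k).le) hs
        (fun k _ => div_nonneg (hf k x) (hF k))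
      have h2 : ∏ k, f k x ^ w k = (∏ k, (∑ x, f k x) ^ w k) *
          ∏ k, (f k x / ∑ x, f k x) ^ w k := by
        rw [← Finset.prod_mul_distrib]
        apply Finset.prod_congr rfl
        intro k _
        rw [← Real.mul_rpow (hF k) (div_nonneg (hf k x) (hF k)), mul_div_cancel₀ _ (h0 k)]
      rw [h2]
      exact mul_le_mul_of_nonneg_left h1
        (Finset.prod_nonneg fun k _ => Real.rpow_nonneg (hF k) _)
    calc ∑ x, ∏ k, f k x ^ w k ≤ ∑ x, (∏ k, (∑ x, f k x) ^ w k) *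
          ∑ k, w k * (f k x / ∑ x, f k x) := Finset.sum_le_sum fun x _ => key x
      _ = (∏ k, (∑ x, f k x) ^ w k) * ∑ k, w k * ((∑ x, f k x) / ∑ x, f k x) := by
        rw [← Finset.mul_sum, Finset.sum_comm]
        congr 1
        apply Finset.sum_congr rfl
        intro k _
        rw [← Finset.mul_sum, ← Finset.sum_div]
      _ = ∏ k, (∑ x, f k x) ^ w k := by
        have : ∀ k, w k * ((∑ x, f k x) / ∑ x, f k x) = w k := fun k => by
          rw [div_self (h0 k), mul_one]
        simp only [this, hs, mul_one]

lemma sum_cons {ι : Type*} [Fintype ι] {n : ℕ} (F : (Fin (n + 1) → ι) → ℝ) :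
    ∑ i, F i = ∑ x, ∑ y : Fin n → ι, F (Fin.cons x y : Fin (n + 1) → ι) := by
  rw [← (Fin.consEquiv (fun _ => ι)).sum_comp, Fintype.sum_prod_type]
  rfl

lemma sum_insertNth {ι M : Type*} [Fintype ι] [AddCommMonoid M] {n : ℕ} (k : Fin (n + 1))
    (F : (Fin (n + 1) → ι) → M) :
    ∑ i, F i = ∑ y : Fin n → ι, ∑ x, F (k.insertNth x y : Fin (n + 1) → ι) := by
  rw [← (Fin.insertNthEquiv (fun _ => ι) k).sum_comp, Fintype.sum_prod_type, Finset.sum_comm]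
  rfl

/-- Discrete Loomis-Whitney inequality. -/
lemma loomis_whitney {ι : Type*} [Fintype ι] (m : ℕ) :
    ∀ (g : Fin (m + 2) → (Fin (m + 1) → ι) → ℝ), (∀ k y, 0 ≤ g k y) →
    ∑ i : Fin (m + 2) → ι, ∏ k, (g k (k.removeNth i)) ^ ((1 : ℝ) / (m + 1)) ≤
      ∏ k, (∑ y, g k y) ^ ((1 : ℝ) / (m + 1)) := by
  induction m with
  | zero =>
    intro g hg
    simp only [Nat.cast_zero, zero_add, div_one, Real.rpow_one]
    rw [sum_cons]
    have e : ∀ F : Fin (0 + 2) → ℝ, ∏ k, F k = F 0 * F 1 := fun F => Fin.prod_univ_two F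
    simp only [e]
    have h1 : ∀ (x : ι) (y : Fin 1 → ι),
        (0 : Fin 2).removeNth (Fin.cons x y : Fin 2 → ι) = y := by
      intro x y; ext j; fin_cases j; rfl
    have h2 : ∀ (x : ι) (y : Fin 1 → ι),
        (1 : Fin 2).removeNth (Fin.cons x y : Fin 2 → ι) = fun _ => x := by
      intro x y; ext j; fin_cases j; rfl
    have h3 : ∑ y : Fin 1 → ι, g 1 y = ∑ x, g 1 (fun _ => x) := by
      rw [← (Equiv.funUnique (Fin 1) ι).symm.sum_comp]
      rfl
    rw [h3, mul_comm, Finset.sum_mul_sum]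
    apply le_of_eq
    apply Finset.sum_congr rfl
    intro x _
    apply Finset.sum_congr rfl
    intro y _
    rw [h1, h2, mul_comm]
  | succ m ih =>
    intro g hg
    rw [sum_cons]
    have hm : (0 : ℝ) < m + 1 := by positivity
    have hm2 : (0 : ℝ) < m + 2 := by positivity
    push_cast
    have e2 : (m : ℝ) + 1 + 1 = m + 2 := by ring
    rw [e2]
    have r0 : ∀ (x : ι) (y : Fin (m + 2) → ι),
        (0 : Fin (m + 3)).removeNth (Fin.cons x y : Fin (m + 3) → ι) = y := by
      intro x y; ext j; rfl
    have rs : ∀ (x : ι) (y : Fin (m + 2) → ι) (k : Fin (m + 2)),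
        (k.succ).removeNth (Fin.cons x y : Fin (m + 3) → ι) =
          (Fin.cons x (k.removeNth y) : Fin (m + 2) → ι) := by
      intro x y k; ext j
      refine Fin.cases ?_ (fun j => ?_) j
      · simp [Fin.removeNth]
      · simp [Fin.removeNth]
    have hconj : ((m : ℝ) + 2).HolderConjugate ((m + 2) / (m + 1)) := by
      rw [Real.holderConjugate_iff]
      refine ⟨by linarith, ?_⟩
      field_simp
      ring
    have step : ∀ x : ι, ∑ y : Fin (m + 2) → ι,
        ∏ k, (g k (k.removeNth (Fin.cons x y : Fin (m + 3) → ι))) ^ ((1 : ℝ) / (m + 2)) ≤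
        (∑ y, g 0 y) ^ ((1 : ℝ) / (m + 2)) *
        ∏ k : Fin (m + 2), (∑ z, g k.succ (Fin.cons x z : Fin (m + 2) → ι)) ^ ((1 : ℝ) / (m + 2)) := by
      intro x
      have hprod : ∀ y : Fin (m + 2) → ι,
          0 ≤ ∏ k : Fin (m + 2), (g k.succ (Fin.cons x (k.removeNth y) : Fin (m + 2) → ι)) ^ ((1 : ℝ) / (m + 2)) :=
        fun y => Finset.prod_nonneg fun k _ => Real.rpow_nonneg (hg _ _) _
      have h1 := Real.inner_le_Lp_mul_Lq_of_nonneg (Finset.univ : Finset (Fin (m + 2) → ι))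
        (f := fun y => (g 0 y) ^ ((1 : ℝ) / (m + 2)))
        (g := fun y => ∏ k : Fin (m + 2), (g k.succ (Fin.cons x (k.removeNth y) : Fin (m + 2) → ι)) ^ ((1 : ℝ) / (m + 2)))
        hconj (fun y _ => Real.rpow_nonneg (hg _ _) _) (fun y _ => hprod y)
      have e1 : ∀ y : Fin (m + 2) → ι, ((g 0 y) ^ ((1 : ℝ) / (m + 2))) ^ ((m : ℝ) + 2) = g 0 y := by
        intro y
        rw [← Real.rpow_mul (hg _ _), one_div_mul_cancel hm2.ne', Real.rpow_one]
      have e3 : ∀ y : Fin (m + 2) → ι,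
          (∏ k : Fin (m + 2), (g k.succ (Fin.cons x (k.removeNth y) : Fin (m + 2) → ι)) ^ ((1 : ℝ) / (m + 2))) ^ (((m : ℝ) + 2) / (m + 1))
          = ∏ k : Fin (m + 2), (g k.succ (Fin.cons x (k.removeNth y) : Fin (m + 2) → ι)) ^ ((1 : ℝ) / (m + 1)) := by
        intro y
        rw [← Real.finsetProd_rpow _ _ (fun k _ => Real.rpow_nonneg (hg _ _) _)]
        apply Finset.prod_congr rfl
        intro k _
        rw [← Real.rpow_mul (hg _ _)]
        congr 1
        field_simp
      simp only [e1, e3] at h1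
      have h2 := ih (fun k z => g k.succ (Fin.cons x z : Fin (m + 2) → ι)) (fun k z => hg _ _)
      have h3 : (∑ y : Fin (m + 2) → ι, ∏ k : Fin (m + 2), (g k.succ (Fin.cons x (k.removeNth y) : Fin (m + 2) → ι)) ^ ((1 : ℝ) / (m + 1))) ^ (1 / (((m : ℝ) + 2) / (m + 1)))
          ≤ ∏ k : Fin (m + 2), (∑ z, g k.succ (Fin.cons x z : Fin (m + 2) → ι)) ^ ((1 : ℝ) / (m + 2)) := by
        refine (Real.rpow_le_rpow (Finset.sum_nonneg fun y _ => Finset.prod_nonneg fun k _ => Real.rpow_nonneg (hg _ _) _) h2 (by positivity)).trans (le_of_eq ?_)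
        have hnn : ∀ k : Fin (m + 2), 0 ≤ ∑ z, g k.succ (Fin.cons x z : Fin (m + 2) → ι) :=
          fun k => Finset.sum_nonneg fun _ _ => hg _ _
        rw [← Real.finsetProd_rpow _ _ (fun k _ => Real.rpow_nonneg (hnn k) _)]
        apply Finset.prod_congr rfl
        intro k _
        rw [← Real.rpow_mul (hnn k)]
        congr 1
        field_simp
      calc _ = ∑ y : Fin (m + 2) → ι, (g 0 y) ^ ((1 : ℝ) / (m + 2)) *
            ∏ k : Fin (m + 2), (g k.succ (Fin.cons x (k.removeNth y) : Fin (m + 2) → ι)) ^ ((1 : ℝ) / (m + 2)) := by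
            apply Finset.sum_congr rfl
            intro y _
            rw [Fin.prod_univ_succ, r0]
            simp only [rs]
        _ ≤ _ := h1
        _ ≤ _ := by
            apply mul_le_mul_of_nonneg_left h3
            exact Real.rpow_nonneg (Finset.sum_nonneg fun _ _ => hg _ _) _
    refine (Finset.sum_le_sum fun x _ => step x).trans ?_
    rw [← Finset.mul_sum, Fin.prod_univ_succ]
    apply mul_le_mul_of_nonneg_left _ (Real.rpow_nonneg (Finset.sum_nonneg fun _ _ => hg _ _) _)
    refine (gen_holder (fun (k : Fin (m + 2)) x => ∑ z, g k.succ (Fin.cons x z : Fin (m + 2) → ι))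
      (fun _ => (1 : ℝ) / (m + 2)) (fun k x => Finset.sum_nonneg fun _ _ => hg _ _)
      (fun _ => by positivity) ?_).trans (le_of_eq ?_)
    · simp
      field_simp
    · apply Finset.prod_congr rfl
      intro k _
      rw [sum_cons]

/-- Blei-type mixed norm inequality. -/
lemma blei {ι : Type*} [Fintype ι] (m : ℕ) (f : (Fin (m + 2) → ι) → ℝ) (hf : ∀ i, 0 ≤ f i) :
    ∑ i, f i ^ ((2 * (m + 2) : ℝ) / (m + 3)) ≤
      ∏ k : Fin (m + 2), (∑ y : Fin (m + 1) → ι,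
        (∑ x, f (k.insertNth x y : Fin (m + 2) → ι) ^ 2) ^ (((m : ℝ) + 1) / (m + 2))) ^
          (((m : ℝ) + 2) / ((m + 1) * (m + 3))) := by
  have h1 : (0 : ℝ) < m + 1 := by positivity
  have h2 : (0 : ℝ) < m + 2 := by positivity
  have h3 : (0 : ℝ) < m + 3 := by positivity
  set S : Fin (m + 2) → (Fin (m + 1) → ι) → ℝ :=
    fun k y => ∑ x, f (k.insertNth x y : Fin (m + 2) → ι) ^ 2 with hS
  have hSn : ∀ k y, 0 ≤ S k y := fun k y => Finset.sum_nonneg fun x _ => sq_nonneg _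
  have hins : ∀ (k : Fin (m + 2)) (i : Fin (m + 2) → ι),
      (k.insertNth (i k) (k.removeNth i) : Fin (m + 2) → ι) = i := by
    intro k i
    simp
  have hfS : ∀ k i, f i ^ 2 ≤ S k (k.removeNth i) := by
    intro k i
    have := Finset.single_le_sum (f := fun x => f (k.insertNth x (k.removeNth i) : Fin (m + 2) → ι) ^ 2)
      (fun x _ => sq_nonneg _) (Finset.mem_univ (i k))
    simpa only [hins] using this
  set T : Fin (m + 2) → ℝ := fun k => ∑ y, S k y ^ (((m : ℝ) + 1) / (m + 2)) with hT
  have hTn : ∀ k, 0 ≤ T k := fun k => Finset.sum_nonneg fun y _ => Real.rpow_nonneg (hSn k y) _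
  -- the `m + 3` functions
  let F : Option (Fin (m + 2)) → (Fin (m + 2) → ι) → ℝ := fun o i =>
    match o with
    | none => ∏ k, (S k (k.removeNth i)) ^ ((1 : ℝ) / (m + 2))
    | some k => f i ^ 2 * (S k (k.removeNth i)) ^ (-((1 : ℝ) / (m + 2)))
  have hFn : ∀ o i, 0 ≤ F o i := by
    intro o i
    cases o with
    | none => exact Finset.prod_nonneg fun k _ => Real.rpow_nonneg (hSn _ _) _
    | some k => exact mul_nonneg (sq_nonneg _) (Real.rpow_nonneg (hSn _ _) _)
  have hH := gen_holder F (fun _ => (1 : ℝ) / (m + 3)) hFn (fun _ => by positivity) (by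
    simp; field_simp; ring)
  have hL : ∀ i, f i ^ ((2 * (m + 2) : ℝ) / (m + 3)) = ∏ o, F o i ^ ((1 : ℝ) / (m + 3)) := by
    intro i
    rw [Fintype.prod_option]
    by_cases h0 : f i = 0
    · rw [h0, Real.zero_rpow (by positivity)]
      symm
      apply mul_eq_zero_of_right
      apply Finset.prod_eq_zero (Finset.mem_univ 0)
      have : F (some 0) i = 0 := by simp [F, h0]
      rw [this, Real.zero_rpow (by positivity)]
    · have hfp : 0 < f i := lt_of_le_of_ne (hf i) (Ne.symm h0)
      have hSp : ∀ k, 0 < S k (k.removeNth i) := fun k => lt_of_lt_of_le (by positivity) (hfS k i)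
      rw [Real.finsetProd_rpow Finset.univ (fun k => F (some k) i) (fun k _ => hFn (some k) i),
        ← Real.mul_rpow (hFn none i) (Finset.prod_nonneg fun k _ => hFn (some k) i)]
      have : F none i * ∏ k, F (some k) i = f i ^ (2 * (m + 2)) := by
        simp only [F]
        rw [← Finset.prod_mul_distrib]
        have : ∀ k, S k (k.removeNth i) ^ ((1 : ℝ) / (m + 2)) *
            (f i ^ 2 * (S k (k.removeNth i)) ^ (-((1 : ℝ) / (m + 2)))) = f i ^ 2 := by
          intro k
          rw [mul_left_comm, ← Real.rpow_add (hSp k)]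
          simp
        simp only [this]
        simp [← pow_mul]
      rw [this, ← Real.rpow_natCast, ← Real.rpow_mul (hf i)]
      congr 1
      push_cast
      ring
  have hnone : ∑ i, F none i ≤ ∏ k, (T k) ^ ((1 : ℝ) / (m + 1)) := by
    have := loomis_whitney m (fun k y => S k y ^ (((m : ℝ) + 1) / (m + 2)))
      (fun k y => Real.rpow_nonneg (hSn k y) _)
    refine le_trans (le_of_eq ?_) this
    apply Finset.sum_congr rfl
    intro i _
    simp only [F]
    apply Finset.prod_congr rfl
    intro k _
    rw [← Real.rpow_mul (hSn _ _)]
    congr 1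
    field_simp
  have hsome : ∀ k, ∑ i, F (some k) i = T k := by
    intro k
    rw [sum_insertNth k]
    simp only [hT]
    apply Finset.sum_congr rfl
    intro y _
    simp only [F, Fin.removeNth_insertNth]
    rw [← Finset.sum_mul]
    change S k y * S k y ^ (-((1 : ℝ) / (m + 2))) = _
    rcases (hSn k y).eq_or_lt with h | h
    · rw [← h, zero_mul, Real.zero_rpow (by positivity)]
    · nth_rewrite 1 [← Real.rpow_one (S k y)]
      rw [← Real.rpow_add h]
      congr 1
      field_simp
      ring
  calc ∑ i, f i ^ ((2 * (m + 2) : ℝ) / (m + 3)) = ∑ i, ∏ o, F o i ^ ((1 : ℝ) / (m + 3)) :=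
        Finset.sum_congr rfl fun i _ => hL i
    _ ≤ _ := hH
    _ = (∑ i, F none i) ^ ((1 : ℝ) / (m + 3)) * ∏ k, T k ^ ((1 : ℝ) / (m + 3)) := by
        rw [Fintype.prod_option]
        simp only [hsome]
    _ ≤ (∏ k, (T k) ^ ((1 : ℝ) / (m + 1))) ^ ((1 : ℝ) / (m + 3)) * ∏ k, T k ^ ((1 : ℝ) / (m + 3)) := by
        apply mul_le_mul_of_nonneg_right
        · exact Real.rpow_le_rpow (Finset.sum_nonneg fun i _ => hFn none i) hnone (by positivity)
        · exact Finset.prod_nonneg fun k _ => Real.rpow_nonneg (hTn k) _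
    _ = _ := by
        rw [← Real.finsetProd_rpow _ _ (fun k _ => Real.rpow_nonneg (hTn k) _),
          ← Finset.prod_mul_distrib]
        apply Finset.prod_congr rfl
        intro k _
        change _ = T k ^ _
        rw [← Real.rpow_mul (hTn k), ← Real.rpow_add_of_nonneg (hTn k) (by positivity) (by positivity)]
        congr 1
        field_simp
        ring


instance instFactTwoPi : Fact (0 < 2 * π) := ⟨Real.two_pi_pos⟩

open MeasureTheory in
/-- The normalised Haar measure on the circle `ℝ / 2πℤ`. -/
noncomputable abbrev tau : Measure (AddCircle (2 * π)) := AddCircle.haarAddCircle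

open MeasureTheory in
/-- The distribution of independent Steinhaus variables. -/
noncomputable abbrev stei (ι : Type*) [Fintype ι] : Measure (ι → AddCircle (2 * π)) :=
  Measure.pi (fun _ => tau)

/-- The unimodular number attached to an angle. -/
noncomputable def ew (x : AddCircle (2 * π)) : ℂ := (AddCircle.toCircle x : ℂ)

lemma norm_ew (x : AddCircle (2 * π)) : ‖ew x‖ = 1 := by
  unfold ew
  exact Circle.norm_coe _

lemma ew_add (x y : AddCircle (2 * π)) : ew (x + y) = ew x * ew y := by
  simp [ew, AddCircle.toCircle_add]

@[fun_prop]
lemma continuous_ew : Continuous ew := by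
  unfold ew
  exact continuous_subtype_val.comp AddCircle.continuous_toCircle

lemma ew_coe (θ : ℝ) : ew (θ : AddCircle (2 * π)) = Complex.exp (θ * Complex.I) := by
  unfold ew
  rw [AddCircle.toCircle_apply_mk, Circle.coe_exp]
  congr 2
  have : 2 * π ≠ 0 := by positivity
  rw [div_self this, one_mul]

lemma ew_re (θ : ℝ) : (ew (θ : AddCircle (2 * π))).re = Real.cos θ := by
  rw [ew_coe, Complex.exp_ofReal_mul_I_re]

lemma exists_ew (z : ℂ) (hz : ‖z‖ = 1) : ∃ x, ew x = z := by
  refine ⟨((Complex.arg z : ℝ) : AddCircle (2 * π)), ?_⟩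
  rw [ew_coe]
  conv_rhs => rw [← Complex.norm_mul_exp_arg_mul_I z, hz]
  simp

lemma integrable_of_cont {X : Type*} [TopologicalSpace X] [CompactSpace X] [MeasurableSpace X]
    [OpensMeasurableSpace X] {E : Type*} [NormedAddCommGroup E] [SecondCountableTopologyEither X E]
    (μ : MeasureTheory.Measure X)
    [MeasureTheory.IsFiniteMeasure μ] {f : X → E} (hf : Continuous f) : MeasureTheory.Integrable f μ :=
  hf.integrable_of_hasCompactSupport (HasCompactSupport.of_compactSpace f)

lemma integral_tau {E : Type*} [NormedAddCommGroup E] [NormedSpace ℝ E]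
    (f : AddCircle (2 * π) → E) :
    ∫ x, f x ∂tau = (2 * π)⁻¹ • ∫ θ in (0 : ℝ)..(2 * π), f (θ : AddCircle (2 * π)) := by
  rw [AddCircle.integral_haarAddCircle]
  congr 1
  have := AddCircle.intervalIntegral_preimage (2 * π) 0 f
  rw [zero_add] at this
  exact this.symm

lemma avg_rot {ι : Type*} [Fintype ι] (g : AddCircle (2 * π) → ι → AddCircle (2 * π))
    (hg : Continuous g) {F : (ι → AddCircle (2 * π)) → ℝ} (hF : Continuous F) :
    ∫ ω, F ω ∂(stei ι) = ∫ ω, (∫ φ, F (ω + g φ) ∂tau) ∂(stei ι) := by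
  rw [MeasureTheory.integral_integral_swap]
  · have : ∀ φ, ∫ ω, F (ω + g φ) ∂(stei ι) = ∫ ω, F ω ∂(stei ι) := fun φ =>
      MeasureTheory.integral_add_right_eq_self F (g φ)
    simp [this]
  · apply integrable_of_cont
    unfold Function.uncurry
    fun_prop

/-- Bohnenblust-Hille inequality for coefficient tensors, of degree `n` with constant `C`. -/
def BHP (n : ℕ) (C : ℝ) : Prop :=
  ∀ (N : ℕ) (u : (Fin n → Fin N) → ℂ) (B : ℝ),
    (∀ z : Fin n → Fin N → ℂ, (∀ k j, ‖z k j‖ ≤ 1) → ‖∑ i, u i * ∏ k, z k (i k)‖ ≤ B) →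
    ∑ i, ‖u i‖ ^ ((2 * n : ℝ) / (n + 1)) ≤ (C * B) ^ ((2 * n : ℝ) / (n + 1))

/-- Khinchine-Steinhaus inequality for exponent `p` with constant `K`. -/
def Khin (p K : ℝ) : Prop :=
  ∀ (N : ℕ) (a : Fin N → ℂ),
    (∑ j, ‖a j‖ ^ 2) ^ (p / 2) ≤ K ^ p * ∫ ω, ‖∑ j, a j * ew (ω j)‖ ^ p ∂(stei (Fin N))

lemma BHP_one : BHP 1 1 := by
  intro N u B h
  have e : ((2 * (1 : ℕ) : ℝ) / ((1 : ℕ) + 1)) = 1 := by norm_num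
  rw [e]
  simp only [Real.rpow_one, one_mul]
  have h1 := h (fun _ j => (starRingEnd ℂ) (u (fun _ => j)) / ‖u (fun _ => j)‖) (by
    intro k j
    rw [norm_div, RCLike.norm_conj]
    simp only [Complex.norm_real, norm_norm]
    exact div_self_le_one _)
  have h2 : ∀ i : Fin 1 → Fin N, u i * ∏ k : Fin 1, ((starRingEnd ℂ) (u (fun _ => i k)) / ‖u (fun _ => i k)‖ : ℂ)
      = ((‖u i‖ : ℝ) : ℂ) := by
    intro i
    have : (fun _ : Fin 1 => i 0) = i := by ext j; fin_cases j; rfl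
    simp only [Finset.univ_unique, Fin.default_eq_zero, Finset.prod_singleton, this]
    rw [← mul_div_assoc, Complex.mul_conj']
    by_cases hz : u i = 0
    · simp [hz]
    · have : (‖u i‖ : ℂ) ≠ 0 := by simpa using hz
      field_simp
  simp only [h2] at h1
  rw [← Complex.ofReal_sum, Complex.norm_real, Real.norm_of_nonneg (Finset.sum_nonneg fun i _ => norm_nonneg _)] at h1
  exact h1

lemma BHP_step (m : ℕ) (C K : ℝ) (hC : 0 ≤ C) (hK : 0 ≤ K) (h : BHP (m + 1) C)
    (hKh : Khin ((2 * (m + 1 : ℝ)) / (m + 2)) K) : BHP (m + 2) (K * C) := by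
  intro N u B hB
  have hB0 : 0 ≤ B := (norm_nonneg _).trans (hB (fun _ _ => 0) (by simp))
  have h1 : (0 : ℝ) < m + 1 := by positivity
  have h2 : (0 : ℝ) < m + 2 := by positivity
  have h3 : (0 : ℝ) < m + 3 := by positivity
  set p : ℝ := (2 * (m + 1 : ℝ)) / (m + 2) with hp
  have hp0 : 0 < p := by positivity
  have hpe : (2 * ((m + 1 : ℕ) : ℝ)) / (((m + 1 : ℕ) : ℝ) + 1) = p := by
    rw [hp]; push_cast; ring_nf
  have hT : ∀ k : Fin (m + 2), ∑ y : Fin (m + 1) → Fin N,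
      (∑ x, ‖u (k.insertNth x y : Fin (m + 2) → Fin N)‖ ^ 2) ^ (((m : ℝ) + 1) / (m + 2))
      ≤ (K * C * B) ^ p := by
    intro k
    have hc : ∀ y : Fin (m + 1) → Fin N, Continuous fun ω : Fin N → AddCircle (2 * π) =>
        ‖∑ x, u (k.insertNth x y : Fin (m + 2) → Fin N) * ew (ω x)‖ ^ p := by
      intro y
      exact Continuous.rpow_const (by fun_prop) (fun _ => Or.inr hp0.le)
    calc _ = ∑ y : Fin (m + 1) → Fin N,
        (∑ x, ‖u (k.insertNth x y : Fin (m + 2) → Fin N)‖ ^ 2) ^ (p / 2) := by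
          apply Finset.sum_congr rfl
          intro y _
          congr 1
          rw [hp]; ring
      _ ≤ ∑ y : Fin (m + 1) → Fin N, K ^ p * ∫ ω,
          ‖∑ x, u (k.insertNth x y : Fin (m + 2) → Fin N) * ew (ω x)‖ ^ p ∂(stei (Fin N)) :=
          Finset.sum_le_sum fun y _ => hKh N _
      _ = K ^ p * ∫ ω, ∑ y : Fin (m + 1) → Fin N,
          ‖∑ x, u (k.insertNth x y : Fin (m + 2) → Fin N) * ew (ω x)‖ ^ p ∂(stei (Fin N)) := by
          rw [← Finset.mul_sum, MeasureTheory.integral_finsetSum]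
          intro y _
          exact integrable_of_cont _ (hc y)
      _ ≤ K ^ p * ∫ ω, (C * B) ^ p ∂(stei (Fin N)) := by
          apply mul_le_mul_of_nonneg_left _ (Real.rpow_nonneg hK _)
          apply MeasureTheory.integral_mono
          · exact integrable_of_cont _ (by fun_prop)
          · exact MeasureTheory.integrable_const _
          intro ω
          have := h N (fun y => ∑ x, u (k.insertNth x y : Fin (m + 2) → Fin N) * ew (ω x)) B (by
            intro z hz
            refine le_trans (le_of_eq ?_) (hB (k.insertNth (fun x => ew (ω x)) z) ?_)
            · congr 1
              rw [sum_insertNth k]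
              apply Finset.sum_congr rfl
              intro y _
              rw [Finset.sum_mul]
              apply Finset.sum_congr rfl
              intro x _
              rw [Fin.prod_univ_succAbove _ k]
              simp [mul_assoc]
            · intro k' j
              refine Fin.succAboveCases k ?_ (fun k'' => ?_) k'
              · simp [norm_ew]
              · simpa using hz k'' j)
          rw [hpe] at this
          exact this
      _ = (K * C * B) ^ p := by
          simp only [MeasureTheory.integral_const, MeasureTheory.probReal_univ, one_smul]
          rw [mul_assoc, Real.mul_rpow hK (mul_nonneg hC hB0)]
  have hb := blei m (fun i => ‖u i‖) (fun i => norm_nonneg _)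
  have hKCB : 0 ≤ K * C * B := by positivity
  calc ∑ i, ‖u i‖ ^ ((2 * (m + 2 : ℕ) : ℝ) / ((m + 2 : ℕ) + 1))
      = ∑ i, ‖u i‖ ^ ((2 * (m + 2) : ℝ) / (m + 3)) := by
        apply Finset.sum_congr rfl
        intro i _
        congr 1
        push_cast
        ring_nf
    _ ≤ _ := hb
    _ ≤ ∏ k : Fin (m + 2), ((K * C * B) ^ p) ^ (((m : ℝ) + 2) / ((m + 1) * (m + 3))) := by
        apply Finset.prod_le_prod
        · intro k _
          exact Real.rpow_nonneg (Finset.sum_nonneg fun y _ => Real.rpow_nonneg (Finset.sum_nonneg fun _ _ => by positivity) _) _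
        · intro k _
          exact Real.rpow_le_rpow (Finset.sum_nonneg fun y _ => Real.rpow_nonneg (Finset.sum_nonneg fun _ _ => by positivity) _) (hT k) (by positivity)
    _ = (K * C * B) ^ ((2 * (m + 2 : ℕ) : ℝ) / ((m + 2 : ℕ) + 1)) := by
        rw [Finset.prod_const, Finset.card_univ, Fintype.card_fin, ← Real.rpow_natCast,
          ← Real.rpow_mul hKCB, ← Real.rpow_mul hKCB]
        congr 1
        rw [hp]
        push_cast
        field_simp
        ring


lemma mono_aux {f f' : ℝ → ℝ} (hd : ∀ x, HasDerivAt f (f' x) x) (h0 : 0 ≤ f 0)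
    (hn : ∀ x, 0 ≤ x → 0 ≤ f' x) : ∀ x, 0 ≤ x → 0 ≤ f x := by
  intro x hx
  have : MonotoneOn f (Set.Ici 0) := by
    apply monotoneOn_of_deriv_nonneg (convex_Ici 0)
    · exact fun y _ => (hd y).continuousAt.continuousWithinAt
    · exact fun y _ => (hd y).differentiableAt.differentiableWithinAt
    · intro y hy
      rw [(hd y).deriv]
      rw [interior_Ici] at hy
      exact hn y (le_of_lt hy)
  exact h0.trans (this Set.self_mem_Ici hx hx)

lemma sin1 (x : ℝ) (hx : 0 ≤ x) : 0 ≤ x - sin x := by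
  linarith [Real.sin_le hx]
lemma cos2 : ∀ x : ℝ, 0 ≤ x → 0 ≤ cos x - (1 - x ^ 2 / 2) :=
  mono_aux (f' := fun x => x - sin x) (fun x => by
    refine HasDerivAt.congr_deriv ((hasDerivAt_cos x).sub ((((hasDerivAt_id x).pow 2).div_const 2).const_sub 1)) ?_
    simp; ring) (by simp) sin1
lemma sin3 : ∀ x : ℝ, 0 ≤ x → 0 ≤ sin x - (x - x ^ 3 / 6) :=
  mono_aux (f' := fun x => cos x - (1 - x ^ 2 / 2)) (fun x => by
    refine HasDerivAt.congr_deriv ((hasDerivAt_sin x).sub ((hasDerivAt_id x).sub (((hasDerivAt_id x).pow 3).div_const 6))) ?_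
    simp; ring) (by simp) cos2
lemma cos4 : ∀ x : ℝ, 0 ≤ x → 0 ≤ (1 - x ^ 2 / 2 + x ^ 4 / 24) - cos x :=
  mono_aux (f' := fun x => sin x - (x - x ^ 3 / 6)) (fun x => by
    refine HasDerivAt.congr_deriv ((((((hasDerivAt_id x).pow 2).div_const 2).const_sub 1).add
      (((hasDerivAt_id x).pow 4).div_const 24)).sub (hasDerivAt_cos x)) ?_
    simp; ring) (by simp) sin3
lemma sin5 : ∀ x : ℝ, 0 ≤ x → 0 ≤ (x - x ^ 3 / 6 + x ^ 5 / 120) - sin x :=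
  mono_aux (f' := fun x => (1 - x ^ 2 / 2 + x ^ 4 / 24) - cos x) (fun x => by
    refine HasDerivAt.congr_deriv ((((hasDerivAt_id x).sub (((hasDerivAt_id x).pow 3).div_const 6)).add
      (((hasDerivAt_id x).pow 5).div_const 120)).sub (hasDerivAt_sin x)) ?_
    simp; ring) (by simp) cos4
lemma cos6 : ∀ x : ℝ, 0 ≤ x → 0 ≤ cos x - (1 - x ^ 2 / 2 + x ^ 4 / 24 - x ^ 6 / 720) :=
  mono_aux (f' := fun x => (x - x ^ 3 / 6 + x ^ 5 / 120) - sin x) (fun x => by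
    refine HasDerivAt.congr_deriv ((hasDerivAt_cos x).sub ((((((hasDerivAt_id x).pow 2).div_const 2).const_sub 1).add
      (((hasDerivAt_id x).pow 4).div_const 24)).sub (((hasDerivAt_id x).pow 6).div_const 720))) ?_
    simp; ring) (by simp) sin5
lemma sin7 : ∀ x : ℝ, 0 ≤ x → 0 ≤ sin x - (x - x ^ 3 / 6 + x ^ 5 / 120 - x ^ 7 / 5040) :=
  mono_aux (f' := fun x => cos x - (1 - x ^ 2 / 2 + x ^ 4 / 24 - x ^ 6 / 720)) (fun x => by
    refine HasDerivAt.congr_deriv ((hasDerivAt_sin x).sub ((((hasDerivAt_id x).sub (((hasDerivAt_id x).pow 3).div_const 6)).add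
      (((hasDerivAt_id x).pow 5).div_const 120)).sub (((hasDerivAt_id x).pow 7).div_const 5040))) ?_
    simp; ring) (by simp) cos6
lemma cos8 : ∀ x : ℝ, 0 ≤ x → 0 ≤ (1 - x ^ 2 / 2 + x ^ 4 / 24 - x ^ 6 / 720 + x ^ 8 / 40320) - cos x :=
  mono_aux (f' := fun x => sin x - (x - x ^ 3 / 6 + x ^ 5 / 120 - x ^ 7 / 5040)) (fun x => by
    refine HasDerivAt.congr_deriv (((((((((hasDerivAt_id x).pow 2).div_const 2).const_sub 1).add
      (((hasDerivAt_id x).pow 4).div_const 24)).sub (((hasDerivAt_id x).pow 6).div_const 720))).add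
      (((hasDerivAt_id x).pow 8).div_const 40320)).sub (hasDerivAt_cos x)) ?_
    simp; ring) (by simp) sin7
lemma sin9 : ∀ x : ℝ, 0 ≤ x → 0 ≤ (x - x ^ 3 / 6 + x ^ 5 / 120 - x ^ 7 / 5040 + x ^ 9 / 362880) - sin x :=
  mono_aux (f' := fun x => (1 - x ^ 2 / 2 + x ^ 4 / 24 - x ^ 6 / 720 + x ^ 8 / 40320) - cos x) (fun x => by
    refine HasDerivAt.congr_deriv ((((((hasDerivAt_id x).sub (((hasDerivAt_id x).pow 3).div_const 6)).add
      (((hasDerivAt_id x).pow 5).div_const 120)).sub (((hasDerivAt_id x).pow 7).div_const 5040)).add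
      (((hasDerivAt_id x).pow 9).div_const 362880)).sub (hasDerivAt_sin x)) ?_
    simp; ring) (by simp) cos8
lemma cos10 : ∀ x : ℝ, 0 ≤ x → 0 ≤ cos x - (1 - x ^ 2 / 2 + x ^ 4 / 24 - x ^ 6 / 720 + x ^ 8 / 40320
    - x ^ 10 / 3628800) :=
  mono_aux (f' := fun x => (x - x ^ 3 / 6 + x ^ 5 / 120 - x ^ 7 / 5040 + x ^ 9 / 362880) - sin x) (fun x => by
    refine HasDerivAt.congr_deriv ((hasDerivAt_cos x).sub (((((((((hasDerivAt_id x).pow 2).div_const 2).const_sub 1).add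
      (((hasDerivAt_id x).pow 4).div_const 24)).sub (((hasDerivAt_id x).pow 6).div_const 720))).add
      (((hasDerivAt_id x).pow 8).div_const 40320)).sub (((hasDerivAt_id x).pow 10).div_const 3628800))) ?_
    simp; ring) (by simp) sin9

lemma even_ext {P : ℝ → Prop} (he : ∀ x, P (-x) → P x) (h : ∀ x, 0 ≤ x → P x) (x : ℝ) : P x := by
  rcases le_total 0 x with hx | hx
  · exact h x hx
  · exact he x (h (-x) (by linarith))

lemma tau_re (f : ℝ → ℝ) :
    ∫ x, f (ew x).re ∂tau = (2 * π)⁻¹ * ∫ θ in (0 : ℝ)..(2 * π), f (cos θ) := by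
  rw [integral_tau (fun x => f (ew x).re)]
  simp [ew_re]

@[fun_prop]
lemma continuous_ew_re : Continuous fun x => (ew x).re := Complex.continuous_re.comp continuous_ew

lemma mom_step (n : ℕ) : ∫ x, (ew x).re ^ (n + 2) ∂tau = (n + 1) / (n + 2) * ∫ x, (ew x).re ^ n ∂tau := by
  rw [tau_re (fun y => y ^ (n + 2)), tau_re (fun y => y ^ n)]
  simp only [integral_cos_pow]
  simp
  ring

lemma mom0 : ∫ x, (ew x).re ^ 0 ∂tau = 1 := by simp
lemma mom2 : ∫ x, (ew x).re ^ 2 ∂tau = 1 / 2 := by rw [mom_step 0, mom0]; norm_num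
lemma mom4 : ∫ x, (ew x).re ^ 4 ∂tau = 3 / 8 := by rw [mom_step 2, mom2]; norm_num
lemma mom6 : ∫ x, (ew x).re ^ 6 ∂tau = 5 / 16 := by rw [mom_step 4, mom4]; norm_num
lemma mom8 : ∫ x, (ew x).re ^ 8 ∂tau = 35 / 128 := by rw [mom_step 6, mom6]; norm_num
lemma mom10 : ∫ x, (ew x).re ^ 10 ∂tau = 63 / 256 := by rw [mom_step 8, mom8]; norm_num

lemma mom_poly (a b c d e f : ℝ) :
    ∫ x, (a + b * (ew x).re ^ 2 + c * (ew x).re ^ 4 + d * (ew x).re ^ 6 + e * (ew x).re ^ 8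
      + f * (ew x).re ^ 10) ∂tau
      = a + b * (1 / 2) + c * (3 / 8) + d * (5 / 16) + e * (35 / 128) + f * (63 / 256) := by
  have hi : ∀ g : AddCircle (2 * π) → ℝ, Continuous g → MeasureTheory.Integrable g tau :=
    fun g hg => integrable_of_cont _ hg
  rw [MeasureTheory.integral_add (hi _ (by fun_prop)) (hi _ (by fun_prop)),
    MeasureTheory.integral_add (hi _ (by fun_prop)) (hi _ (by fun_prop)),
    MeasureTheory.integral_add (hi _ (by fun_prop)) (hi _ (by fun_prop)),
    MeasureTheory.integral_add (hi _ (by fun_prop)) (hi _ (by fun_prop)),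
    MeasureTheory.integral_add (hi _ (by fun_prop)) (hi _ (by fun_prop)),
    MeasureTheory.integral_const_mul, MeasureTheory.integral_const_mul,
    MeasureTheory.integral_const_mul, MeasureTheory.integral_const_mul,
    MeasureTheory.integral_const_mul, mom2, mom4, mom6, mom8, mom10]
  simp

/-- The Bessel function `J₀`. -/
noncomputable def J (t : ℝ) : ℝ := ∫ x, cos (t * (ew x).re) ∂tau
/-- The Bessel function `J₁`. -/
noncomputable def J1 (t : ℝ) : ℝ := ∫ x, (ew x).re * sin (t * (ew x).re) ∂tau

noncomputable def J2 (t : ℝ) : ℝ := ∫ x, (ew x).re ^ 2 * cos (t * (ew x).re) ∂tau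

lemma cont_int {f : AddCircle (2 * π) → ℝ} (hf : Continuous f) : MeasureTheory.Integrable f tau :=
  integrable_of_cont _ hf

lemma J_abs_le (t : ℝ) : |J t| ≤ 1 := by
  unfold J
  have := MeasureTheory.norm_integral_le_of_norm_le_const (μ := tau) (C := 1)
    (f := fun x => cos (t * (ew x).re)) (Filter.Eventually.of_forall fun x => by
      simpa using abs_cos_le_one _)
  simpa using this

lemma J_upper4 (t : ℝ) : J t ≤ 1 - t ^ 2 / 4 + t ^ 4 / 64 := by
  calc J t ≤ ∫ x, (1 + (-t^2/2) * (ew x).re ^ 2 + (t^4/24) * (ew x).re ^ 4 + 0 * (ew x).re ^ 6 + 0 * (ew x).re ^ 8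
      + 0 * (ew x).re ^ 10) ∂tau := by
        apply MeasureTheory.integral_mono (cont_int (by fun_prop)) (cont_int (by fun_prop))
        intro x
        have := even_ext (P := fun y => cos y ≤ 1 - y^2/2 + y^4/24) (fun x h => by
          simpa [Even.neg_pow (show Even 4 by decide)] using h) (fun x hx => by linarith [cos4 x hx]) (t * (ew x).re)
        simp only
        linarith
    _ = _ := by rw [mom_poly]; ring

lemma J_lower2 (t : ℝ) : 1 - t ^ 2 / 4 ≤ J t := by
  calc J t ≥ ∫ x, (1 + (-t^2/2) * (ew x).re ^ 2 + 0 * (ew x).re ^ 4 + 0 * (ew x).re ^ 6 + 0 * (ew x).re ^ 8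
      + 0 * (ew x).re ^ 10) ∂tau := by
        apply MeasureTheory.integral_mono (cont_int (by fun_prop)) (cont_int (by fun_prop))
        intro x
        have := even_ext (P := fun y => cos y ≥ 1 - y^2/2) (fun x h => by
          simpa using h) (fun x hx => by linarith [cos2 x hx]) (t * (ew x).re)
        simp only
        linarith
    _ = _ := by rw [mom_poly]; ring

lemma J_lower6 (t : ℝ) : 1 - t ^ 2 / 4 + t ^ 4 / 64 - t ^ 6 / 2304 ≤ J t := by
  calc J t ≥ ∫ x, (1 + (-t^2/2) * (ew x).re ^ 2 + (t^4/24) * (ew x).re ^ 4 + (-t^6/720) * (ew x).re ^ 6 + 0 * (ew x).re ^ 8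
      + 0 * (ew x).re ^ 10) ∂tau := by
        apply MeasureTheory.integral_mono (cont_int (by fun_prop)) (cont_int (by fun_prop))
        intro x
        have := even_ext (P := fun y => cos y ≥ 1 - y^2/2 + y^4/24 - y^6/720) (fun x h => by
          simpa [Even.neg_pow (show Even 4 by decide), Even.neg_pow (show Even 6 by decide)] using h) (fun x hx => by linarith [cos6 x hx]) (t * (ew x).re)
        simp only
        linarith
    _ = _ := by rw [mom_poly]; ring

lemma J_upper8 (t : ℝ) : J t ≤ 1 - t ^ 2 / 4 + t ^ 4 / 64 - t ^ 6 / 2304 + t ^ 8 / 147456 := by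
  calc J t ≤ ∫ x, (1 + (-t^2/2) * (ew x).re ^ 2 + (t^4/24) * (ew x).re ^ 4 + (-t^6/720) * (ew x).re ^ 6 + (t^8/40320) * (ew x).re ^ 8
      + 0 * (ew x).re ^ 10) ∂tau := by
        apply MeasureTheory.integral_mono (cont_int (by fun_prop)) (cont_int (by fun_prop))
        intro x
        have := even_ext (P := fun y => cos y ≤ 1 - y^2/2 + y^4/24 - y^6/720 + y^8/40320) (fun x h => by
          simpa [Even.neg_pow (show Even 4 by decide), Even.neg_pow (show Even 6 by decide), Even.neg_pow (show Even 8 by decide)] using h) (fun x hx => by linarith [cos8 x hx]) (t * (ew x).re)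
        simp only
        linarith
    _ = _ := by rw [mom_poly]; ring

lemma J_lower10 (t : ℝ) : 1 - t ^ 2 / 4 + t ^ 4 / 64 - t ^ 6 / 2304 + t ^ 8 / 147456 - t ^ 10 / 14745600 ≤ J t := by
  calc J t ≥ ∫ x, (1 + (-t^2/2) * (ew x).re ^ 2 + (t^4/24) * (ew x).re ^ 4 + (-t^6/720) * (ew x).re ^ 6 + (t^8/40320) * (ew x).re ^ 8
      + (-t^10/3628800) * (ew x).re ^ 10) ∂tau := by
        apply MeasureTheory.integral_mono (cont_int (by fun_prop)) (cont_int (by fun_prop))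
        intro x
        have := even_ext (P := fun y => cos y ≥ 1 - y^2/2 + y^4/24 - y^6/720 + y^8/40320 - y^10/3628800) (fun x h => by
          simpa [Even.neg_pow (show Even 4 by decide), Even.neg_pow (show Even 6 by decide), Even.neg_pow (show Even 8 by decide), Even.neg_pow (show Even 10 by decide)] using h) (fun x hx => by linarith [cos10 x hx]) (t * (ew x).re)
        simp only
        linarith
    _ = _ := by rw [mom_poly]; ring

lemma J1_upper : J1 3 ≤ 0.34003 := by
  have : 3 * J1 3 ≤ 1.02009 := by
    unfold J1
    rw [← MeasureTheory.integral_const_mul]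
    calc ∫ x, 3 * ((ew x).re * sin (3 * (ew x).re)) ∂tau ≤ ∫ x, (0 + (3^2) * (ew x).re ^ 2 + (-3^4/6) * (ew x).re ^ 4 + (3^6/120) * (ew x).re ^ 6 + (-3^8/5040) * (ew x).re ^ 8
        + (3^10/362880) * (ew x).re ^ 10) ∂tau := by
          apply MeasureTheory.integral_mono (cont_int (by fun_prop)) (cont_int (by fun_prop))
          intro x
          have := even_ext (P := fun y => y * sin y ≤ y^2 - y^4/6 + y^6/120 - y^8/5040 + y^10/362880) (fun x h => by
            simpa [Even.neg_pow (show Even 4 by decide), Even.neg_pow (show Even 6 by decide), Even.neg_pow (show Even 8 by decide), Even.neg_pow (show Even 10 by decide)] using h) (fun x hx => by nlinarith [mul_nonneg hx (sin9 x hx)]) (3 * (ew x).re)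
          simp only
          linarith
      _ ≤ _ := by rw [mom_poly]; norm_num
  linarith

lemma J1_lower : 0 ≤ J1 3 := by
  have : 0 ≤ 3 * J1 3 := by
    unfold J1
    rw [← MeasureTheory.integral_const_mul]
    calc ∫ x, 3 * ((ew x).re * sin (3 * (ew x).re)) ∂tau ≥ ∫ x, (0 + (3^2) * (ew x).re ^ 2 + (-3^4/6) * (ew x).re ^ 4 + (3^6/120) * (ew x).re ^ 6 + (-3^8/5040) * (ew x).re ^ 8
        + 0 * (ew x).re ^ 10) ∂tau := by
          apply MeasureTheory.integral_mono (cont_int (by fun_prop)) (cont_int (by fun_prop))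
          intro x
          have := even_ext (P := fun y => y * sin y ≥ y^2 - y^4/6 + y^6/120 - y^8/5040) (fun x h => by
            simpa [Even.neg_pow (show Even 4 by decide), Even.neg_pow (show Even 6 by decide), Even.neg_pow (show Even 8 by decide), Even.neg_pow (show Even 10 by decide)] using h) (fun x hx => by nlinarith [mul_nonneg hx (sin7 x hx)]) (3 * (ew x).re)
          simp only
          linarith
      _ ≥ _ := by rw [mom_poly]; norm_num
  linarith

lemma ew_re_abs (x) : |(ew x).re| ≤ 1 := by
  rw [← norm_ew x]; exact Complex.abs_re_le_norm _

lemma J_deriv (t : ℝ) : HasDerivAt J (-J1 t) t := by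
  have := (hasDerivAt_integral_of_dominated_loc_of_deriv_le (μ := tau) (x₀ := t) (s := Set.univ)
    (F := fun t x => cos (t * (ew x).re)) (F' := fun t x => -((ew x).re * sin (t * (ew x).re)))
    (bound := fun _ => 1) Filter.univ_mem
    (Filter.Eventually.of_forall fun s => (cont_int (by fun_prop)).aestronglyMeasurable)
    (cont_int (by fun_prop)) (cont_int (by fun_prop)).aestronglyMeasurable
    (Filter.Eventually.of_forall fun x s _ => by
      rw [norm_neg, norm_mul]
      exact mul_le_one₀ (ew_re_abs x) (norm_nonneg _) (abs_sin_le_one _))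
    (MeasureTheory.integrable_const _)
    (Filter.Eventually.of_forall fun x s _ => by
      refine HasDerivAt.congr_deriv ((((hasDerivAt_id s).mul_const (ew x).re).cos)) ?_
      simp; ring)).2
  rw [MeasureTheory.integral_neg] at this
  exact this

lemma J1_deriv (t : ℝ) : HasDerivAt J1 (J2 t) t := by
  have := (hasDerivAt_integral_of_dominated_loc_of_deriv_le (μ := tau) (x₀ := t) (s := Set.univ)
    (F := fun t x => (ew x).re * sin (t * (ew x).re)) (F' := fun t x => ((ew x).re ^ 2 * cos (t * (ew x).re)))
    (bound := fun _ => 1) Filter.univ_mem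
    (Filter.Eventually.of_forall fun s => (cont_int (by fun_prop)).aestronglyMeasurable)
    (cont_int (by fun_prop)) (cont_int (by fun_prop)).aestronglyMeasurable
    (Filter.Eventually.of_forall fun x s _ => by
      rw [norm_mul, norm_pow]
      exact mul_le_one₀ (pow_le_one₀ (norm_nonneg _) (ew_re_abs x)) (norm_nonneg _) (abs_cos_le_one _))
    (MeasureTheory.integrable_const _)
    (Filter.Eventually.of_forall fun x s _ => by
      refine HasDerivAt.congr_deriv ((((hasDerivAt_id s).mul_const (ew x).re).sin.const_mul (ew x).re)) ?_
      simp; ring)).2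
  exact this

@[fun_prop]
lemma J_cont : Continuous J := continuous_iff_continuousAt.2 fun t => (J_deriv t).continuousAt

lemma J_ode (t : ℝ) : t * (J t - J2 t) = J1 t := by
  have h : ∫ θ in (0 : ℝ)..(2 * π), (cos θ * sin (t * cos θ) - t * (cos (t * cos θ) - cos θ ^ 2 * cos (t * cos θ))) = 0 := by
    rw [intervalIntegral.integral_eq_sub_of_hasDerivAt (f := fun θ => sin θ * sin (t * cos θ))]
    · simp
    · intro θ _
      refine HasDerivAt.congr_deriv ((hasDerivAt_sin θ).mul (((hasDerivAt_cos θ).const_mul t).sin)) ?_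
      have : cos θ ^ 2 = 1 - sin θ ^ 2 := by rw [← sin_sq_add_cos_sq θ]; ring
      rw [this]; ring
    · exact Continuous.intervalIntegrable (by fun_prop) _ _
  have h2 := tau_re (fun y => y * sin (t * y) - t * (cos (t * y) - y ^ 2 * cos (t * y)))
  rw [h, mul_zero] at h2
  rw [MeasureTheory.integral_sub (cont_int (by fun_prop)) (cont_int (by fun_prop)),
    MeasureTheory.integral_const_mul,
    MeasureTheory.integral_sub (cont_int (by fun_prop)) (cont_int (by fun_prop))] at h2
  unfold J J1 J2
  linarith

lemma J_energy (t : ℝ) (ht : 3 ≤ t) : J t ^ 2 + J1 t ^ 2 ≤ J 3 ^ 2 + J1 3 ^ 2 := by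
  have hd : ∀ s, HasDerivAt (fun s => J s ^ 2 + J1 s ^ 2) (-2 * J1 s * (J s - J2 s)) s := fun s => by
    refine HasDerivAt.congr_deriv (((J_deriv s).pow 2).add ((J1_deriv s).pow 2)) ?_
    simp; ring
  have : AntitoneOn (fun s => J s ^ 2 + J1 s ^ 2) (Set.Ici 3) := by
    apply antitoneOn_of_deriv_nonpos (convex_Ici 3)
    · exact fun y _ => (hd y).continuousAt.continuousWithinAt
    · exact fun y _ => (hd y).differentiableAt.differentiableWithinAt
    · intro y hy
      rw [(hd y).deriv]
      rw [interior_Ici] at hy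
      have hy0 : (3 : ℝ) < y := hy
      have h := J_ode y
      have h3 : J y - J2 y = J1 y / y := by
        rw [← h]; field_simp
      rw [h3]
      have : 0 ≤ J1 y ^ 2 / y := by positivity
      calc _ = -2 * (J1 y ^ 2 / y) := by ring
        _ ≤ 0 := by linarith
  exact this Set.self_mem_Ici ht ht

/-- The value `exp(-c²/4)` with `c = 1.84`. -/
noncomputable def Mc : ℝ := exp (-(1.84 ^ 2 / 4))

lemma Mc_lower : 0.4285 ≤ Mc := by
  unfold Mc
  rw [Real.exp_neg]
  rw [le_inv_comm₀ (by norm_num) (exp_pos _)]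
  have : rexp (1.84 ^ 2 / 4) = rexp (0.2116) ^ 4 := by
    rw [← Real.exp_nat_mul]; norm_num
  rw [this]
  have h := Real.exp_bound' (x := 0.2116) (by norm_num) (by norm_num) (n := 5) (by norm_num)
  simp [Finset.sum_range_succ, Nat.factorial] at h
  calc rexp (0.2116) ^ 4 ≤ (1.2356545) ^ 4 := by
        apply pow_le_pow_left₀ (exp_pos _).le
        norm_num at h ⊢
        linarith
    _ ≤ _ := by norm_num

lemma J_le_exp (u : ℝ) (h0 : 0 ≤ u) (h : u ≤ 1.84) : |J u| ≤ exp (-(u ^ 2 / 4)) := by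
  have hx : u ^ 2 / 4 ≤ 0.85 := by nlinarith
  have hx0 : 0 ≤ u ^ 2 / 4 := by positivity
  set x := u ^ 2 / 4 with hxd
  rw [abs_le]
  constructor
  · have := J_lower2 u
    have := exp_pos (-x)
    linarith
  · have h1 := J_upper4 u
    have h2 : J u ≤ 1 - x + x ^ 2 / 4 := by rw [hxd]; linarith
    have h3 : 0 ≤ exp (-x) - (1 - x + x ^ 2 / 2 - x ^ 3 / 6) := by
      have e1 : ∀ y : ℝ, 0 ≤ y → 0 ≤ exp (-y) - (1 - y) := fun y _ => by
        have := Real.add_one_le_exp (-y); linarith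
      have e2 : ∀ y : ℝ, 0 ≤ y → 0 ≤ (1 - y + y ^ 2 / 2) - exp (-y) :=
        mono_aux (f' := fun y => exp (-y) - (1 - y)) (fun y => by
          refine HasDerivAt.congr_deriv ((((hasDerivAt_id y).const_sub 1).add (((hasDerivAt_id y).pow 2).div_const 2)).sub
            (hasDerivAt_neg y).exp) ?_
          simp; ring) (by simp) e1
      exact mono_aux (f := fun y => exp (-y) - (1 - y + y ^ 2 / 2 - y ^ 3 / 6)) (f' := fun y => (1 - y + y ^ 2 / 2) - exp (-y)) (fun y => by
          refine HasDerivAt.congr_deriv ((hasDerivAt_neg y).exp.sub ((((hasDerivAt_id y).const_sub 1).add (((hasDerivAt_id y).pow 2).div_const 2)).sub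
            (((hasDerivAt_id y).pow 3).div_const 6))) ?_
          simp; ring) (by simp) e2 x hx0
    nlinarith [mul_nonneg hx0 (mul_nonneg hx0 (sub_nonneg.2 hx))]

lemma J_le_Mc (u : ℝ) (h : 1.84 ≤ u) : |J u| ≤ Mc := by
  refine le_trans ?_ Mc_lower
  rcases le_total u 3 with h3 | h3
  · have hw : ∃ w, w = u ^ 2 := ⟨_, rfl⟩
    obtain ⟨w, hw⟩ := hw
    have w1 : 3.3856 ≤ w := by rw [hw]; nlinarith
    have w2 : w ≤ 9 := by rw [hw]; nlinarith
    rw [abs_le]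
    constructor
    · have := J_lower6 u
      have e : 1 - u ^ 2 / 4 + u ^ 4 / 64 - u ^ 6 / 2304 = 1 - w / 4 + w ^ 2 / 64 - w ^ 3 / 2304 := by rw [hw]; ring
      rw [e] at this
      have : 0 ≤ (9 - w) * ((w - 6) ^ 2 + 1) := by
        apply mul_nonneg <;> nlinarith [sq_nonneg (w - 6)]
      nlinarith [sq_nonneg (w - 6)]
    · have := J_upper8 u
      have e : 1 - u ^ 2 / 4 + u ^ 4 / 64 - u ^ 6 / 2304 + u ^ 8 / 147456 = 1 - w / 4 + w ^ 2 / 64 - w ^ 3 / 2304 + w ^ 4 / 147456 := by rw [hw]; ring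
      rw [e] at this
      nlinarith [mul_nonneg (sub_nonneg.2 w1) (sub_nonneg.2 w2), mul_nonneg (mul_nonneg (sub_nonneg.2 w1) (sub_nonneg.2 w2)) (sub_nonneg.2 w2), mul_nonneg (mul_nonneg (sub_nonneg.2 w1) (sub_nonneg.2 w2)) (sub_nonneg.2 w1), sq_nonneg (w-6)]
  · have h1 := J_energy u h3
    have h2 := J_lower10 3
    have h4 := J_upper8 3
    have h5 := J1_upper
    have h6 := J1_lower
    norm_num at h2 h4
    apply abs_le_of_sq_le_sq _ (by norm_num)
    have : J 3 ^ 2 ≤ 0.2603 ^ 2 := by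
      apply sq_le_sq'
      · linarith
      · linarith
    nlinarith [sq_nonneg (J1 u)]


open MeasureTheory in
lemma integ_crit {f : ℝ → ℝ} (hm : Measurable f) (C : ℝ) (h1 : ∀ t, 0 < t → |f t| ≤ C * t ^ 2)
    (h2 : ∀ t, 0 < t → |f t| ≤ C) : IntegrableOn (fun t => f t / t ^ 2) (Set.Ioi 0) := by
  have hb : Integrable (fun t : ℝ => (2 * C) * (1 + t ^ 2)⁻¹) := integrable_inv_one_add_sq.const_mul _
  refine Integrable.mono' hb.integrableOn ((hm.div (by fun_prop)).aestronglyMeasurable) ?_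
  refine (ae_restrict_iff' measurableSet_Ioi).2 (Filter.Eventually.of_forall fun t ht => ?_)
  have ht0 : (0 : ℝ) < t := ht
  rw [Real.norm_eq_abs, abs_div, abs_of_pos (pow_pos ht0 2), ← div_eq_mul_inv, div_le_div_iff₀ (by positivity) (by positivity)]
  nlinarith [h1 t ht, h2 t ht, pow_pos ht0 2, mul_le_mul_of_nonneg_right (h2 t ht) (pow_pos ht0 2).le]

/-- The integral `∫₀^∞ (1 - cos t)/t² dt`. -/
noncomputable def I0 : ℝ := ∫ t in Set.Ioi (0 : ℝ), (1 - cos t) / t ^ 2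

lemma one_sub_cos_le (y : ℝ) : |1 - cos y| ≤ y ^ 2 / 2 := by
  rw [abs_of_nonneg (by linarith [cos_le_one y])]
  have := Real.one_sub_sq_div_two_le_cos (x := y)
  linarith

lemma one_sub_cos_le2 (y : ℝ) : |1 - cos y| ≤ 2 := by
  rw [abs_of_nonneg (by linarith [cos_le_one y])]
  linarith [neg_one_le_cos y]

open MeasureTheory in
lemma scale_Ioi (f : ℝ → ℝ) (b : ℝ) (hb : 0 < b) :
    ∫ t in Set.Ioi (0 : ℝ), f (b * t) / t ^ 2 = b * ∫ t in Set.Ioi (0 : ℝ), f t / t ^ 2 := by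
  have := integral_comp_mul_left_Ioi (fun t => f t / t ^ 2) 0 hb
  rw [mul_zero] at this
  have h2 : ∀ t, f (b * t) / t ^ 2 = b ^ 2 * (f (b * t) / (b * t) ^ 2) := by
    intro t
    rcases eq_or_ne t 0 with h | h
    · simp [h]
    · field_simp
  simp_rw [h2]
  rw [integral_const_mul, this, smul_eq_mul]
  field_simp

open MeasureTheory in
lemma scale_Ioi_int (f : ℝ → ℝ) (b : ℝ) (hb : 0 < b) (hf : IntegrableOn (fun t => f t / t ^ 2) (Set.Ioi 0)) :
    IntegrableOn (fun t => f (b * t) / t ^ 2) (Set.Ioi 0) := by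
  have := (integrableOn_Ioi_comp_mul_left_iff (fun t => f t / t ^ 2) 0 hb).2 (by simpa using hf)
  have h2 : (fun t => f (b * t) / t ^ 2) = fun t => b ^ 2 * (f (b * t) / (b * t) ^ 2) := by
    ext t
    rcases eq_or_ne t 0 with h | h
    · simp [h]
    · field_simp
  rw [h2]
  exact this.const_mul _

open MeasureTheory in
lemma cos_int : IntegrableOn (fun t => (1 - cos t) / t ^ 2) (Set.Ioi 0) :=
  integ_crit (by fun_prop) 2 (fun t ht => (one_sub_cos_le t).trans (by nlinarith [pow_pos ht 2]))
    (fun t _ => one_sub_cos_le2 t)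

open MeasureTheory in
lemma cos_int_x (x : ℝ) : IntegrableOn (fun t => (1 - cos (x * t)) / t ^ 2) (Set.Ioi 0) ∧
    ∫ t in Set.Ioi (0 : ℝ), (1 - cos (x * t)) / t ^ 2 = I0 * |x| := by
  rcases eq_or_ne x 0 with h | h
  · simp [h]
  have h0 : 0 < |x| := abs_pos.2 h
  have he : ∀ t, cos (x * t) = cos (|x| * t) := by
    intro t
    rcases abs_choice x with h | h <;> rw [h]
    rw [neg_mul, cos_neg]
  simp_rw [he]
  refine ⟨scale_Ioi_int (fun t => 1 - cos t) _ h0 cos_int, ?_⟩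
  rw [scale_Ioi (fun t => 1 - cos t) _ h0, I0, mul_comm]

open MeasureTheory in
lemma fub {Ω : Type*} [MeasurableSpace Ω] (μ : Measure Ω) [SFinite μ] (X : Ω → ℝ) (hX : Measurable X)
    (hi : Integrable X μ) :
    IntegrableOn (fun t => ∫ ω, (1 - cos (X ω * t)) / t ^ 2 ∂μ) (Set.Ioi 0) ∧
    ∫ t in Set.Ioi (0 : ℝ), ∫ ω, (1 - cos (X ω * t)) / t ^ 2 ∂μ = I0 * ∫ ω, |X ω| ∂μ := by
  have hp : Integrable (fun p : Ω × ℝ => (1 - cos (X p.1 * p.2)) / p.2 ^ 2)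
      (μ.prod (volume.restrict (Set.Ioi 0))) := by
    rw [integrable_prod_iff]
    · refine ⟨Filter.Eventually.of_forall fun ω => (cos_int_x (X ω)).1, ?_⟩
      have : ∀ ω, ∫ t in Set.Ioi (0 : ℝ), ‖(1 - cos (X ω * t)) / t ^ 2‖ = I0 * |X ω| := by
        intro ω
        rw [← (cos_int_x (X ω)).2]
        congr 1
        ext t
        rw [Real.norm_of_nonneg]
        have := cos_le_one (X ω * t)
        apply div_nonneg <;> [linarith; positivity]
      simp only [this]
      exact hi.abs.const_mul _
    · apply Measurable.aestronglyMeasurable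
      fun_prop
  refine ⟨hp.integral_prod_right, ?_⟩
  rw [← integral_integral_swap (f := fun ω t => (1 - cos (X ω * t)) / t ^ 2) hp]
  simp_rw [(cos_int_x _).2]
  rw [integral_const_mul]

open MeasureTheory Filter Topology in
lemma gauss_int (s : ℝ) (hs : 0 < s) :
    IntegrableOn (fun t => (1 - exp (-s * t ^ 2)) / t ^ 2) (Set.Ioi 0) ∧
    ∫ t in Set.Ioi (0 : ℝ), (1 - exp (-s * t ^ 2)) / t ^ 2 = √(π * s) := by
  have hb : ∀ t : ℝ, 0 ≤ 1 - exp (-s * t ^ 2) ∧ 1 - exp (-s * t ^ 2) ≤ s * t ^ 2 := by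
    intro t
    have h1 : exp (-s * t ^ 2) ≤ 1 := Real.exp_le_one_iff.2 (by nlinarith [sq_nonneg t])
    have h2 := Real.add_one_le_exp (-s * t ^ 2)
    constructor <;> linarith
  have hI : IntegrableOn (fun t => (1 - exp (-s * t ^ 2)) / t ^ 2) (Set.Ioi 0) := by
    apply integ_crit (by fun_prop) (1 + s)
    · intro t ht
      rw [abs_of_nonneg (hb t).1]
      nlinarith [(hb t).2, sq_nonneg t]
    · intro t ht
      rw [abs_of_nonneg (hb t).1]
      have := exp_pos (-s * t ^ 2)
      linarith
  refine ⟨hI, ?_⟩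
  have hG : IntegrableOn (fun t => 2 * s * exp (-s * t ^ 2)) (Set.Ioi 0) :=
    ((integrable_exp_neg_mul_sq hs).const_mul _).integrableOn
  have key := integral_Ioi_of_hasDerivAt_of_tendsto (a := (0 : ℝ)) (m := 0)
    (f := fun t => -(1 - exp (-s * t ^ 2)) / t)
    (f' := fun t => (1 - exp (-s * t ^ 2)) / t ^ 2 - 2 * s * exp (-s * t ^ 2)) ?_ ?_ (hI.sub hG) ?_
  · rw [integral_sub hI hG] at key
    rw [integral_const_mul, integral_gaussian_Ioi] at key
    simp at key
    have e : 2 * s * (√(π / s) / 2) = √(π * s) := by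
      have : √(π * s) = √(s ^ 2 * (π / s)) := by
        congr 1; field_simp
      rw [this, Real.sqrt_mul (by positivity), Real.sqrt_sq hs.le]; ring
    have e2 : ∀ t, 1 - exp (-s * t ^ 2) = 1 - exp (-(s * t ^ 2)) := fun t => by rw [neg_mul]
    simp only [e2]
    linarith
  · rw [ContinuousWithinAt]
    simp only [div_zero]
    refine squeeze_zero_norm' (a := fun t => s * |t|) (Eventually.of_forall fun t => ?_) ?_
    · rw [norm_div, norm_neg, Real.norm_of_nonneg (hb t).1, Real.norm_eq_abs]
      rcases eq_or_ne t 0 with h | h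
      · simp [h]
      · rw [div_le_iff₀ (abs_pos.2 h), mul_assoc, ← sq, sq_abs]
        exact (hb t).2
    · have : Tendsto (fun t : ℝ => s * |t|) (𝓝 0) (𝓝 (s * |0|)) := Continuous.tendsto (by fun_prop) 0
      simp only [abs_zero, mul_zero] at this
      exact this.mono_left nhdsWithin_le_nhds
  · intro t ht
    have ht0 : (0 : ℝ) < t := ht
    refine HasDerivAt.congr_deriv (((((((hasDerivAt_id t).pow 2).const_mul (-s)).exp).const_sub 1).neg).div (hasDerivAt_id t) ht0.ne') ?_
    simp
    field_simp
    ring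
  · refine squeeze_zero_norm' (a := fun t => t⁻¹) ?_ tendsto_inv_atTop_zero
    filter_upwards [eventually_gt_atTop 0] with t ht
    rw [norm_div, norm_neg, Real.norm_of_nonneg (hb t).1, Real.norm_of_nonneg ht.le, ← one_div]
    have := exp_pos (-s * t ^ 2)
    gcongr
    linarith

open MeasureTheory ProbabilityTheory in
lemma gauss_cos (t : ℝ) : ∫ x, cos (x * t) ∂(gaussianReal 0 1) = exp (-(1/2) * t ^ 2) := by
  have h := charFun_gaussianReal (μ := 0) (v := 1) t
  rw [charFun_apply_real] at h
  have h2 := congrArg Complex.re h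
  have hi : Integrable (fun x : ℝ => Complex.exp (t * x * Complex.I)) (gaussianReal 0 1) := by
    refine Integrable.of_bound (C := 1) (by fun_prop) (Filter.Eventually.of_forall fun x => ?_)
    rw [← Complex.ofReal_mul, Complex.norm_exp_ofReal_mul_I]
  rw [show (∫ x : ℝ, Complex.exp (t * x * Complex.I) ∂(gaussianReal 0 1)).re
    = ∫ x : ℝ, (Complex.exp (t * x * Complex.I)).re ∂(gaussianReal 0 1) from
      (integral_re hi).symm] at h2
  have e1 : ∀ x : ℝ, (Complex.exp (t * x * Complex.I)).re = cos (x * t) := by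
    intro x
    rw [← Complex.ofReal_mul, Complex.exp_ofReal_mul_I_re, mul_comm]
  simp only [e1] at h2
  rw [h2]
  have : (t * (0:ℝ) * Complex.I - (1 : NNReal) * t ^ 2 / 2 : ℂ) = ((-(1/2) * t ^ 2 : ℝ) : ℂ) := by
    push_cast; ring
  rw [this, Complex.exp_ofReal_re]

open MeasureTheory ProbabilityTheory in
lemma gauss_abs : ∫ x, |x| ∂(gaussianReal 0 1) = √(2 / π) := by
  rw [integral_gaussianReal_eq_integral_smul (by norm_num)]
  have e : ∀ x : ℝ, gaussianPDFReal 0 1 x • |x| = (fun y => (√(2 * π))⁻¹ * (y ^ (1:ℝ) * exp (-(1/2) * y ^ (2:ℝ)))) |x| := by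
    intro x
    simp [gaussianPDFReal]
    ring_nf
  simp only [e]
  rw [integral_comp_abs (f := fun y => (√(2 * π))⁻¹ * (y ^ (1:ℝ) * exp (-(1/2) * y ^ (2:ℝ)))), integral_const_mul, integral_rpow_mul_exp_neg_mul_rpow (by norm_num) (by norm_num) (by norm_num)]
  norm_num
  have : √π * √π = π := Real.mul_self_sqrt pi_pos.le
  have h2 : √2 * √2 = 2 := Real.mul_self_sqrt (by norm_num)
  have : 0 < √π := Real.sqrt_pos.2 pi_pos
  field_simp
  nlinarith

open MeasureTheory ProbabilityTheory in
lemma I0_eq : I0 = π / 2 := by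
  have hi : Integrable (fun x : ℝ => x) (gaussianReal 0 1) := 
    (memLp_one_iff_integrable).1 (memLp_id_gaussianReal 1)
  have h := (fub (gaussianReal 0 1) (fun x => x) measurable_id hi).2
  rw [gauss_abs] at h
  have e : ∀ t : ℝ, ∫ x, (1 - cos (x * t)) / t ^ 2 ∂(gaussianReal 0 1) = (1 - exp (-(1/2) * t ^ 2)) / t ^ 2 := by
    intro t
    rw [integral_div, integral_sub (integrable_const _), gauss_cos]
    · simp
    · exact Integrable.of_bound (C := 1) (by fun_prop) (Filter.Eventually.of_forall fun x => abs_cos_le_one _)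
  simp only [e] at h
  rw [(gauss_int (1/2) (by norm_num)).2] at h
  have h1 : √(π * (1/2)) = (π / 2) * √(2 / π) := by
    rw [Real.sqrt_eq_iff_mul_self_eq (by positivity) (by positivity)]
    have : √(2 / π) * √(2 / π) = 2 / π := Real.mul_self_sqrt (by positivity)
    have h3 : (π / 2) ^ 2 * (√(2 / π) * √(2 / π)) = π * (1 / 2) := by rw [this]; field_simp
    first | linarith | (rw [← h3]; ring)
  rw [h1] at h
  exact (mul_right_cancel₀ (by positivity) h).symm


lemma tau_shift {E : Type*} [NormedAddCommGroup E] [NormedSpace ℝ E] (f : ℂ → E) (z : ℂ) (hz : ‖z‖ = 1) :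
    ∫ x, f (ew x * z) ∂tau = ∫ x, f (ew x) ∂tau := by
  obtain ⟨y, rfl⟩ := exists_ew z hz
  simp_rw [← ew_add]
  exact MeasureTheory.integral_add_right_eq_self (fun x => f (ew x)) y

lemma tau_rot {E : Type*} [NormedAddCommGroup E] [NormedSpace ℝ E] (f : ℂ → E) (a : ℂ) :
    ∫ x, f (a * ew x) ∂tau = ∫ x, f (‖a‖ * ew x) ∂tau := by
  rcases eq_or_ne a 0 with h | h
  · simp [h]
  have hn : (‖a‖ : ℂ) ≠ 0 := by simpa using h
  rw [← tau_shift (fun w => f (‖a‖ * w)) (a / ‖a‖) (by simp [h])]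
  congr 1
  ext x
  congr 1
  field_simp

lemma tau_sin (s : ℝ) : ∫ x, sin (s * (ew x).re) ∂tau = 0 := by
  have := tau_shift (fun w => sin (s * w.re)) (-1) (by simp)
  simp [MeasureTheory.integral_neg] at this
  linarith

lemma tau_cexp (a : ℂ) (t : ℝ) :
    ∫ x, Complex.exp (((a * ew x).re * t : ℝ) * Complex.I) ∂tau = (J (‖a‖ * t) : ℂ) := by
  rw [tau_rot (fun w => Complex.exp ((w.re * t : ℝ) * Complex.I))]
  have e : ∀ x, Complex.exp ((((‖a‖ * ew x).re * t : ℝ)) * Complex.I)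
      = ((cos (‖a‖ * t * (ew x).re) : ℝ) : ℂ) + ((sin (‖a‖ * t * (ew x).re) : ℝ) : ℂ) * Complex.I := by
    intro x
    rw [Complex.exp_mul_I, ← Complex.ofReal_cos, ← Complex.ofReal_sin]
    simp only [Complex.re_ofReal_mul]
    ring_nf
  simp only [e]
  rw [MeasureTheory.integral_add (integrable_of_cont _ (by fun_prop)) (integrable_of_cont _ (by fun_prop)),
    MeasureTheory.integral_mul_const, integral_complex_ofReal, integral_complex_ofReal, tau_sin]
  simp [J]

lemma stei_cos {ι : Type*} [Fintype ι] (a : ι → ℂ) (t : ℝ) :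
    ∫ ω, cos ((∑ j, a j * ew (ω j)).re * t) ∂(stei ι) = ∏ j, J (‖a j‖ * t) := by
  have h : ∫ ω, Complex.exp ((((∑ j, a j * ew (ω j)).re * t : ℝ)) * Complex.I) ∂(stei ι)
      = ((∏ j, J (‖a j‖ * t) : ℝ) : ℂ) := by
    have e : ∀ ω : ι → AddCircle (2 * π), Complex.exp ((((∑ j, a j * ew (ω j)).re * t : ℝ)) * Complex.I)
        = ∏ j, Complex.exp (((a j * ew (ω j)).re * t : ℝ) * Complex.I) := by
      intro ω
      rw [← Complex.exp_sum]
      congr 1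
      rw [Complex.re_sum, Finset.sum_mul]
      push_cast
      rw [Finset.sum_mul]
    simp only [e]
    rw [MeasureTheory.integral_fintype_prod_eq_prod (f := fun j x => Complex.exp (((a j * ew x).re * t : ℝ) * Complex.I))]
    rw [Complex.ofReal_prod]
    exact Finset.prod_congr rfl fun j _ => tau_cexp (a j) t
  have h2 := congrArg Complex.re h
  have hi : MeasureTheory.Integrable (fun ω : ι → AddCircle (2 * π) => Complex.exp ((((∑ j, a j * ew (ω j)).re * t : ℝ)) * Complex.I)) (stei ι) :=
    integrable_of_cont _ (by
      have : Continuous fun ω : ι → AddCircle (2 * π) => (∑ j, a j * ew (ω j)).re :=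
        Complex.continuous_re.comp (by fun_prop)
      fun_prop)
  rw [show (∫ ω, Complex.exp ((((∑ j, a j * ew (ω j)).re * t : ℝ)) * Complex.I) ∂(stei ι)).re
    = ∫ ω, (Complex.exp ((((∑ j, a j * ew (ω j)).re * t : ℝ)) * Complex.I)).re ∂(stei ι) from
      (integral_re hi).symm] at h2
  simp only [Complex.exp_ofReal_mul_I_re, Complex.ofReal_re] at h2
  exact h2

lemma tau_abs : ∫ x, |(ew x).re| ∂tau = 2 / π := by
  rw [tau_re (fun y => |y|)]
  have hi : ∀ a b, IntervalIntegrable (fun θ => |cos θ|) MeasureTheory.volume a b := fun a b =>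
    Continuous.intervalIntegrable (by fun_prop) _ _
  have p := pi_pos
  rw [← intervalIntegral.integral_add_adjacent_intervals (hi 0 (π / 2)) (hi _ (2 * π)),
    ← intervalIntegral.integral_add_adjacent_intervals (hi (π / 2) (π + π / 2)) (hi _ (2 * π))]
  have h1 : ∫ θ in (0 : ℝ)..(π / 2), |cos θ| = 1 := by
    rw [intervalIntegral.integral_congr (g := cos)]
    · simp
    · intro θ hθ
      rw [Set.uIcc_of_le (by linarith)] at hθ
      exact abs_of_nonneg (cos_nonneg_of_mem_Icc ⟨by linarith [hθ.1], hθ.2⟩)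
  have h2 : ∫ θ in (π / 2)..(π + π / 2), |cos θ| = 2 := by
    rw [intervalIntegral.integral_congr (g := fun θ => - cos θ)]
    · rw [intervalIntegral.integral_neg, integral_cos, add_comm, sin_add_pi]
      simp; norm_num
    · intro θ hθ
      rw [Set.uIcc_of_le (by linarith)] at hθ
      exact abs_of_nonpos (cos_nonpos_of_pi_div_two_le_of_le hθ.1 hθ.2)
  have h3 : ∫ θ in (π + π / 2)..(2 * π), |cos θ| = 1 := by
    rw [intervalIntegral.integral_congr (g := cos)]
    · rw [integral_cos, add_comm π, sin_add_pi]
      simp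
    · intro θ hθ
      rw [Set.uIcc_of_le (by linarith)] at hθ
      refine abs_of_nonneg ?_
      rw [← cos_sub_two_pi]
      exact cos_nonneg_of_mem_Icc ⟨by linarith [hθ.1], by linarith [hθ.2]⟩
  rw [h1, h2, h3]
  field_simp
  norm_num

lemma tau_abs_mul (z : ℂ) : ∫ x, |(z * ew x).re| ∂tau = 2 / π * ‖z‖ := by
  rw [tau_rot (fun w => |w.re|)]
  simp only [Complex.re_ofReal_mul, abs_mul, abs_norm]
  rw [MeasureTheory.integral_const_mul, tau_abs]
  ring

@[fun_prop]
lemma cont_sum {ι : Type*} [Fintype ι] (a : ι → ℂ) :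
    Continuous fun ω : ι → AddCircle (2 * π) => ∑ j, a j * ew (ω j) := by fun_prop

lemma stei_abs {ι : Type*} [Fintype ι] (a : ι → ℂ) :
    ∫ ω, |(∑ j, a j * ew (ω j)).re| ∂(stei ι) = 2 / π * ∫ ω, ‖∑ j, a j * ew (ω j)‖ ∂(stei ι) := by
  have hc : Continuous fun ω : ι → AddCircle (2 * π) => |(∑ j, a j * ew (ω j)).re| :=
    (Complex.continuous_re.comp (cont_sum a)).abs
  rw [avg_rot (fun φ _ => φ) (by fun_prop) hc, ← MeasureTheory.integral_const_mul]
  congr 1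
  ext ω
  rw [← tau_abs_mul]
  congr 1
  ext x
  congr 2
  rw [Finset.sum_mul]
  refine Finset.sum_congr rfl fun j _ => ?_
  rw [Pi.add_apply, ew_add]; ring

open MeasureTheory in
lemma stei_rep {ι : Type*} [Fintype ι] (a : ι → ℂ) :
    IntegrableOn (fun t => (1 - ∏ j, J (‖a j‖ * t)) / t ^ 2) (Set.Ioi 0) ∧
    ∫ t in Set.Ioi (0 : ℝ), (1 - ∏ j, J (‖a j‖ * t)) / t ^ 2 = ∫ ω, ‖∑ j, a j * ew (ω j)‖ ∂(stei ι) := by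
  have hc : Continuous fun ω : ι → AddCircle (2 * π) => (∑ j, a j * ew (ω j)).re :=
    (Complex.continuous_re.comp (cont_sum a))
  have h := fub (stei ι) (fun ω => (∑ j, a j * ew (ω j)).re) hc.measurable (integrable_of_cont _ hc)
  have e : ∀ t : ℝ, ∫ ω, (1 - cos ((∑ j, a j * ew (ω j)).re * t)) / t ^ 2 ∂(stei ι) = (1 - ∏ j, J (‖a j‖ * t)) / t ^ 2 := by
    intro t
    rw [integral_div, integral_sub (integrable_const _) (integrable_of_cont _ (by fun_prop)), stei_cos]
    simp
  simp only [e] at h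
  refine ⟨h.1, ?_⟩
  rw [h.2, stei_abs, I0_eq]
  have := pi_pos
  field_simp

lemma norm_one_add_exp (θ : ℝ) : ‖1 + Complex.exp (θ * Complex.I)‖ = 2 * |cos (θ / 2)| := by
  have : 1 + Complex.exp (θ * Complex.I) = Complex.exp ((θ / 2 : ℝ) * Complex.I) * ((2 * cos (θ / 2) : ℝ) : ℂ) := by
    have h : Complex.exp (θ * Complex.I) = Complex.exp ((θ / 2 : ℝ) * Complex.I) * Complex.exp ((θ / 2 : ℝ) * Complex.I) := by
      rw [← Complex.exp_add]; congr 1; push_cast; ring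
    push_cast
    rw [Complex.two_cos]
    rw [mul_add, ← Complex.exp_add, ← Complex.exp_add]
    have e1 : (θ / 2 * Complex.I + θ / 2 * Complex.I : ℂ) = θ * Complex.I := by ring
    have e2 : (θ / 2 * Complex.I + -(θ / 2) * Complex.I : ℂ) = 0 := by ring
    rw [e1, e2, Complex.exp_zero, add_comm]
  rw [this, norm_mul, Complex.norm_exp_ofReal_mul_I, Complex.norm_real]
  simp

lemma tau_one_add : ∫ x, ‖1 + ew x‖ ∂tau = 4 / π := by
  rw [integral_tau (fun x => ‖1 + ew x‖)]
  simp_rw [ew_coe, norm_one_add_exp]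
  have p := pi_pos
  rw [intervalIntegral.integral_const_mul]
  have := intervalIntegral.integral_comp_div (a := 0) (b := 2 * π) (fun θ => |cos θ|) (c := 2) (by norm_num)
  rw [this]
  have hi : ∀ a b, IntervalIntegrable (fun θ => |cos θ|) MeasureTheory.volume a b := fun a b =>
    Continuous.intervalIntegrable (by fun_prop) _ _
  have e : (2 * π / 2) = π := by ring
  rw [zero_div, e, ← intervalIntegral.integral_add_adjacent_intervals (hi 0 (π / 2)) (hi _ π)]
  have h1 : ∫ θ in (0 : ℝ)..(π / 2), |cos θ| = 1 := by
    rw [intervalIntegral.integral_congr (g := cos)]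
    · simp
    · intro θ hθ
      rw [Set.uIcc_of_le (by linarith)] at hθ
      exact abs_of_nonneg (cos_nonneg_of_mem_Icc ⟨by linarith [hθ.1], hθ.2⟩)
  have h2 : ∫ θ in (π / 2)..π, |cos θ| = 1 := by
    rw [intervalIntegral.integral_congr (g := fun θ => - cos θ)]
    · rw [intervalIntegral.integral_neg, integral_cos]
      simp
    · intro θ hθ
      rw [Set.uIcc_of_le (by linarith)] at hθ
      exact abs_of_nonpos (cos_nonpos_of_pi_div_two_le_of_le hθ.1 (by linarith [hθ.2]))
  rw [h1, h2, smul_eq_mul]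
  field_simp
  norm_num

lemma stei_two : ∫ ω, ‖∑ j, (1 : ℂ) * ew (ω j)‖ ∂(stei (Fin 2)) = 4 / π := by
  have hc : Continuous fun ω : Fin 2 → AddCircle (2 * π) => ‖∑ j, (1 : ℂ) * ew (ω j)‖ := by fun_prop
  rw [avg_rot (fun φ => ![0, φ]) (by
    refine continuous_pi fun j => ?_
    fin_cases j
    · exact continuous_const
    · exact continuous_id) hc]
  have : ∀ ω : Fin 2 → AddCircle (2 * π), ∫ φ, ‖∑ j, (1 : ℂ) * ew ((ω + ![0, φ]) j)‖ ∂tau = 4 / π := by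
    intro ω
    have e : ∀ φ, ‖∑ j, (1 : ℂ) * ew ((ω + ![0, φ]) j)‖ = ‖1 + ew φ * (ew (ω 1) / ew (ω 0))‖ := by
      intro φ
      have h0 : ew (ω 0) ≠ 0 := by
        intro h; have := norm_ew (ω 0); rw [h] at this; simp at this
      have : ∑ j, (1 : ℂ) * ew ((ω + ![0, φ]) j) = ew (ω 0) * (1 + ew φ * (ew (ω 1) / ew (ω 0))) := by
        simp [Fin.sum_univ_two, ew_add]
        have e0 : ew 0 = 1 := by simp [ew]
        rw [e0]
        field_simp
      rw [this, norm_mul, norm_ew, one_mul]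
    simp only [e]
    rw [tau_shift (fun w => ‖1 + w‖) _ (by simp [norm_ew])]
    exact tau_one_add
  simp only [this]
  simp

open MeasureTheory in
lemma J_sq_rep : IntegrableOn (fun t => (1 - J t ^ 2) / t ^ 2) (Set.Ioi 0) ∧
    ∫ t in Set.Ioi (0 : ℝ), (1 - J t ^ 2) / t ^ 2 = 4 / π := by
  have h := stei_rep (fun _ : Fin 2 => (1 : ℂ))
  rw [stei_two] at h
  simpa using h


open MeasureTheory in
lemma tail_bound : IntegrableOn (fun u : ℝ => exp (-(u ^ 2 / 2)) / u ^ 2) (Set.Ioi 1.84) ∧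
    ∫ u in Set.Ioi (1.84 : ℝ), exp (-(u ^ 2 / 2)) / u ^ 2 ≤ 0.0199 := by
  have hd : ∀ u ∈ Set.Ici (1.84 : ℝ), HasDerivAt (fun u : ℝ => -(exp (-(u ^ 2 / 2)) / (u * (u ^ 2 + 2))))
      (exp (-(u ^ 2 / 2)) * (1 / (u ^ 2 + 2) + (3 * u ^ 2 + 2) / (u ^ 2 * (u ^ 2 + 2) ^ 2))) u := by
    intro u hu
    have hu0 : (0 : ℝ) < u := lt_of_lt_of_le (by norm_num) hu
    refine HasDerivAt.congr_deriv (((((((hasDerivAt_id u).pow 2).div_const 2).neg).exp).div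
      ((hasDerivAt_id u).mul (((hasDerivAt_id u).pow 2).add_const 2)) (by show u * (u ^ 2 + 2) ≠ 0; positivity)).neg) ?_
    simp
    field_simp
    ring
  have ht : Filter.Tendsto (fun u : ℝ => -(exp (-(u ^ 2 / 2)) / (u * (u ^ 2 + 2)))) Filter.atTop (nhds 0) := by
    refine squeeze_zero_norm' (a := fun t => t⁻¹) ?_ tendsto_inv_atTop_zero
    filter_upwards [Filter.eventually_gt_atTop 0] with t ht
    rw [norm_neg, Real.norm_of_nonneg (by positivity), inv_eq_one_div]
    have : exp (-(t ^ 2 / 2)) ≤ 1 := Real.exp_le_one_iff.2 (by nlinarith [sq_nonneg t])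
    apply div_le_div₀ (by norm_num) this ht
    nlinarith [sq_nonneg t]
  have h_integ := integrableOn_Ioi_deriv_of_nonneg' hd (fun u hu => by
    have hu0 : (0 : ℝ) < u := lt_trans (by norm_num) hu
    positivity) ht
  have hval := integral_Ioi_of_hasDerivAt_of_tendsto' hd h_integ ht
  have hpt : ∀ u ∈ Set.Ioi (1.84 : ℝ), exp (-(u ^ 2 / 2)) / u ^ 2 ≤
      (exp (-(u ^ 2 / 2)) * (1 / (u ^ 2 + 2) + (3 * u ^ 2 + 2) / (u ^ 2 * (u ^ 2 + 2) ^ 2))) := by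
    intro u hu
    have hu1 : (1.84 : ℝ) < u := hu
    have hu0 : (0 : ℝ) < u := lt_trans (by norm_num) hu
    rw [div_eq_mul_one_div]
    apply mul_le_mul_of_nonneg_left _ (exp_pos _).le
    have : (1 / (u ^ 2 + 2) + (3 * u ^ 2 + 2) / (u ^ 2 * (u ^ 2 + 2) ^ 2)) - 1 / u ^ 2 = (u ^ 2 - 2) / (u ^ 2 * (u ^ 2 + 2) ^ 2) := by
      field_simp
      ring
    have h2 : 0 ≤ (u ^ 2 - 2) / (u ^ 2 * (u ^ 2 + 2) ^ 2) := by
      apply div_nonneg _ (by positivity)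
      nlinarith
    linarith
  have hi : IntegrableOn (fun u : ℝ => exp (-(u ^ 2 / 2)) / u ^ 2) (Set.Ioi 1.84) := by
    refine Integrable.mono' h_integ (Measurable.aestronglyMeasurable (by fun_prop)) ?_
    refine (ae_restrict_iff' measurableSet_Ioi).2 (Filter.Eventually.of_forall fun u hu => ?_)
    rw [Real.norm_of_nonneg (by positivity)]
    exact hpt u hu
  refine ⟨hi, (setIntegral_mono_on hi h_integ measurableSet_Ioi hpt).trans ?_⟩
  rw [hval]
  have : exp (-((1.84:ℝ) ^ 2 / 2)) ≤ 0.197 := by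
    rw [Real.exp_neg]
    rw [inv_le_comm₀ (exp_pos _) (by norm_num)]
    have : rexp ((1.84:ℝ) ^ 2 / 2) = rexp (0.2116) ^ 8 := by
      rw [← Real.exp_nat_mul]; norm_num
    rw [this]
    have h := Real.quadratic_le_exp_of_nonneg (x := 0.2116) (by norm_num)
    calc (0.197 : ℝ)⁻¹ ≤ 1.2339 ^ 8 := by norm_num
      _ ≤ _ := by
        apply pow_le_pow_left₀ (by norm_num)
        norm_num at h ⊢
        linarith
  norm_num at this ⊢
  rw [div_le_iff₀ (by norm_num)]
  linarith

lemma J_pt (s u : ℝ) (hs : 2 ≤ s) (hu : 0 < u) :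
    Mc ^ (s - 2) * ((Set.Iic (1.84 : ℝ)).indicator (fun u => exp (-(u ^ 2 / 2))) u - J u ^ 2) ≤
      exp (-(s / 4) * u ^ 2) - |J u| ^ s := by
  have hM : 0 < Mc := exp_pos _
  have hsplit : ∀ B : ℝ, 0 ≤ B → B ^ s = B ^ (s - 2) * B ^ 2 := by
    intro B hB
    rw [← Real.rpow_natCast B 2, ← Real.rpow_add_of_nonneg hB (by linarith) (by norm_num)]
    congr 1
    norm_num
  rw [hsplit _ (abs_nonneg _), sq_abs]
  by_cases h : u ≤ 1.84
  · rw [Set.indicator_of_mem (by exact h)]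
    set A := exp (-(u ^ 2 / 4)) with hA
    have hA0 : 0 < A := exp_pos _
    have e1 : exp (-(u ^ 2 / 2)) = A ^ 2 := by rw [hA, ← Real.exp_nat_mul]; congr 1; push_cast; ring
    have e2 : exp (-(s / 4) * u ^ 2) = A ^ (s - 2) * A ^ 2 := by
      rw [← hsplit A hA0.le, hA, ← Real.exp_mul]; congr 1; ring
    rw [e1, e2]
    have h1 := J_le_exp u hu.le h
    have h2 : Mc ≤ A := by
      unfold Mc
      apply Real.exp_le_exp.2
      nlinarith
    have h3 : J u ^ 2 ≤ A ^ 2 := by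
      rw [← sq_abs]; exact pow_le_pow_left₀ (abs_nonneg _) h1 2
    have h4 : |J u| ^ (s - 2) ≤ A ^ (s - 2) := Real.rpow_le_rpow (abs_nonneg _) h1 (by linarith)
    have h5 : Mc ^ (s - 2) ≤ A ^ (s - 2) := Real.rpow_le_rpow hM.le h2 (by linarith)
    nlinarith [mul_le_mul_of_nonneg_right h5 (sub_nonneg.2 h3), mul_le_mul_of_nonneg_right h4 (sq_nonneg (J u))]
  · rw [Set.indicator_of_notMem (by exact h)]
    push Not at h
    have h1 := J_le_Mc u h.le
    have h4 : |J u| ^ (s - 2) ≤ Mc ^ (s - 2) := Real.rpow_le_rpow (abs_nonneg _) h1 (by linarith)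
    have := exp_pos (-(s / 4) * u ^ 2)
    nlinarith [mul_le_mul_of_nonneg_right h4 (sq_nonneg (J u))]

open MeasureTheory in
lemma ind_int : IntegrableOn (fun u => ((Set.Iic (1.84 : ℝ)).indicator (fun u => exp (-(u ^ 2 / 2))) u - J u ^ 2) / u ^ 2) (Set.Ioi 0) ∧
    0 ≤ ∫ u in Set.Ioi (0 : ℝ), ((Set.Iic (1.84 : ℝ)).indicator (fun u => exp (-(u ^ 2 / 2))) u - J u ^ 2) / u ^ 2 := by
  have e : (fun u : ℝ => ((Set.Iic (1.84 : ℝ)).indicator (fun u => exp (-(u ^ 2 / 2))) u - J u ^ 2) / u ^ 2)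
      = fun u => (1 - J u ^ 2) / u ^ 2 - (1 - exp (-(1/2) * u ^ 2)) / u ^ 2
        - (Set.Ioi (1.84 : ℝ)).indicator (fun u => exp (-(u ^ 2 / 2)) / u ^ 2) u := by
    ext u
    have : exp (-(1/2) * u ^ 2) = exp (-(u ^ 2 / 2)) := by congr 1; ring
    rw [this]
    by_cases h : u ≤ 1.84
    · rw [Set.indicator_of_mem (by exact h), Set.indicator_of_notMem (by simpa using h)]
      ring
    · rw [Set.indicator_of_notMem (by exact h), Set.indicator_of_mem (by simpa using h)]
      ring
  obtain ⟨t1, t2⟩ := tail_bound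
  obtain ⟨g1, g2⟩ := gauss_int (1/2) (by norm_num)
  obtain ⟨j1, j2⟩ := J_sq_rep
  have i3 : IntegrableOn ((Set.Ioi (1.84 : ℝ)).indicator (fun u => exp (-(u ^ 2 / 2)) / u ^ 2)) (Set.Ioi 0) :=
    ((integrable_indicator_iff measurableSet_Ioi).2 t1).integrableOn
  rw [e]
  have jg : IntegrableOn (fun u => (1 - J u ^ 2) / u ^ 2 - (1 - exp (-(1/2) * u ^ 2)) / u ^ 2) (Set.Ioi 0) := j1.sub g1
  refine ⟨jg.sub i3, ?_⟩
  rw [integral_sub jg i3, integral_sub j1 g1, j2, g2]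
  have e3 : ∫ u in Set.Ioi (0 : ℝ), (Set.Ioi (1.84 : ℝ)).indicator (fun u => exp (-(u ^ 2 / 2)) / u ^ 2) u
      = ∫ u in Set.Ioi (1.84 : ℝ), exp (-(u ^ 2 / 2)) / u ^ 2 := by
    rw [setIntegral_indicator measurableSet_Ioi]
    congr 2
    ext u
    simp
    norm_num
    intro h
    linarith
  rw [e3]
  have p1 := Real.pi_lt_d6
  have h1 : 1.27323 ≤ 4 / π := by
    rw [le_div_iff₀ pi_pos]; linarith
  have h2 : √(π * (1/2)) ≤ 1.25332 := by
    rw [Real.sqrt_le_left (by norm_num)]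
    linarith
  linarith

open MeasureTheory in
lemma Js_int (s : ℝ) (hs : 2 ≤ s) : IntegrableOn (fun u => (1 - |J u| ^ s) / u ^ 2) (Set.Ioi 0) ∧
    √π / 2 * √s ≤ ∫ u in Set.Ioi (0 : ℝ), (1 - |J u| ^ s) / u ^ 2 := by
  have hp : ∀ u, |J u| ^ s ≤ 1 := fun u => Real.rpow_le_one (abs_nonneg _) (J_abs_le u) (by linarith)
  have i1 : IntegrableOn (fun u => (1 - |J u| ^ s) / u ^ 2) (Set.Ioi 0) := by
    apply integ_crit _ (1 + s)
    · intro t ht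
      rw [abs_of_nonneg (by linarith [hp t])]
      have h1 := one_add_mul_self_le_rpow_one_add (s := |J t| - 1) (by linarith [abs_nonneg (J t)]) (p := s) (by linarith)
      rw [add_sub_cancel] at h1
      have h2 := J_lower2 t
      have h3 := le_abs_self (J t)
      nlinarith [sq_nonneg t]
    · intro t ht
      rw [abs_of_nonneg (by linarith [hp t])]
      have : 0 ≤ |J t| ^ s := Real.rpow_nonneg (abs_nonneg _) _
      linarith
    · have : Measurable J := J_cont.measurable
      fun_prop
  refine ⟨i1, ?_⟩
  obtain ⟨g1, g2⟩ := gauss_int (s/4) (by linarith)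
  obtain ⟨n1, n2⟩ := ind_int
  have e : √(π * (s / 4)) = √π / 2 * √s := by
    rw [Real.sqrt_mul pi_pos.le, Real.sqrt_div (by linarith), show (4:ℝ) = 2 ^ 2 by norm_num, Real.sqrt_sq (by norm_num)]
    ring
  rw [← e, ← g2]
  have h : 0 ≤ ∫ u in Set.Ioi (0 : ℝ), ((1 - |J u| ^ s) / u ^ 2 - (1 - exp (-(s/4) * u ^ 2)) / u ^ 2) := by
    calc 0 ≤ Mc ^ (s - 2) * ∫ u in Set.Ioi (0 : ℝ), ((Set.Iic (1.84 : ℝ)).indicator (fun u => exp (-(u ^ 2 / 2))) u - J u ^ 2) / u ^ 2 :=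
          mul_nonneg (Real.rpow_nonneg (exp_pos _).le _) n2
      _ = ∫ u in Set.Ioi (0 : ℝ), Mc ^ (s - 2) * (((Set.Iic (1.84 : ℝ)).indicator (fun u => exp (-(u ^ 2 / 2))) u - J u ^ 2) / u ^ 2) := by
          rw [integral_const_mul]
      _ ≤ _ := by
          apply setIntegral_mono_on (n1.const_mul _) (i1.sub g1) measurableSet_Ioi
          intro u hu
          simp only [Pi.sub_apply]
          rw [← sub_div, ← mul_div_assoc]
          apply div_le_div_of_nonneg_right _ (sq_nonneg u)
          have := J_pt s u hs hu
          linarith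
  rw [integral_sub i1 g1] at h
  linarith

open MeasureTheory in
lemma caseA {ι : Type*} [Fintype ι] (a : ι → ℂ) (h1 : ∑ j, ‖a j‖ ^ 2 = 1) (h2 : ∀ j, ‖a j‖ ^ 2 ≤ 1 / 2) :
    √π / 2 ≤ ∫ ω, ‖∑ j, a j * ew (ω j)‖ ∂(stei ι) := by
  obtain ⟨r1, r2⟩ := stei_rep a
  rw [← r2]
  have hterm : ∀ j, IntegrableOn (fun t => ‖a j‖ ^ 2 * ((1 - |J (‖a j‖ * t)| ^ ((‖a j‖ ^ 2)⁻¹)) / t ^ 2)) (Set.Ioi 0) ∧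
      √π / 2 * ‖a j‖ ^ 2 ≤ ∫ t in Set.Ioi (0 : ℝ), ‖a j‖ ^ 2 * ((1 - |J (‖a j‖ * t)| ^ ((‖a j‖ ^ 2)⁻¹)) / t ^ 2) := by
    intro j
    rcases (norm_nonneg (a j)).eq_or_lt with h | h
    · rw [← h]; simp
    · have hs : 2 ≤ (‖a j‖ ^ 2)⁻¹ := by
        rw [le_inv_comm₀ (by norm_num) (by positivity)]
        have := h2 j
        norm_num at this ⊢
        linarith
      obtain ⟨k1, k2⟩ := Js_int _ hs
      refine ⟨(scale_Ioi_int (fun u => 1 - |J u| ^ ((‖a j‖ ^ 2)⁻¹)) _ h k1).const_mul _, ?_⟩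
      rw [integral_const_mul, scale_Ioi (fun u => 1 - |J u| ^ ((‖a j‖ ^ 2)⁻¹)) _ h]
      rw [Real.sqrt_inv, Real.sqrt_sq h.le] at k2
      calc √π / 2 * ‖a j‖ ^ 2 = ‖a j‖ ^ 2 * (‖a j‖ * (√π / 2 * ‖a j‖⁻¹)) := by field_simp
        _ ≤ _ := by gcongr
  calc √π / 2 = ∑ j, √π / 2 * ‖a j‖ ^ 2 := by rw [← Finset.mul_sum, h1, mul_one]
    _ ≤ ∑ j, ∫ t in Set.Ioi (0 : ℝ), ‖a j‖ ^ 2 * ((1 - |J (‖a j‖ * t)| ^ ((‖a j‖ ^ 2)⁻¹)) / t ^ 2) :=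
        Finset.sum_le_sum fun j _ => (hterm j).2
    _ = ∫ t in Set.Ioi (0 : ℝ), ∑ j, ‖a j‖ ^ 2 * ((1 - |J (‖a j‖ * t)| ^ ((‖a j‖ ^ 2)⁻¹)) / t ^ 2) := by
        rw [integral_finsetSum]
        exact fun j _ => (hterm j).1
    _ ≤ _ := by
        apply setIntegral_mono_on (integrable_finsetSum _ fun j _ => (hterm j).1) r1 measurableSet_Ioi
        intro t ht
        have hg := Real.geom_mean_le_arith_mean_weighted Finset.univ (fun j => ‖a j‖ ^ 2)
          (fun j => |J (‖a j‖ * t)| ^ ((‖a j‖ ^ 2)⁻¹)) (fun j _ => by positivity) h1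
          (fun j _ => Real.rpow_nonneg (abs_nonneg _) _)
        have hprod : ∏ j, J (‖a j‖ * t) ≤ ∑ j, ‖a j‖ ^ 2 * |J (‖a j‖ * t)| ^ ((‖a j‖ ^ 2)⁻¹) := by
          refine le_trans (le_abs_self _) (le_trans (le_of_eq ?_) hg)
          rw [Finset.abs_prod]
          apply Finset.prod_congr rfl
          intro j _
          rcases (norm_nonneg (a j)).eq_or_lt with h | h
          · rw [← h]; simp [J]
          · rw [← Real.rpow_mul (abs_nonneg _), inv_mul_cancel₀ (by positivity), Real.rpow_one]
        have : ∑ j, ‖a j‖ ^ 2 * ((1 - |J (‖a j‖ * t)| ^ ((‖a j‖ ^ 2)⁻¹)) / t ^ 2)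
            = (1 - ∑ j, ‖a j‖ ^ 2 * |J (‖a j‖ * t)| ^ ((‖a j‖ ^ 2)⁻¹)) / t ^ 2 := by
          conv_rhs => rw [← h1, ← Finset.sum_sub_distrib, Finset.sum_div]
          apply Finset.sum_congr rfl
          intro j _
          ring
        rw [this]
        apply div_le_div_of_nonneg_right _ (sq_nonneg t)
        linarith


lemma poly7 (r : ℝ) (hr : 1 ≤ r) :
    0 ≤ 0.0066 * r ^ 7 - 0.29 * r ^ 5 + r ^ 4 - 0.98 * r ^ 3 + 0.25 * r ^ 2 + 0.015625 := by
  rcases le_total r 2 with h | h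
  · nlinarith [mul_nonneg (sub_nonneg.2 hr) (sub_nonneg.2 h), mul_nonneg (mul_nonneg (sub_nonneg.2 hr) (sub_nonneg.2 h)) (sq_nonneg r), mul_nonneg (mul_nonneg (sub_nonneg.2 hr) (sub_nonneg.2 h)) (sq_nonneg (r * r)), mul_nonneg (mul_nonneg (sub_nonneg.2 hr) (sub_nonneg.2 h)) (sub_nonneg.2 hr), mul_nonneg (mul_nonneg (sub_nonneg.2 hr) (sub_nonneg.2 h)) (mul_nonneg (sub_nonneg.2 hr) (sq_nonneg r)), mul_nonneg (sub_nonneg.2 hr) (sq_nonneg (r * (r-1))), mul_nonneg (sub_nonneg.2 hr) (sq_nonneg (r * r * (r-1)))]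
  · obtain ⟨x, rfl⟩ : ∃ x, r = 2 + x := ⟨r - 2, by ring⟩
    have hx : 0 ≤ x := by linarith
    nlinarith [mul_nonneg hx (sq_nonneg (x ^ 2 - x)), mul_nonneg hx (sq_nonneg (x ^ 2 - 1)), mul_nonneg hx (sq_nonneg (x - 1)), sq_nonneg (x ^ 2 - x), sq_nonneg (x ^ 2 - 1), sq_nonneg (x - 1), mul_nonneg hx (sq_nonneg (x ^ 3)), sq_nonneg (x ^ 3), sq_nonneg (x^3-x), mul_nonneg hx (sq_nonneg (x ^ 3 - x)), mul_nonneg hx (sq_nonneg (x ^ 2)), sq_nonneg (x^3 - x^2)]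

lemma tau_mean (f : ℂ → ℂ) (hf : DiffContOnCl ℂ f (Metric.ball 0 1)) : ∫ x, f (ew x) ∂tau = f 0 := by
  have h := DiffContOnCl.circleAverage (f := f) (c := 0) (R := 1) (by simpa using hf)
  rw [← h, Real.circleAverage, integral_tau (fun x => f (ew x))]
  simp_rw [ew_coe, circleMap]
  simp


lemma tau_re_mul (c : ℂ) : ∫ x, (c * ew x).re ∂tau = 0 := by
  have := tau_shift (fun w => (c * w).re) (-1) (by simp)
  simp only [mul_neg, mul_one, Complex.neg_re] at this
  rw [MeasureTheory.integral_neg] at this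
  linarith

lemma tau_re_mul_sq (c : ℂ) : ∫ x, (c * ew x).re ^ 2 ∂tau = ‖c‖ ^ 2 / 2 := by
  rw [tau_rot (fun w => w.re ^ 2)]
  simp only [Complex.re_ofReal_mul, mul_pow]
  rw [MeasureTheory.integral_const_mul, mom2]
  ring

lemma norm_add_sq_ew (v b : ℂ) (x) : ‖v + b * ew x‖ ^ 2 = (‖v‖ ^ 2 + ‖b‖ ^ 2) + 2 * ((starRingEnd ℂ) v * b * ew x).re := by
  have h : ‖b * ew x‖ = ‖b‖ := by rw [norm_mul, norm_ew, mul_one]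
  rw [← h, ← Complex.normSq_eq_norm_sq, ← Complex.normSq_eq_norm_sq, ← Complex.normSq_eq_norm_sq, Complex.normSq_add]
  have : (v * (starRingEnd ℂ) (b * ew x)).re = ((starRingEnd ℂ) v * b * ew x).re := by
    rw [← Complex.conj_re]; simp; ring
  rw [this]

@[fun_prop]
lemma cont_re_mul (c : ℂ) : Continuous fun x => (c * ew x).re := Complex.continuous_re.comp (by fun_prop)

lemma tau_sq (v b : ℂ) : ∫ x, ‖v + b * ew x‖ ^ 2 ∂tau = ‖v‖ ^ 2 + ‖b‖ ^ 2 := by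
  simp_rw [norm_add_sq_ew]
  rw [MeasureTheory.integral_add (MeasureTheory.integrable_const _) (cont_int (by fun_prop)),
    MeasureTheory.integral_const_mul, tau_re_mul]
  simp

lemma tau_four (v b : ℂ) : ∫ x, ‖v + b * ew x‖ ^ 4 ∂tau = ‖v‖ ^ 4 + 4 * ‖v‖ ^ 2 * ‖b‖ ^ 2 + ‖b‖ ^ 4 := by
  have e : ∀ x, ‖v + b * ew x‖ ^ 4 = (‖v‖ ^ 2 + ‖b‖ ^ 2) ^ 2 + 4 * (‖v‖ ^ 2 + ‖b‖ ^ 2) * ((starRingEnd ℂ) v * b * ew x).re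
      + 4 * ((starRingEnd ℂ) v * b * ew x).re ^ 2 := by
    intro x
    rw [show ‖v + b * ew x‖ ^ 4 = (‖v + b * ew x‖ ^ 2) ^ 2 by ring, norm_add_sq_ew]; ring
  simp_rw [e]
  rw [MeasureTheory.integral_add (cont_int (by fun_prop)) (cont_int (by fun_prop)),
    MeasureTheory.integral_add (MeasureTheory.integrable_const _) (cont_int (by fun_prop)),
    MeasureTheory.integral_const_mul, MeasureTheory.integral_const_mul, tau_re_mul, tau_re_mul_sq]
  simp
  ring

lemma cond_step {ι : Type*} [Fintype ι] [DecidableEq ι] (a : ι → ℂ) (s : Finset ι) (j : ι) (hj : j ∉ s)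
    (G : ℂ → ℝ) (hG : Continuous G) :
    ∫ ω, G (∑ i ∈ insert j s, a i * ew (ω i)) ∂(stei ι)
      = ∫ ω, (∫ x, G ((∑ i ∈ s, a i * ew (ω i)) + a j * ew x) ∂tau) ∂(stei ι) := by
  rw [avg_rot (ι := ι) (fun φ => Pi.single (M := fun _ : ι => AddCircle (2 * π)) j φ)
    (continuous_single (A := fun _ : ι => AddCircle (2 * π)) j) (by fun_prop)]
  congr 1
  ext ω
  rw [← tau_shift (fun w => G ((∑ i ∈ s, a i * ew (ω i)) + a j * w)) (ew (ω j)) (norm_ew _)]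
  congr 1
  ext φ
  congr 1
  rw [Finset.sum_insert hj, add_comm]
  congr 1
  · apply Finset.sum_congr rfl
    intro i hi
    have : i ≠ j := fun h => hj (h ▸ hi)
    simp [this]
  · simp [ew_add]; left; ring

lemma mom_two_s {ι : Type*} [Fintype ι] [DecidableEq ι] (a : ι → ℂ) (s : Finset ι) :
    ∫ ω, ‖∑ i ∈ s, a i * ew (ω i)‖ ^ 2 ∂(stei ι) = ∑ i ∈ s, ‖a i‖ ^ 2 := by
  induction s using Finset.induction_on with
  | empty => simp
  | insert j s hj ih =>
    rw [cond_step a s j hj (fun z => ‖z‖ ^ 2) (by fun_prop)]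
    simp_rw [tau_sq]
    rw [MeasureTheory.integral_add (integrable_of_cont _ (by fun_prop)) (MeasureTheory.integrable_const _), ih,
      Finset.sum_insert hj]
    simp [add_comm]

lemma mom_four_s {ι : Type*} [Fintype ι] [DecidableEq ι] (a : ι → ℂ) (s : Finset ι) :
    ∫ ω, ‖∑ i ∈ s, a i * ew (ω i)‖ ^ 4 ∂(stei ι) ≤ 2 * (∑ i ∈ s, ‖a i‖ ^ 2) ^ 2 := by
  induction s using Finset.induction_on with
  | empty => simp
  | insert j s hj ih =>
    rw [cond_step a s j hj (fun z => ‖z‖ ^ 4) (by fun_prop)]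
    simp_rw [tau_four]
    rw [MeasureTheory.integral_add (integrable_of_cont _ (by fun_prop)) (MeasureTheory.integrable_const _),
      MeasureTheory.integral_add (integrable_of_cont _ (by fun_prop)) (integrable_of_cont _ (by fun_prop)),
      MeasureTheory.integral_mul_const, MeasureTheory.integral_const_mul, mom_two_s,
      Finset.sum_insert hj]
    simp only [MeasureTheory.integral_const, MeasureTheory.probReal_univ, one_smul]
    nlinarith [sq_nonneg (‖a j‖ ^ 2)]

lemma h_small (ρ : ℝ) (h0 : 0 ≤ ρ) (h1 : ρ ≤ 1) : 1 + ρ ^ 2 / 4 + ρ ^ 4 / 64 ≤ ∫ x, ‖1 + ρ * ew x‖ ∂tau := by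
  set P : ℂ → ℂ := fun z => 1 + ρ * z / 2 - ρ ^ 2 * z ^ 2 / 8 with hP
  set g : ℂ → ℂ := fun z => (ρ ^ 3 * z / 8 - ρ ^ 4 * z ^ 2 / 64) * (z ^ 2 + ρ * z / 2 - ρ ^ 2 / 8) / P z with hg
  have hP0 : ∀ z : ℂ, ‖z‖ ≤ 1 → P z ≠ 0 := by
    intro z hz h
    have e : (1 : ℂ) = ρ ^ 2 * z ^ 2 / 8 - ρ * z / 2 := by
      have : 1 + ρ * z / 2 - ρ ^ 2 * z ^ 2 / 8 = 0 := h
      linear_combination this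
    have h2 := congrArg norm e
    have hr : ‖(ρ : ℂ)‖ = ρ := by simp [abs_of_nonneg h0]
    have h3 : ‖(ρ ^ 2 * z ^ 2 / 8 - ρ * z / 2 : ℂ)‖ ≤ ρ ^ 2 * ‖z‖ ^ 2 / 8 + ρ * ‖z‖ / 2 := by
      refine (norm_sub_le _ _).trans ?_
      simp [abs_of_nonneg h0]
    have h4 : ρ * ‖z‖ ≤ 1 := mul_le_one₀ h1 (norm_nonneg _) hz
    have h5 : 0 ≤ ρ * ‖z‖ := by positivity
    rw [← h2] at h3
    simp at h3
    nlinarith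
  have hd : DiffContOnCl ℂ g (Metric.ball 0 1) := by
    apply DifferentiableOn.diffContOnCl
    rw [closure_ball _ one_ne_zero]
    intro z hz
    have hz0 : P z ≠ 0 := hP0 z (by simpa using hz)
    apply DifferentiableAt.differentiableWithinAt
    apply DifferentiableAt.div _ _ hz0 <;> fun_prop
  have hmean := tau_mean g hd
  have hg0 : g 0 = 0 := by simp [hg]
  rw [hg0] at hmean
  have hPc : Continuous fun x => P (ew x) := by rw [hP]; fun_prop
  have hgc : Continuous fun x => g (ew x) := by
    rw [hg]
    apply Continuous.div
    · fun_prop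
    · exact hPc
    · intro x; exact hP0 _ (norm_ew x).le
  have hgi : MeasureTheory.Integrable (fun x => g (ew x)) tau := integrable_of_cont _ hgc
  have hmre : ∫ x, (g (ew x)).re ∂tau = 0 := by
    have : ∫ x, (g (ew x)).re ∂tau = (∫ x, g (ew x) ∂tau).re := integral_re hgi
    rw [this, hmean]; simp
  have hsq : ∀ x, ‖P (ew x)‖ ^ 2 = (1 + ρ ^ 2 / 4 + ρ ^ 4 / 64 + ρ ^ 2 / 4) + (ρ - ρ ^ 3 / 8) * (ew x).re - ρ ^ 2 / 2 * (ew x).re ^ 2 := by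
    intro x
    have hn := norm_ew x
    have hn2 : (ew x).re * (ew x).re + (ew x).im * (ew x).im = 1 := by
      rw [← Complex.normSq_apply, Complex.normSq_eq_norm_sq, hn]; norm_num
    rw [← Complex.normSq_eq_norm_sq, Complex.normSq_apply, hP]
    have r1 : (1 + ρ * ew x / 2 - ρ ^ 2 * ew x ^ 2 / 8 : ℂ).re = 1 + ρ * (ew x).re / 2 - ρ ^ 2 * ((ew x).re ^ 2 - (ew x).im ^ 2) / 8 := by
      simp [pow_two]
    have r2 : (1 + ρ * ew x / 2 - ρ ^ 2 * ew x ^ 2 / 8 : ℂ).im = ρ * (ew x).im / 2 - ρ ^ 2 * (2 * (ew x).re * (ew x).im) / 8 := by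
      simp [pow_two]; left; ring
    simp only [r1, r2]
    generalize (ew x).re = c at *
    generalize (ew x).im = d at *
    have hd2 : d ^ 2 = 1 - c ^ 2 := by linarith
    have hd4 : d ^ 4 = (1 - c ^ 2) ^ 2 := by rw [← hd2]; ring
    ring_nf
    rw [hd4, hd2]
    ring
  have hPsq : ∫ x, ‖P (ew x)‖ ^ 2 ∂tau = 1 + ρ ^ 2 / 4 + ρ ^ 4 / 64 := by
    simp_rw [hsq]
    have h1 := tau_re_mul 1
    simp only [one_mul] at h1
    rw [MeasureTheory.integral_sub (cont_int (by fun_prop)) (cont_int (by fun_prop)),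
      MeasureTheory.integral_add (MeasureTheory.integrable_const _) (cont_int (by fun_prop)),
      MeasureTheory.integral_const_mul, MeasureTheory.integral_const_mul, h1, mom2]
    simp
    ring
  have hpt : ∀ x, ‖P (ew x)‖ ^ 2 + (g (ew x)).re ≤ ‖1 + ρ * ew x‖ := by
    intro x
    have hPx := hP0 (ew x) (norm_ew x).le
    set z := ew x with hz
    have hzz : z * (starRingEnd ℂ) z = 1 := by
      rw [Complex.mul_conj, Complex.normSq_eq_norm_sq, hz, norm_ew]; simp
    have e : (1 + ρ * z) * (starRingEnd ℂ) (P z) / P z = ((‖P z‖ ^ 2 : ℝ) : ℂ) + g z := by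
      have hc : ((‖P z‖ ^ 2 : ℝ) : ℂ) = P z * (starRingEnd ℂ) (P z) := by
        rw [Complex.mul_conj, Complex.normSq_eq_norm_sq]
      have hgz : g z = (ρ ^ 3 * z / 8 - ρ ^ 4 * z ^ 2 / 64) * (z ^ 2 + ρ * z / 2 - ρ ^ 2 / 8) / P z := rfl
      rw [hc, hgz, div_eq_iff hPx, add_mul (P z * _), div_mul_cancel₀ _ hPx]
      have hcp : (starRingEnd ℂ) (P z) = 1 + ρ * (starRingEnd ℂ) z / 2 - ρ ^ 2 * (starRingEnd ℂ) z ^ 2 / 8 := by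
        have c2 : (starRingEnd ℂ) 2 = 2 := Complex.conj_ofNat 2
        have c8 : (starRingEnd ℂ) 8 = 8 := Complex.conj_ofNat 8
        simp [hP, c2, c8]
      rw [hcp]
      simp only [hP]
      generalize (starRingEnd ℂ) z = w at *
      have hz0 : z ≠ 0 := by rintro h; rw [h] at hzz; simp at hzz
      have hw : w = z⁻¹ := eq_inv_of_mul_eq_one_right hzz
      rw [hw]
      field_simp
      ring
    have h2 : ‖(1 + ρ * z) * (starRingEnd ℂ) (P z) / P z‖ = ‖1 + ρ * z‖ := by
      rw [norm_div, norm_mul, RCLike.norm_conj, mul_div_assoc, div_self (norm_ne_zero_iff.2 hPx), mul_one]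
    rw [← h2, e]
    refine le_trans (le_of_eq ?_) (Complex.re_le_norm _)
    rw [Complex.add_re, Complex.ofReal_re]
  have hgr : Continuous fun x => (g (ew x)).re := Complex.continuous_re.comp hgc
  calc _ = ∫ x, (‖P (ew x)‖ ^ 2 + (g (ew x)).re) ∂tau := by
        rw [MeasureTheory.integral_add (cont_int (by fun_prop)) (cont_int hgr), hPsq, hmre, add_zero]
    _ ≤ _ := MeasureTheory.integral_mono (cont_int ((by fun_prop : Continuous fun x => ‖P (ew x)‖ ^ 2).add hgr)) (cont_int (by fun_prop)) hpt


lemma one_step (a R : ℂ) (ha : a ≠ 0) :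
    ‖a‖ * (0.98 + 0.29 * (‖R‖ ^ 2 / ‖a‖ ^ 2) - 0.0066 * (‖R‖ ^ 4 / ‖a‖ ^ 4)) ≤ ∫ x, ‖R + a * ew x‖ ∂tau := by
  have hA : 0 < ‖a‖ := norm_pos_iff.2 ha
  have hR0 := norm_nonneg R
  rcases le_total ‖R‖ ‖a‖ with h | h
  · have e : ∀ x, ‖R + a * ew x‖ = ‖a‖ * ‖1 + (starRingEnd ℂ) (R / a) * ew x‖ := by
      intro x
      have h1 : ‖1 + (starRingEnd ℂ) (R / a) * ew x‖ = ‖1 + (R / a) * (starRingEnd ℂ) (ew x)‖ := by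
        rw [← RCLike.norm_conj]; simp
      have hz : ew x * (starRingEnd ℂ) (ew x) = 1 := by
        rw [Complex.mul_conj, Complex.normSq_eq_norm_sq, norm_ew]; simp
      have h2 : R + a * ew x = a * ew x * (1 + (R / a) * (starRingEnd ℂ) (ew x)) := by
        have : a * ew x * (1 + (R / a) * (starRingEnd ℂ) (ew x)) = a * ew x + (a * (R / a)) * (ew x * (starRingEnd ℂ) (ew x)) := by ring
        rw [this, hz, mul_div_cancel₀ _ ha]; ring
      rw [h1, h2, norm_mul, norm_mul, norm_ew, mul_one]
    simp_rw [e]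
    rw [MeasureTheory.integral_const_mul, tau_rot (fun w => ‖1 + w‖)]
    apply mul_le_mul_of_nonneg_left _ hA.le
    have hn : ‖(starRingEnd ℂ) (R / a)‖ = ‖R‖ / ‖a‖ := by rw [RCLike.norm_conj, norm_div]
    rw [hn]
    have hq1 : ‖R‖ / ‖a‖ ≤ 1 := (div_le_one hA).2 h
    refine le_trans ?_ (h_small _ (by positivity) hq1)
    rw [← div_pow, ← div_pow]
    nlinarith [sq_nonneg ((‖R‖ / ‖a‖) ^ 2 - 0.9)]
  · have hR : 0 < ‖R‖ := hA.trans_le h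
    have hRn : R ≠ 0 := norm_pos_iff.1 hR
    have e : ∀ x, ‖R + a * ew x‖ = ‖R‖ * ‖1 + (a / R) * ew x‖ := by
      intro x
      rw [← norm_mul]; congr 1; field_simp
    simp_rw [e]
    rw [MeasureTheory.integral_const_mul, tau_rot (fun w => ‖1 + w‖), norm_div]
    refine le_trans ?_ (mul_le_mul_of_nonneg_left (h_small (‖a‖ / ‖R‖) (by positivity) ((div_le_one hR).2 h)) hR.le)
    have hr : 1 ≤ ‖R‖ / ‖a‖ := (one_le_div hA).2 h
    have key := poly7 _ hr
    set r := ‖R‖ / ‖a‖ with hrd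
    have hr0 : 0 < r := by positivity
    have e1 : ‖R‖ = r * ‖a‖ := by rw [hrd]; field_simp
    rw [e1]
    have e2 : r * ‖a‖ * (1 + (‖a‖ / (r * ‖a‖)) ^ 2 / 4 + (‖a‖ / (r * ‖a‖)) ^ 4 / 64) -
      ‖a‖ * (0.98 + 0.29 * ((r * ‖a‖) ^ 2 / ‖a‖ ^ 2) - 0.0066 * ((r * ‖a‖) ^ 4 / ‖a‖ ^ 4))
       = ‖a‖ / r ^ 3 * (0.0066*r^7 - 0.29*r^5 + r^4 - 0.98*r^3 + 0.25*r^2 + 0.015625) := by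
      field_simp
      ring
    have : 0 ≤ ‖a‖ / r ^ 3 * (0.0066*r^7 - 0.29*r^5 + r^4 - 0.98*r^3 + 0.25*r^2 + 0.015625) := by positivity
    linarith

lemma sqrt_pi_half : √π / 2 ≤ 0.88623 := by
  have : √π ≤ 1.77246 := by
    rw [Real.sqrt_le_left (by norm_num)]
    have := Real.pi_lt_d6
    nlinarith
  linarith

lemma caseB {ι : Type*} [Fintype ι] (a : ι → ℂ) (h1 : ∑ j, ‖a j‖^2 = 1) (j : ι) (h2 : 1/2 ≤ ‖a j‖^2) :
    √π/2 ≤ ∫ ω, ‖∑ j, a j * ew (ω j)‖ ∂(stei ι) := by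
  classical
  set A := ‖a j‖ with hA
  have hA0 : 0 < A := by
    have h := norm_nonneg (a j)
    rcases h.lt_or_eq with h | h
    · exact h
    · rw [← hA] at h; rw [← h] at h2; norm_num at h2
  have ha : a j ≠ 0 := norm_pos_iff.1 hA0
  have hu : (Finset.univ : Finset ι) = insert j (Finset.univ.erase j) := by simp
  have hs : ∑ i ∈ Finset.univ.erase j, ‖a i‖ ^ 2 = 1 - A ^ 2 := by
    rw [← h1, ← Finset.add_sum_erase _ _ (Finset.mem_univ j)]; ring
  have hA1 : A ^ 2 ≤ 1 := by
    have : 0 ≤ ∑ i ∈ Finset.univ.erase j, ‖a i‖ ^ 2 := by positivity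
    linarith
  have m2 := mom_two_s a (Finset.univ.erase j)
  have m4 := mom_four_s a (Finset.univ.erase j)
  rw [hs] at m2 m4
  rw [hu, cond_step a _ j (by simp) (fun z => ‖z‖) continuous_norm]
  have hlow : ∫ ω, A * (0.98 + 0.29 * (‖∑ i ∈ Finset.univ.erase j, a i * ew (ω i)‖ ^ 2 / A ^ 2) - 0.0066 * (‖∑ i ∈ Finset.univ.erase j, a i * ew (ω i)‖ ^ 4 / A ^ 4)) ∂(stei ι) ≤
     ∫ ω, (∫ x, ‖(∑ i ∈ Finset.univ.erase j, a i * ew (ω i)) + a j * ew x‖ ∂tau) ∂(stei ι) := by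
    apply MeasureTheory.integral_mono
    · exact integrable_of_cont _ (by fun_prop)
    · apply integrable_of_cont
      have := continuous_parametric_integral_of_continuous (μ := tau) (s := Set.univ) (f := fun (ω : ι → AddCircle (2 * π)) x => ‖(∑ i ∈ Finset.univ.erase j, a i * ew (ω i)) + a j * ew x‖) (by unfold Function.uncurry; fun_prop) isCompact_univ
      simpa using this
    · intro ω; exact one_step _ _ ha
  refine le_trans ?_ hlow
  rw [MeasureTheory.integral_const_mul, MeasureTheory.integral_sub (integrable_of_cont _ (by fun_prop)) (integrable_of_cont _ (by fun_prop)),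
    MeasureTheory.integral_add (integrable_of_cont _ (by fun_prop)) (integrable_of_cont _ (by fun_prop)),
    MeasureTheory.integral_const_mul, MeasureTheory.integral_const_mul, MeasureTheory.integral_div, MeasureTheory.integral_div, m2]
  simp only [MeasureTheory.integral_const, MeasureTheory.probReal_univ, one_smul]
  have hp := sqrt_pi_half
  have h5 : A * (0.98 + 0.29 * ((1 - A ^ 2) / A ^ 2) - 0.0066 * (2 * (1 - A ^ 2) ^ 2 / A ^ 4)) ≤
     A * (0.98 + 0.29 * ((1 - A ^ 2) / A ^ 2) - 0.0066 * ((∫ ω, ‖∑ i ∈ Finset.univ.erase j, a i * ew (ω i)‖ ^ 4 ∂(stei ι)) / A ^ 4)) := by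
    gcongr
  refine le_trans ?_ h5
  refine hp.trans ?_
  have hAle : A ≤ 1 := by nlinarith
  have hAge : 0.7 ≤ A := by nlinarith
  have e : A * (0.98 + 0.29 * ((1 - A ^ 2) / A ^ 2) - 0.0066 * (2 * (1 - A ^ 2) ^ 2 / A ^ 4)) - 0.88623 =
    (0.6768 * A ^ 4 - 0.88623 * A ^ 3 + 0.3164 * A ^ 2 - 0.0132) / A ^ 3 := by
    field_simp
    ring
  have : 0 ≤ (0.6768 * A ^ 4 - 0.88623 * A ^ 3 + 0.3164 * A ^ 2 - 0.0132) / A ^ 3 := by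
    apply div_nonneg _ (by positivity)
    obtain ⟨t, hte⟩ : ∃ t, A = t + 0.7 := ⟨A - 0.7, by ring⟩
    have ht : 0 ≤ t := by linarith
    rw [hte]
    ring_nf
    positivity
  linarith

lemma khin_one_aux {ι : Type*} [Fintype ι] (a : ι → ℂ) (h1 : ∑ j, ‖a j‖^2 = 1) :
    √π/2 ≤ ∫ ω, ‖∑ j, a j * ew (ω j)‖ ∂(stei ι) := by
  by_cases h : ∀ j, ‖a j‖^2 ≤ 1/2
  · exact caseA a h1 h
  · push Not at h
    obtain ⟨j, hj⟩ := h
    exact caseB a h1 j hj.le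

lemma Khin_of_norm (p K : ℝ) (hp : 0 < p) (hK : 0 ≤ K)
    (h : ∀ (N : ℕ) (a : Fin N → ℂ), ∑ j, ‖a j‖ ^ 2 = 1 → 1 ≤ K ^ p * ∫ ω, ‖∑ j, a j * ew (ω j)‖ ^ p ∂(stei (Fin N))) :
    Khin p K := by
  intro N a
  set S := ∑ j, ‖a j‖ ^ 2 with hS
  have hS0 : 0 ≤ S := by positivity
  have hI : 0 ≤ ∫ ω, ‖∑ j, a j * ew (ω j)‖ ^ p ∂(stei (Fin N)) := MeasureTheory.integral_nonneg fun ω => by positivity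
  rcases hS0.lt_or_eq with hpos | h0
  · set s := √S with hs
    have hs0 : 0 < s := Real.sqrt_pos.2 hpos
    have hss : s ^ 2 = S := Real.sq_sqrt hS0
    have h1 := h N (fun j => a j / s) (by
      simp only [norm_div, Complex.norm_real, Real.norm_eq_abs, abs_of_pos hs0, div_pow]
      rw [← Finset.sum_div, ← hS, hss, div_self hpos.ne'])
    have e : ∀ ω : Fin N → AddCircle (2 * π), ‖∑ j, a j / s * ew (ω j)‖ ^ p = (s ^ p)⁻¹ * ‖∑ j, a j * ew (ω j)‖ ^ p := by
      intro ω
      have : ∑ j, a j / s * ew (ω j) = (∑ j, a j * ew (ω j)) / s := by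
        rw [Finset.sum_div]; apply Finset.sum_congr rfl; intros; ring
      rw [this, norm_div, Real.div_rpow (norm_nonneg _) (norm_nonneg _)]
      simp only [Complex.norm_real, Real.norm_eq_abs, abs_of_pos hs0]
      rw [div_eq_inv_mul]
    simp_rw [e] at h1
    rw [MeasureTheory.integral_const_mul] at h1
    have h2 : S ^ (p / 2) = s ^ p := by
      rw [← hss, ← Real.rpow_natCast, ← Real.rpow_mul hs0.le]; congr 1; push_cast; ring
    rw [h2]
    have h3 : 0 < s ^ p := by positivity
    calc s ^ p = s ^ p * 1 := by ring
      _ ≤ s ^ p * _ := mul_le_mul_of_nonneg_left h1 h3.le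
      _ = _ := by field_simp
  · rw [← h0, Real.zero_rpow (by positivity)]
    positivity

lemma Khin_one : Khin 1 (2 / √π) := by
  have hp : 0 < √π := Real.sqrt_pos.2 Real.pi_pos
  apply Khin_of_norm _ _ one_pos (by positivity)
  intro N a h1
  simp only [Real.rpow_one]
  have := khin_one_aux a h1
  calc (1 : ℝ) = 2 / √π * (√π / 2) := by field_simp
    _ ≤ _ := mul_le_mul_of_nonneg_left this (by positivity)


lemma min_of_deriv_sign (f f' : ℝ → ℝ) (s : Set ℝ) (hs : s.OrdConnected) (c : ℝ) (hc : c ∈ s)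
    (hd : ∀ x ∈ s, HasDerivAt f (f' x) x) (hf : ∀ x ∈ s, 0 ≤ f' x * (x - c)) :
    ∀ x ∈ s, f c ≤ f x := by
  intro x hx
  rcases lt_trichotomy x c with h | h | h
  · have hsub : Set.Icc x c ⊆ s := hs.out hx hc
    obtain ⟨y, hy, he⟩ := exists_hasDerivAt_eq_slope f f' h
      (fun y hy => (hd y (hsub hy)).continuousAt.continuousWithinAt)
      (fun y hy => hd y (hsub (Set.Ioo_subset_Icc_self hy)))
    have h1 := hf y (hsub (Set.Ioo_subset_Icc_self hy))
    have h2 : f' y ≤ 0 := by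
      by_contra hcon
      push Not at hcon
      have : y - c < 0 := by linarith [hy.2]
      nlinarith
    rw [he, div_le_iff₀ (by linarith)] at h2
    linarith
  · rw [h]
  · have hsub : Set.Icc c x ⊆ s := hs.out hc hx
    obtain ⟨y, hy, he⟩ := exists_hasDerivAt_eq_slope f f' h
      (fun y hy => (hd y (hsub hy)).continuousAt.continuousWithinAt)
      (fun y hy => hd y (hsub (Set.Ioo_subset_Icc_self hy)))
    have h1 := hf y (hsub (Set.Ioo_subset_Icc_self hy))
    have h2 : 0 ≤ f' y := by
      by_contra hcon
      push Not at hcon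
      have : 0 < y - c := by linarith [hy.1]
      nlinarith
    rw [he, le_div_iff₀ (by linarith)] at h2
    linarith

lemma log_six : 2 * Real.log 0.6 ≤ -1.0213 := by
  have h1 : Real.log 0.6 = (Real.log 1.0368 + Real.log 2) / 4 - Real.log 2 := by
    rw [← Real.log_mul (by norm_num) (by norm_num)]
    rw [show (1.0368 * 2 : ℝ) = 1.2 ^ 4 by norm_num, Real.log_pow]
    rw [show (0.6 : ℝ) = 1.2 / 2 by norm_num, Real.log_div (by norm_num) (by norm_num)]
    push_cast; ring
  have h2 := Real.log_le_sub_one_of_pos (show (0:ℝ) < 1.0368 by norm_num)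
  have h3 := Real.log_two_gt_d9
  rw [h1]; linarith

lemma log_sixteen : 2 * Real.log 1.6 ≤ 0.9403 := by
  have h1 : Real.log 1.6 = (Real.log 1.024 + 2 * Real.log 2) / 3 := by
    have : 2 * Real.log 2 = Real.log 4 := by
      rw [show (4 : ℝ) = 2 ^ 2 by norm_num, Real.log_pow]; push_cast; ring
    rw [this, ← Real.log_mul (by norm_num) (by norm_num)]
    rw [show (1.024 * 4 : ℝ) = 1.6 ^ 3 by norm_num, Real.log_pow]
    push_cast; ring
  have h2 := Real.log_le_sub_one_of_pos (show (0:ℝ) < 1.024 by norm_num)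
  have h3 := Real.log_two_lt_d9
  rw [h1]; linarith

lemma log_quartic (r : ℝ) (hr : 0 < r) :
    r ^ 2 * (2 * Real.log r) ≤ 3.072 / 7.08 - 18.304 / 7.08 * r + 2.033 * r ^ 2 + r ^ 4 / 7.08 := by
  set g : ℝ → ℝ := fun r => 3.072 / 7.08 * (r⁻¹) ^ 2 - 18.304 / 7.08 * r⁻¹ + 2.033 + r ^ 2 / 7.08 - 2 * Real.log r with hg
  set g' : ℝ → ℝ := fun r => 2 / 7.08 * (r - 0.6) * (r - 1) * (r - 1.6) * (r + 3.2) / r ^ 3 with hg'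
  have hd : ∀ x : ℝ, 0 < x → HasDerivAt g (g' x) x := by
    intro x hx
    have hi := hasDerivAt_inv hx.ne'
    refine HasDerivAt.congr_deriv (((((((hi.pow 2).const_mul (3.072 / 7.08)).sub (hi.const_mul (18.304 / 7.08))).add_const 2.033).add
      (((hasDerivAt_id x).pow 2).div_const 7.08))).sub ((Real.hasDerivAt_log hx.ne').const_mul 2)) ?_
    simp only [hg', id]
    have hxi := mul_inv_cancel₀ hx.ne'
    field_simp
    ring_nf
    rw [hxi]
    ring
  have hpos : 0 ≤ g r := by
    rcases le_total r 1 with h | h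
    · have h1 := min_of_deriv_sign g g' (Set.Ioc 0 1) Set.ordConnected_Ioc 0.6 (by norm_num) (fun x hx => hd x hx.1) (by
        intro x hx
        have e : g' x * (x - 0.6) = 2 / 7.08 * (x - 0.6) ^ 2 * ((1 - x) * (1.6 - x)) * (x + 3.2) / x ^ 3 := by
          simp only [hg']; ring
        rw [e]
        have := hx.1
        have h2 : 0 ≤ 1 - x := by linarith [hx.2]
        have h3 : 0 ≤ 1.6 - x := by linarith [hx.2]
        positivity) r ⟨hr, h⟩
      refine le_trans ?_ h1
      have := log_six
      simp only [hg]
      norm_num at this ⊢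
      linarith
    · have h1 := min_of_deriv_sign g g' (Set.Ici 1) Set.ordConnected_Ici 1.6 (by norm_num) (fun x hx => hd x (lt_of_lt_of_le one_pos hx)) (by
        intro x hx
        have hx1 : 1 ≤ x := hx
        have e : g' x * (x - 1.6) = 2 / 7.08 * (x - 1.6) ^ 2 * ((x - 1) * (x - 0.6)) * (x + 3.2) / x ^ 3 := by
          simp only [hg']; ring
        rw [e]
        have h2 : 0 ≤ x - 1 := by linarith
        have h3 : 0 ≤ x - 0.6 := by linarith
        positivity) r h
      refine le_trans ?_ h1
      have := log_sixteen
      simp only [hg]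
      norm_num at this ⊢
      linarith
  have e : 3.072 / 7.08 - 18.304 / 7.08 * r + 2.033 * r ^ 2 + r ^ 4 / 7.08 - r ^ 2 * (2 * Real.log r) = r ^ 2 * g r := by
    simp only [hg]; field_simp
  have : 0 ≤ r ^ 2 * g r := by positivity
  linarith

lemma rpow_quartic (r ε : ℝ) (hr : 0 ≤ r) (h0 : 0 ≤ ε) (h1 : ε < 1) :
    r ^ 2 - ε * (3.072 / 7.08 - 18.304 / 7.08 * r + 2.033 * r ^ 2 + r ^ 4 / 7.08) ≤ r ^ (2 * (1 - ε)) := by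
  rcases hr.lt_or_eq with h | h
  · have e : r ^ (2 * (1 - ε)) = r ^ 2 * Real.exp (-(2 * ε * Real.log r)) := by
      rw [Real.rpow_def_of_pos h, ← Real.rpow_natCast, Real.rpow_def_of_pos h, ← Real.exp_add]
      congr 1; push_cast; ring
    rw [e]
    have h2 := Real.add_one_le_exp (-(2 * ε * Real.log r))
    have h3 := log_quartic r h
    have h4 := mul_le_mul_of_nonneg_left h2 (sq_nonneg r)
    have h5 := mul_le_mul_of_nonneg_left h3 h0
    linarith
  · rw [← h, Real.zero_rpow (by nlinarith)]
    norm_num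
    exact h0

lemma sqrt_pi_low : 0.8862 ≤ √π / 2 := by
  have : 1.7724 ≤ √π := by
    apply Real.le_sqrt_of_sq_le
    have := Real.pi_gt_d6
    nlinarith
  linarith

lemma mom_p (N : ℕ) (a : Fin N → ℂ) (h : ∑ j, ‖a j‖ ^ 2 = 1) (ε : ℝ) (h0 : 0 ≤ ε) (h1 : ε < 1) :
    1 - 0.46 * ε ≤ ∫ ω, ‖∑ j, a j * ew (ω j)‖ ^ (2 * (1 - ε)) ∂(stei (Fin N)) := by
  have m1 := khin_one_aux a h
  have m2 := mom_two_s a Finset.univ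
  have m4 := mom_four_s a Finset.univ
  rw [h] at m2 m4
  have hp := sqrt_pi_low
  have hle : ∫ ω, (‖∑ j, a j * ew (ω j)‖ ^ 2 - ε * (3.072 / 7.08 - 18.304 / 7.08 * ‖∑ j, a j * ew (ω j)‖ + 2.033 * ‖∑ j, a j * ew (ω j)‖ ^ 2 + ‖∑ j, a j * ew (ω j)‖ ^ 4 / 7.08)) ∂(stei (Fin N)) ≤ ∫ ω, ‖∑ j, a j * ew (ω j)‖ ^ (2 * (1 - ε)) ∂(stei (Fin N)) := by
    apply MeasureTheory.integral_mono
    · exact integrable_of_cont _ (by fun_prop)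
    · apply integrable_of_cont
      apply Continuous.rpow_const (by fun_prop)
      intro ω; right; linarith
    · intro ω
      exact rpow_quartic _ ε (norm_nonneg _) h0 h1
  refine le_trans ?_ hle
  rw [MeasureTheory.integral_sub (integrable_of_cont _ (by fun_prop)) (integrable_of_cont _ (by fun_prop)),
    MeasureTheory.integral_const_mul, m2,
    MeasureTheory.integral_add (integrable_of_cont _ (by fun_prop)) (integrable_of_cont _ (by fun_prop)),
    MeasureTheory.integral_add (integrable_of_cont _ (by fun_prop)) (integrable_of_cont _ (by fun_prop)),
    MeasureTheory.integral_sub (integrable_of_cont _ (by fun_prop)) (integrable_of_cont _ (by fun_prop)),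
    MeasureTheory.integral_const_mul, MeasureTheory.integral_const_mul, m2]
  simp only [MeasureTheory.integral_div, MeasureTheory.integral_const, MeasureTheory.probReal_univ, one_smul]
  have : ε * (3.072 / 7.08 - 18.304 / 7.08 * (∫ ω, ‖∑ j, a j * ew (ω j)‖ ∂(stei (Fin N))) + 2.033 * 1 + (∫ ω, ‖∑ j, a j * ew (ω j)‖ ^ 4 ∂(stei (Fin N))) / 7.08) ≤ ε * 0.46 := by
    apply mul_le_mul_of_nonneg_left _ h0
    norm_num at m1 m4 hp ⊢
    linarith
  linarith

lemma Khin_k (k : ℝ) (hk : 2 ≤ k) (d : ℝ) (hd : 0.23 ≤ d) :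
    Khin (2 * k / (k + 1)) ((k / (k - 1)) ^ d) := by
  have hk1 : 0 < k - 1 := by linarith
  have hq : 0 < k / (k - 1) := by positivity
  apply Khin_of_norm _ _ (by positivity) (by positivity)
  intro N a h
  have h1 := mom_p N a h (1 / (k + 1)) (by positivity) (by rw [div_lt_one (by linarith)]; linarith)
  have ep : 2 * (1 - 1 / (k + 1)) = 2 * k / (k + 1) := by field_simp; ring
  rw [ep] at h1
  refine le_trans ?_ (mul_le_mul_of_nonneg_left h1 (by positivity))
  have hx : 0 < 1 - 0.46 * (1 / (k + 1)) := by
    have : 1 / (k + 1) ≤ 1 := by rw [div_le_one (by linarith)]; linarith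
    linarith
  rw [← Real.log_nonneg_iff (by positivity), Real.log_mul (by positivity) hx.ne', ← Real.rpow_mul hq.le, Real.log_rpow hq]
  have l1 : 2 / (2 * k - 1) ≤ Real.log (k / (k - 1)) := by
    have := Real.le_log_one_add_of_nonneg (show 0 ≤ 1 / (k - 1) by positivity)
    rw [show 1 + 1 / (k - 1) = k / (k - 1) by field_simp; ring] at this
    refine le_trans (le_of_eq ?_) this
    have : 2 * k - 1 ≠ 0 := by linarith
    have h3 : 1 / (k - 1) + 2 = (2 * k - 1) / (k - 1) := by field_simp; ring
    rw [h3]; field_simp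
  have l2 : -(0.46 / (k + 0.54)) ≤ Real.log (1 - 0.46 * (1 / (k + 1))) := by
    have := Real.one_sub_inv_le_log_of_pos hx
    refine le_trans (le_of_eq ?_) this
    have h3 : 1 - 0.46 * (1 / (k + 1)) = (k + 0.54) / (k + 1) := by field_simp; ring
    rw [h3, inv_div]
    have : k + 0.54 ≠ 0 := by linarith
    field_simp; ring
  have hpp : 0 ≤ 2 * k / (k + 1) := by positivity
  have l3 : 0.23 * (2 * k / (k + 1)) * (2 / (2 * k - 1)) ≤ d * (2 * k / (k + 1)) * Real.log (k / (k - 1)) := by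
    have : 0 ≤ 2 / (2 * k - 1) := div_nonneg (by norm_num) (by linarith)
    gcongr
  have l4 : 0.46 / (k + 0.54) ≤ 0.23 * (2 * k / (k + 1)) * (2 / (2 * k - 1)) := by
    have e : 0.23 * (2 * k / (k + 1)) * (2 / (2 * k - 1)) = 0.92 * k / ((k + 1) * (2 * k - 1)) := by
      have : 2 * k - 1 ≠ 0 := by linarith
      field_simp; ring
    rw [e, div_le_div_iff₀ (by linarith) (mul_pos (by linarith) (by linarith))]
    nlinarith
  linarith


lemma logD : 0.23 ≤ Real.logb 2 (Real.exp ((1 - Real.eulerMascheroniConstant) / 2)) := by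
  have h1 := Real.eulerMascheroniConstant_lt_two_thirds
  have h2 := Real.log_two_lt_d9
  have h3 : 0 < Real.log 2 := Real.log_pos (by norm_num)
  rw [Real.logb, Real.log_exp, le_div_iff₀ h3]
  nlinarith

lemma BHP_all (d : ℝ) (hd : 0.23 ≤ d) (m : ℕ) : BHP (m + 2) (2 / √π * ((m : ℝ) + 1) ^ d) := by
  have hp : 0 < √π := Real.sqrt_pos.2 Real.pi_pos
  induction m with
  | zero =>
    have := BHP_step 0 1 (2 / √π) zero_le_one (by positivity) BHP_one (by
      have := Khin_one
      norm_num at this ⊢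
      exact this)
    simpa using this
  | succ m ih =>
    have hk := Khin_k ((m : ℝ) + 2) (by have : (0:ℝ) ≤ m := by positivity
                                        linarith) d hd
    have hk' : Khin ((2 * (((m + 1 : ℕ) : ℝ) + 1)) / (((m + 1 : ℕ) : ℝ) + 2)) ((((m : ℝ) + 2) / ((m : ℝ) + 2 - 1)) ^ d) := by
      have e : (2 * (((m + 1 : ℕ) : ℝ) + 1)) / (((m + 1 : ℕ) : ℝ) + 2) = 2 * ((m : ℝ) + 2) / ((m : ℝ) + 2 + 1) := by
        push_cast; congr 1 <;> ring
      rw [e]; exact hk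
    have hpos : (0:ℝ) ≤ (m : ℝ) + 2 - 1 := by
      have : (0:ℝ) ≤ m := by positivity
      linarith
    have hstep := BHP_step (m + 1) _ _ (by positivity) (by positivity) ih hk'
    convert hstep using 1
    have h1 : (0:ℝ) < (m : ℝ) + 1 := by positivity
    have h2 : ((m : ℝ) + 2 - 1) = m + 1 := by ring
    rw [h2, Real.div_rpow (by positivity) h1.le]
    have h3 : ((m : ℝ) + 1) ^ d ≠ 0 := (Real.rpow_pos_of_pos h1 d).ne'
    push_cast
    rw [show (m : ℝ) + 1 + 1 = m + 2 by ring]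
    field_simp

lemma multi_expand (n N : ℕ) (U : ContinuousMultilinearMap ℂ (fun _ : Fin n => (Fin N → ℂ)) ℂ)
    (z : Fin n → Fin N → ℂ) :
    ∑ i : Fin n → Fin N, U (fun k => Pi.single (i k) (1 : ℂ)) * ∏ k, z k (i k) = U z := by
  have h : z = fun k => ∑ j : Fin N, z k j • (Pi.single j (1 : ℂ) : Fin N → ℂ) := by
    ext k j
    simp [Finset.sum_apply, Pi.single_apply]
  conv_rhs => rw [h, ContinuousMultilinearMap.map_sum]
  apply Finset.sum_congr rfl
  intro i _
  have := U.map_smul_univ (fun k => z k (i k)) (fun k => (Pi.single (i k) (1 : ℂ) : Fin N → ℂ))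
  rw [this, smul_eq_mul, mul_comm]

theorem stmt3 (n : ℕ) (hn : 2 ≤ n) (N : ℕ) (hN : 0 < N)
    (U : ContinuousMultilinearMap ℂ (fun _ : Fin n => (Fin N → ℂ)) ℂ)
    (D : ℝ) (hD : D = Real.exp ((1 - Real.eulerMascheroniConstant) / 2)) :
    BHcomplex n N U ≤ 2 / Real.sqrt π * ((n : ℝ) - 1) ^ Real.logb 2 D * ‖U‖ := by
  obtain ⟨m, rfl⟩ : ∃ m, n = m + 2 := ⟨n - 2, by omega⟩
  have hd : 0.23 ≤ Real.logb 2 D := by rw [hD]; exact logD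
  have key := BHP_all (Real.logb 2 D) hd m N (fun i => U (fun k => Pi.single (i k) (1 : ℂ))) ‖U‖ (by
    intro z hz
    rw [multi_expand]
    refine (U.le_opNorm z).trans ?_
    have h1 : ∏ k, ‖z k‖ ≤ 1 := Finset.prod_le_one (fun k _ => norm_nonneg _)
      (fun k _ => (pi_norm_le_iff_of_nonneg zero_le_one).2 (hz k))
    have := mul_le_mul_of_nonneg_left h1 (norm_nonneg U)
    linarith)
  have e : (((m + 2 : ℕ) : ℝ) - 1) = (m : ℝ) + 1 := by push_cast; ring
  rw [e]
  unfold BHcomplex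
  have hC : 0 ≤ 2 / √π * ((m : ℝ) + 1) ^ Real.logb 2 D * ‖U‖ := by positivity
  have h2 : (0:ℝ) < ((m + 2 : ℕ) : ℝ) := by positivity
  calc _ ≤ ((2 / √π * ((m : ℝ) + 1) ^ Real.logb 2 D * ‖U‖) ^ ((2 * ((m + 2 : ℕ) : ℝ)) / (((m + 2 : ℕ) : ℝ) + 1))) ^ ((((m + 2 : ℕ) : ℝ) + 1) / (2 * ((m + 2 : ℕ) : ℝ))) :=
        Real.rpow_le_rpow (Finset.sum_nonneg fun i _ => by positivity) key (by positivity)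
    _ = _ := by
        rw [← Real.rpow_mul hC]
        have : (2 * ((m + 2 : ℕ) : ℝ)) / (((m + 2 : ℕ) : ℝ) + 1) * ((((m + 2 : ℕ) : ℝ) + 1) / (2 * ((m + 2 : ℕ) : ℝ))) = 1 := by
          field_simp
        rw [this, Real.rpow_one]
end
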